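/- arXiv:math-ph/0703046 — 4 statements merged into one kernel-verified Lean document; each statement's English description precedes it below -/
import Mathlib

section
/- Let μ be a continuous non-negative function on [0,1], not identically zero, three times continuously differentiable, with μ(1) ≠ 0, and suppose either μ(0) ≠ 0 or μ(α) ∼ a α^ν as α → 0⁺ for some a > 0, ν > 0. Let κ : (0,∞) → ℝ be continuous and locally integrable with absolutely convergent Laplace transform ∫₀^∞ e^{−pt} κ(t) dt = 1/(p K(p)) for every real p > 0. Then κ is infinitely differentiable on (0,∞) and completely monotone. -/
open MeasureTheory Filter Set

/-- `K(p) = ∫₀¹ p^{α-1} μ(α) dα` for real `p > 0`. -/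
noncomputable def Kreal (μ : ℝ → ℝ) (p : ℝ) : ℝ :=
  ∫ α in (0:ℝ)..1, p ^ (α - 1) * μ α

/-- A function `f` is completely monotone on `(0,∞)` if it is infinitely
differentiable there and `(-1)^n f⁽ⁿ⁾(t) ≥ 0` for all `t > 0` and `n ≥ 0`. -/
def CompletelyMonotoneOn (f : ℝ → ℝ) : Prop :=
  ContDiffOn ℝ (⊤ : ℕ∞) f (Set.Ioi 0) ∧
  ∀ n : ℕ, ∀ t : ℝ, 0 < t →
    0 ≤ (-1 : ℝ) ^ n * iteratedDerivWithin n f (Set.Ioi 0) t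


lemma laplace_poly_zero (f : ℝ → ℝ)
    (h : ∀ p : ℝ, 0 < p → IntegrableOn (fun t : ℝ => Real.exp (-p * t) * f t) (Set.Ioi 0) ∧
      ∫ t in Set.Ioi (0:ℝ), Real.exp (-p * t) * f t = 0) (q : Polynomial ℝ) :
    IntegrableOn (fun t : ℝ => q.eval (Real.exp (-t)) * (Real.exp (-t) * f t)) (Set.Ioi 0) ∧
      ∫ t in Set.Ioi (0:ℝ), q.eval (Real.exp (-t)) * (Real.exp (-t) * f t) = 0 := by
  induction q using Polynomial.induction_on' with
  | add p q hp hq =>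
    simp only [Polynomial.eval_add, add_mul]
    refine ⟨hp.1.add hq.1, ?_⟩
    rw [integral_add hp.1 hq.1, hp.2, hq.2, add_zero]
  | monomial n a =>
    have e : (fun t : ℝ => (Polynomial.monomial n a).eval (Real.exp (-t)) * (Real.exp (-t) * f t))
        = fun t => a * (Real.exp (-((n:ℝ)+1) * t) * f t) := by
      funext t
      rw [Polynomial.eval_monomial, ← Real.exp_nat_mul]
      have : Real.exp (-((n:ℝ)+1) * t) = Real.exp (n * -t) * Real.exp (-t) := by
        rw [← Real.exp_add]; congr 1; ring
      rw [this]; ring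
    have := h (n+1) (by positivity)
    rw [e]
    refine ⟨this.1.const_mul a, ?_⟩
    rw [integral_const_mul, this.2, mul_zero]

lemma continuousOn_comp_neg_log (g : ℝ → ℝ) (hg : Continuous g) (hs : HasCompactSupport g)
    (ht : tsupport g ⊆ Ioi 0) : ContinuousOn (fun s => g (-Real.log s)) (Icc 0 1) := by
  intro s hs0
  rcases eq_or_lt_of_le hs0.1 with h | h
  · subst h
    have hg0 : g 0 = 0 := by
      by_contra hne
      exact lt_irrefl (0:ℝ) (ht (subset_tsupport g hne))
    obtain ⟨R, hR⟩ := hs.isCompact.isBounded.bddAbove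
    have : (fun s => g (-Real.log s)) =ᶠ[nhds 0] fun _ => 0 := by
      have hlt : ∀ᶠ s : ℝ in nhds 0, |s| < Real.exp (-R) := by
        have : Tendsto (fun s : ℝ => |s|) (nhds 0) (nhds |0|) := continuous_abs.continuousAt
        rw [abs_zero] at this
        exact this.eventually_lt_const (Real.exp_pos _)
      filter_upwards [hlt] with s hs1
      by_cases h0 : s = 0
      · simp [h0, hg0]
      · by_contra hne
        have := hR (subset_tsupport g hne)
        have h2 : Real.log |s| < -R := (Real.log_lt_iff_lt_exp (abs_pos.2 h0)).2 hs1
        rw [Real.log_abs] at h2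
        linarith
    exact (continuousAt_const.congr this.symm).continuousWithinAt
  · exact (hg.continuousAt.comp (Real.continuousAt_log h.ne').neg).continuousWithinAt

lemma laplace_unique (f : ℝ → ℝ) (hf : ContinuousOn f (Ioi 0))
    (h : ∀ p : ℝ, 0 < p → IntegrableOn (fun t : ℝ => Real.exp (-p * t) * f t) (Set.Ioi 0) ∧
      ∫ t in Set.Ioi (0:ℝ), Real.exp (-p * t) * f t = 0) : ∀ t ∈ Ioi (0:ℝ), f t = 0 := by
  have hint : IntegrableOn (fun t : ℝ => Real.exp (-t) * f t) (Set.Ioi 0) := by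
    simpa using (h 1 one_pos).1
  have hae := isOpen_Ioi.ae_eq_zero_of_integral_contDiff_smul_eq_zero (μ := volume)
    (U := Ioi (0:ℝ)) (f := fun t : ℝ => Real.exp (-t) * f t) hint.locallyIntegrableOn (by
    intro g hg hs ht
    have hgc := hg.continuous
    rw [← setIntegral_eq_integral_of_forall_compl_eq_zero (s := Ioi (0:ℝ))]
    swap
    · intro x hx
      have : g x = 0 := by
        by_contra hne
        exact hx (ht (subset_tsupport g hne))
      simp [this]
    simp only [smul_eq_mul]
    set I := ∫ t in Set.Ioi (0:ℝ), g t * (Real.exp (-t) * f t) with hI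
    set C := ∫ t in Set.Ioi (0:ℝ), ‖Real.exp (-t) * f t‖ with hC
    have hC0 : 0 ≤ C := integral_nonneg fun _ => norm_nonneg _
    have key : ∀ ε > 0, |I| ≤ ε * C := by
      intro ε hε
      obtain ⟨q, hq⟩ := exists_polynomial_near_of_continuousOn 0 1 _
        (continuousOn_comp_neg_log g hgc hs ht) ε hε
      have hq' : ∀ t ∈ Ioi (0:ℝ), |q.eval (Real.exp (-t)) - g t| < ε := by
        intro t ht
        have := hq (Real.exp (-t)) ⟨(Real.exp_pos _).le, Real.exp_le_one_iff.2 (by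
          have : (0:ℝ) < t := ht
          linarith)⟩
        simpa using this
      have hp := laplace_poly_zero f h q
      have hgi : IntegrableOn (fun t => g t * (Real.exp (-t) * f t)) (Ioi 0) := by
        obtain ⟨B, hB⟩ := hs.exists_bound_of_continuous hgc
        exact hint.bdd_mul (c := B) hgc.aestronglyMeasurable (Eventually.of_forall hB)
      have e : I = - ∫ t in Ioi (0:ℝ), (q.eval (Real.exp (-t)) - g t) * (Real.exp (-t) * f t) := by
        simp only [sub_mul]
        rw [integral_sub hp.1 hgi, hp.2]; simp [hI]
      rw [e, abs_neg, ← Real.norm_eq_abs, hC, ← integral_const_mul]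
      refine norm_integral_le_of_norm_le (hint.norm.const_mul ε) ?_
      filter_upwards [ae_restrict_mem measurableSet_Ioi] with t ht
      rw [norm_mul]
      exact mul_le_mul_of_nonneg_right (hq' t ht).le (norm_nonneg _)
    have : |I| ≤ 0 := by
      refine le_of_forall_pos_le_add fun ε hε => ?_
      have := key (ε / (C + 1)) (by positivity)
      refine this.trans ?_
      rw [zero_add, div_mul_eq_mul_div, div_le_iff₀ (by positivity)]
      nlinarith
    exact abs_eq_zero.1 (le_antisymm this (abs_nonneg _)))
  have h2 : f =ᵐ[volume.restrict (Ioi (0:ℝ))] fun _ => 0 := by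
    rw [EventuallyEq, ae_restrict_iff' measurableSet_Ioi]
    filter_upwards [hae] with t ht h0
    have := ht h0
    simpa [(Real.exp_pos _).ne'] using this
  exact fun t ht => Measure.eqOn_open_of_ae_eq h2 isOpen_Ioi hf continuousOn_const ht

section Part2
open ProbabilityTheory

variable (w : ℝ → ℝ)

lemma integrable_exp_w (hw0 : ∀ x, 0 ≤ w x) (hwm : Measurable w)
    (hint : ∀ p > (0:ℝ), Integrable (fun x => w x / (p + Real.exp x))) {t : ℝ} (ht : 0 < t) :
    Integrable (fun x => w x * Real.exp (-(t * Real.exp x))) := by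
  refine ((hint (1/t) (by positivity)).const_mul (1/t)).mono (by fun_prop)
    (Eventually.of_forall fun x => ?_)
  have hex := Real.exp_pos x
  rw [Real.norm_of_nonneg (mul_nonneg (hw0 x) (Real.exp_pos _).le),
    Real.norm_of_nonneg (by have := hw0 x; positivity)]
  have h1 : Real.exp (-(t * Real.exp x)) ≤ 1 / (1 + t * Real.exp x) := by
    rw [Real.exp_neg, ← one_div]
    apply one_div_le_one_div_of_le (by positivity)
    linarith [Real.add_one_le_exp (t * Real.exp x)]
  calc _ ≤ w x * (1 / (1 + t * Real.exp x)) := mul_le_mul_of_nonneg_left h1 (hw0 x)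
    _ = _ := by field_simp

lemma cm_of_density (hw0 : ∀ x, 0 ≤ w x) (hwm : Measurable w)
    (hint : ∀ p > (0:ℝ), Integrable (fun x => w x / (p + Real.exp x))) :
    CompletelyMonotoneOn (fun t => ∫ x, w x * Real.exp (-(t * Real.exp x))) := by
  set ν : Measure ℝ := volume.withDensity (fun x => ENNReal.ofReal (w x)) with hν
  set X : ℝ → ℝ := fun x => - Real.exp x with hX
  have hI : Ioi (0:ℝ) ⊆ interior (integrableExpSet X ν) := by
    apply interior_maximal _ isOpen_Ioi
    intro t ht
    simp only [integrableExpSet, mem_ofPred_eq, hν]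
    rw [integrable_withDensity_iff_integrable_smul' (by fun_prop) (by simp)]
    refine (integrable_exp_w w hw0 hwm hint ht).congr (Eventually.of_forall fun x => ?_)
    simp [hX, ENNReal.toReal_ofReal (hw0 x)]
  have hmgf : (fun t => ∫ x, w x * Real.exp (-(t * Real.exp x))) = mgf X ν := by
    funext t
    rw [mgf, hν, integral_withDensity_eq_integral_toReal_smul (by fun_prop) (by simp)]
    congr 1; funext x
    simp [hX, ENNReal.toReal_ofReal (hw0 x)]
  rw [hmgf]
  refine ⟨(analyticOnNhd_mgf.mono hI).contDiffOn isOpen_Ioi.uniqueDiffOn, fun n t ht => ?_⟩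
  rw [iteratedDerivWithin_of_isOpen isOpen_Ioi ht, iteratedDeriv_mgf (hI ht), ← integral_const_mul]
  refine integral_nonneg fun x => ?_
  simp only [hX, Pi.zero_apply]
  rw [← mul_assoc, ← mul_pow]
  simp only [neg_mul_neg, one_mul]
  positivity

lemma laplace_of_density (hw0 : ∀ x, 0 ≤ w x) (hwm : Measurable w)
    (hint : ∀ p > (0:ℝ), Integrable (fun x => w x / (p + Real.exp x))) {p : ℝ} (hp : 0 < p) :
    IntegrableOn (fun t : ℝ => Real.exp (-p * t) * ∫ x, w x * Real.exp (-(t * Real.exp x)))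
      (Ioi 0) ∧
    ∫ t in Ioi (0:ℝ), Real.exp (-p * t) * ∫ x, w x * Real.exp (-(t * Real.exp x)) =
      ∫ x, w x / (p + Real.exp x) := by
  have hneg : ∀ x, -(p + Real.exp x) < 0 := fun x => by have := Real.exp_pos x; linarith
  have e : ∀ t x : ℝ, Real.exp (-p * t) * (w x * Real.exp (-(t * Real.exp x))) =
      w x * Real.exp (-(p + Real.exp x) * t) := by
    intro t x
    rw [mul_left_comm, ← Real.exp_add]; congr 2; ring
  have e1 : ∀ x, ∫ t in Ioi (0:ℝ), w x * Real.exp (-(p + Real.exp x) * t) =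
      w x / (p + Real.exp x) := by
    intro x
    rw [integral_const_mul, integral_exp_mul_Ioi (hneg x)]
    rw [mul_zero, Real.exp_zero, neg_div_neg_eq, mul_one_div]
  have hprod : Integrable (fun z : ℝ × ℝ => w z.2 * Real.exp (-(p + Real.exp z.2) * z.1))
      ((volume.restrict (Ioi (0:ℝ))).prod volume) := by
    rw [integrable_prod_iff' (by
      apply Measurable.aestronglyMeasurable; fun_prop)]
    refine ⟨Eventually.of_forall fun x => (integrableOn_exp_mul_Ioi (hneg x) 0).const_mul (w x), ?_⟩
    refine (hint p hp).congr (Eventually.of_forall fun x => ?_)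
    dsimp only
    rw [← e1 x]
    congr 1; funext t
    rw [Real.norm_of_nonneg (mul_nonneg (hw0 x) (Real.exp_pos _).le)]
  have e2 : (fun t : ℝ => Real.exp (-p * t) * ∫ x, w x * Real.exp (-(t * Real.exp x))) =
      fun t => ∫ x, w x * Real.exp (-(p + Real.exp x) * t) := by
    funext t
    rw [← integral_const_mul]; simp only [e]
  rw [e2]
  refine ⟨hprod.integral_prod_left, ?_⟩
  rw [integral_integral_swap hprod]
  simp only [e1]

end Part2

section Part3
open ProbabilityTheory Complex

/-- The entire function `z ↦ ∫ e^{αz} dm(α)`. -/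
noncomputable def Gf (m : Measure ℝ) (z : ℂ) : ℂ := ∫ α : ℝ, cexp (z * α) ∂m

/-- `∫ e^{αx} sin(πα) dm(α)`. -/
noncomputable def Sf (m : Measure ℝ) (x : ℝ) : ℝ :=
  ∫ α : ℝ, Real.exp (x * α) * Real.sin (Real.pi * α) ∂m

lemma integrable_rexp (m : Measure ℝ) [IsFiniteMeasure m]
    (hm : ∀ᵐ α ∂m, α ∈ Icc (0:ℝ) 1) (x : ℝ) : Integrable (fun α : ℝ => Real.exp (x * α)) m := by
  refine Integrable.of_bound (by fun_prop) (Real.exp |x|) ?_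
  filter_upwards [hm] with α hα
  rw [Real.norm_of_nonneg (Real.exp_pos _).le]
  apply Real.exp_le_exp.2
  calc x * α ≤ |x| * α := mul_le_mul_of_nonneg_right (le_abs_self x) hα.1
    _ ≤ |x| * 1 := mul_le_mul_of_nonneg_left hα.2 (abs_nonneg x)
    _ = |x| := mul_one _

lemma integrable_cexp (m : Measure ℝ) [IsFiniteMeasure m]
    (hm : ∀ᵐ α ∂m, α ∈ Icc (0:ℝ) 1) (z : ℂ) : Integrable (fun α : ℝ => cexp (z * α)) m := by
  refine (integrable_rexp m hm z.re).mono' (by fun_prop) (Eventually.of_forall fun α => ?_)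
  rw [Complex.norm_exp]; simp

lemma Gf_differentiable (m : Measure ℝ) [IsFiniteMeasure m]
    (hm : ∀ᵐ α ∂m, α ∈ Icc (0:ℝ) 1) : Differentiable ℂ (Gf m) := by
  have hu : integrableExpSet (id : ℝ → ℝ) m = univ := by
    ext t
    simpa [integrableExpSet] using integrable_rexp m hm t
  have : Gf m = complexMGF id m := by
    funext z; simp [Gf, complexMGF]
  rw [this]
  intro z
  exact (hasDerivAt_complexMGF (by simp [hu])).differentiableAt

lemma Sf_integrable (m : Measure ℝ) [IsFiniteMeasure m]
    (hm : ∀ᵐ α ∂m, α ∈ Icc (0:ℝ) 1) (x : ℝ) :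
    Integrable (fun α : ℝ => Real.exp (x * α) * Real.sin (Real.pi * α)) m := by
  refine (integrable_rexp m hm x).mono' (by fun_prop) (Eventually.of_forall fun α => ?_)
  rw [norm_mul, Real.norm_of_nonneg (Real.exp_pos _).le]
  exact mul_le_of_le_one_right (Real.exp_pos _).le (Real.abs_sin_le_one _)

lemma Gf_conj (m : Measure ℝ) (z : ℂ) : Gf m (starRingEnd ℂ z) = starRingEnd ℂ (Gf m z) := by
  rw [Gf, Gf, ← integral_conj]
  congr 1; funext α
  rw [← Complex.exp_conj]; simp

lemma Gf_im (m : Measure ℝ) [IsFiniteMeasure m]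
    (hm : ∀ᵐ α ∂m, α ∈ Icc (0:ℝ) 1) (x : ℝ) : (Gf m (x + Real.pi * I)).im = Sf m x := by
  rw [Gf, Sf]
  have := integral_im (integrable_cexp m hm (x + Real.pi * I))
  simp only [RCLike.im_to_complex] at this
  rw [← this]
  congr 1; funext α
  rw [Complex.exp_im]; simp

lemma Gf_norm_ge (m : Measure ℝ) [IsFiniteMeasure m]
    (hm : ∀ᵐ α ∂m, α ∈ Icc (0:ℝ) 1) (x y : ℝ) (hy : |y| ≤ Real.pi) : Sf m x ≤ ‖Gf m (x + y * I)‖ := by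
  have hcos : ∀ α ∈ Icc (0:ℝ) 1, Real.sin (Real.pi * α) ≤ Real.cos (y * α - y / 2) := by
    intro α hα
    have h1 : Real.sin (Real.pi * α) = Real.cos (Real.pi * |α - 1/2|) := by
      rcases abs_cases (α - 1/2) with ⟨h, _⟩ | ⟨h, _⟩
      · rw [h, ← Real.cos_sub_pi_div_two]; congr 1; ring
      · rw [h, ← Real.cos_sub_pi_div_two, ← Real.cos_neg]; congr 1; ring
    have h2 : Real.cos (y * α - y / 2) = Real.cos (|y| * |α - 1/2|) := by
      rw [← abs_mul, Real.cos_abs]; congr 1; ring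
    rw [h1, h2]
    have h3 : |α - 1/2| ≤ 1/2 := by
      rw [abs_le]; constructor <;> linarith [hα.1, hα.2]
    apply Real.cos_le_cos_of_nonneg_of_le_pi (by positivity)
    · nlinarith [Real.pi_pos]
    · exact mul_le_mul_of_nonneg_right hy (abs_nonneg _)
  have e : Gf m (x + y * I) * cexp (-(y/2) * I) =
      ∫ α : ℝ, cexp ((x + y * I) * α) * cexp (-(y/2) * I) ∂m := by
    rw [Gf, integral_mul_const]
  have hn : ‖cexp (-(y/2) * I)‖ = 1 := by
    rw [Complex.norm_exp]; simp
  calc Sf m x ≤ (Gf m (x + y * I) * cexp (-(y/2) * I)).re := by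
        rw [e]
        have := integral_re ((integrable_cexp m hm (x + y * I)).mul_const (cexp (-(y/2) * I)))
        simp only [RCLike.re_to_complex] at this
        rw [← this, Sf]
        have e3 : ∀ α : ℝ, (cexp ((x + y * I) * α) * cexp (-(y/2) * I)).re =
            Real.exp (x * α) * Real.cos (y * α - y/2) := by
          intro α
          rw [← Complex.exp_add, Complex.exp_re]
          simp [sub_eq_add_neg]
        refine integral_mono_ae (Sf_integrable m hm x) ?_ ?_
        · exact ((integrable_cexp m hm (x + y * I)).mul_const (cexp (-(y/2) * I))).re
        · filter_upwards [hm] with α hα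
          rw [e3]
          exact mul_le_mul_of_nonneg_left (hcos α hα) (Real.exp_pos _).le
    _ ≤ ‖Gf m (x + y * I) * cexp (-(y/2) * I)‖ := Complex.re_le_norm _
    _ = _ := by rw [norm_mul, hn, mul_one]

lemma Sf_lower (m : Measure ℝ) [IsFiniteMeasure m]
    (hm : ∀ᵐ α ∂m, α ∈ Icc (0:ℝ) 1) (a b : ℝ) (ha : 0 < a) (hab : a ≤ b) (hb : b < 1) (hpos : 0 < m (Icc a b)) :
    ∃ c > 0, (∀ x, 0 ≤ x → c * Real.exp (a * x) ≤ Sf m x) ∧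
      (∀ x, x ≤ 0 → c * Real.exp (b * x) ≤ Sf m x) := by
  have hsin : ∀ α ∈ Icc (0:ℝ) 1, 0 ≤ Real.sin (Real.pi * α) := fun α hα =>
    Real.sin_nonneg_of_nonneg_of_le_pi (mul_nonneg Real.pi_pos.le hα.1)
      (mul_le_of_le_one_right Real.pi_pos.le hα.2)
  obtain ⟨s, hs0, hs⟩ : ∃ s > 0, ∀ α ∈ Icc a b, s ≤ Real.sin (Real.pi * α) := by
    obtain ⟨α₀, hα₀, hmin⟩ := isCompact_Icc.exists_isMinOn (nonempty_Icc.2 hab)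
      (f := fun α => Real.sin (Real.pi * α)) (by fun_prop)
    refine ⟨Real.sin (Real.pi * α₀), Real.sin_pos_of_pos_of_lt_pi ?_ ?_, fun α hα => hmin hα⟩
    · exact mul_pos Real.pi_pos (by linarith [hα₀.1])
    · have := hα₀.2; nlinarith [Real.pi_pos]
  have hr : 0 < m.real (Icc a b) := ENNReal.toReal_pos hpos.ne' (measure_ne_top _ _)
  have key : ∀ x E : ℝ, 0 ≤ E → (∀ α ∈ Icc a b, E ≤ Real.exp (x * α)) →
      (s * m.real (Icc a b)) * E ≤ Sf m x := by
    intro x E hE h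
    calc (s * m.real (Icc a b)) * E = ∫ α in Icc a b, E * s ∂m := by
          rw [setIntegral_const, smul_eq_mul]; ring
      _ ≤ ∫ α in Icc a b, Real.exp (x * α) * Real.sin (Real.pi * α) ∂m := by
          refine setIntegral_mono_on (integrable_const _) (Sf_integrable m hm x).integrableOn
            measurableSet_Icc fun α hα => ?_
          exact mul_le_mul (h α hα) (hs α hα) hs0.le (Real.exp_pos _).le
      _ ≤ Sf m x := by
          refine setIntegral_le_integral (Sf_integrable m hm x) ?_
          filter_upwards [hm] with α hα
          exact mul_nonneg (Real.exp_pos _).le (hsin α hα)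
  refine ⟨s * m.real (Icc a b), by positivity, fun x hx => key x _ (Real.exp_pos _).le ?_,
    fun x hx => key x _ (Real.exp_pos _).le ?_⟩
  · intro α hα; apply Real.exp_le_exp.2; nlinarith [hα.1]
  · intro α hα; apply Real.exp_le_exp.2; nlinarith [hα.2]

end Part3

section Part4
open Complex

variable (G : ℂ → ℂ) (L : ℝ)

/-- Integrand of the contour integral. -/
noncomputable def Qf (z : ℂ) : ℂ := (1 / G z - 1 / G L) * (cexp z / (cexp z - cexp L))

lemma exp_ne_of_strip {z : ℂ} (hz : |z.im| ≤ Real.pi) (hne : z ≠ L) : cexp z ≠ cexp L := by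
  intro h
  obtain ⟨n, hn⟩ := Complex.exp_eq_exp_iff_exists_int.1 h
  have him : z.im = n * (2 * Real.pi) := by
    have := congrArg Complex.im hn
    simpa using this
  have hn0 : n = 0 := by
    by_contra h0
    have h1 : (1:ℝ) ≤ |(n:ℝ)| := by
      have := Int.one_le_abs h0
      exact_mod_cast this
    rw [him, abs_mul, abs_of_pos (by positivity : 0 < 2 * Real.pi)] at hz
    nlinarith [Real.pi_pos]
  apply hne
  rw [hn, hn0]; simp

lemma Qf_differentiableAt (hG : Differentiable ℂ G) (hG0 : ∀ z : ℂ, |z.im| ≤ Real.pi → G z ≠ 0)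
    {z : ℂ} (hz : |z.im| ≤ Real.pi) (hne : z ≠ L) : DifferentiableAt ℂ (Qf G L) z := by
  have h1 := hG0 z hz
  have h2 := sub_ne_zero.2 (exp_ne_of_strip L hz hne)
  have := hG z
  unfold Qf
  fun_prop (disch := assumption)

lemma Qf_rect (hG : Differentiable ℂ G) (hG0 : ∀ z : ℂ, |z.im| ≤ Real.pi → G z ≠ 0)
    {R : ℝ} (hR : |L| < R) :
    (∫ x : ℝ in -R..R, Qf G L (x + (-Real.pi : ℝ) * I)) -
      (∫ x : ℝ in -R..R, Qf G L (x + (Real.pi : ℝ) * I)) +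
      I • (∫ y : ℝ in -Real.pi..Real.pi, Qf G L ((R:ℝ) + y * I)) -
      I • (∫ y : ℝ in -Real.pi..Real.pi, Qf G L ((-R : ℝ) + y * I)) = 0 := by
  have hpi := Real.pi_pos
  have hR0 : 0 < R := (abs_nonneg L).trans_lt hR
  set F : ℂ → ℂ := fun z => dslope (fun z => 1 / G z) L z / dslope cexp L z * cexp z with hF
  have hFQ : ∀ z : ℂ, z ≠ L → F z = Qf G L z := by
    intro z hz
    simp only [hF, Qf]
    rw [dslope_of_ne _ hz, dslope_of_ne _ hz, slope_def_field, slope_def_field,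
      div_div_div_cancel_right₀ (sub_ne_zero.2 hz)]
    ring
  have hU : IsOpen {z : ℂ | G z ≠ 0} := isOpen_ne_fun hG.continuous continuous_const
  have hd1 : DifferentiableOn ℂ (dslope (fun z => 1 / G z) (L:ℂ)) {z : ℂ | G z ≠ 0} := by
    rw [Complex.differentiableOn_dslope (hU.mem_nhds (hG0 _ (by simp [hpi.le])))]
    intro z hz
    exact ((differentiableAt_const _).div (hG z) hz).differentiableWithinAt
  have hd2 : DifferentiableOn ℂ (dslope cexp (L:ℂ)) univ := by
    rw [Complex.differentiableOn_dslope univ_mem]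
    exact Complex.differentiable_exp.differentiableOn
  have hne : ∀ z : ℂ, |z.im| ≤ Real.pi → dslope cexp (L:ℂ) z ≠ 0 := by
    intro z hz
    by_cases h : z = L
    · rw [h, dslope_same]; simp
    · rw [dslope_of_ne _ h, slope_def_field]
      exact div_ne_zero (sub_ne_zero.2 (exp_ne_of_strip L hz h)) (sub_ne_zero.2 h)
  have hFd : ∀ z : ℂ, |z.im| ≤ Real.pi → DifferentiableAt ℂ F z := by
    intro z hz
    exact ((hd1.differentiableAt (hU.mem_nhds (hG0 z hz))).div
      (hd2.differentiableAt univ_mem) (hne z hz)).mul Complex.differentiable_exp.differentiableAt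
  have main := Complex.integral_boundary_rect_eq_zero_of_differentiableOn F
    (⟨-R, -Real.pi⟩ : ℂ) (⟨R, Real.pi⟩ : ℂ) (by
      intro z hz
      refine (hFd z ?_).differentiableWithinAt
      have := hz.2
      simp only [mem_preimage] at this
      rw [uIcc_of_le (by linarith)] at this
      exact abs_le.2 this)
  simp only at main
  have n1 : ∀ x : ℝ, (x + (-Real.pi : ℝ) * I : ℂ) ≠ L := by
    intro x h
    have := congrArg Complex.im h
    simp at this
  have n2 : ∀ x : ℝ, (x + (Real.pi : ℝ) * I : ℂ) ≠ L := by
    intro x h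
    have := congrArg Complex.im h
    simp at this
  have n3 : ∀ y : ℝ, ((R : ℝ) + y * I : ℂ) ≠ L := by
    intro x h
    have := congrArg Complex.re h
    simp at this
    linarith [le_abs_self L]
  have n4 : ∀ y : ℝ, ((-R : ℝ) + y * I : ℂ) ≠ L := by
    intro x h
    have := congrArg Complex.re h
    simp at this
    linarith [neg_abs_le L]
  simp only [fun x => hFQ _ (n1 x), fun x => hFQ _ (n2 x), fun x => hFQ _ (n3 x),
    fun x => hFQ _ (n4 x)] at main
  exact main

/-- The Stieltjes integrand. -/
noncomputable def kf (S : ℝ → ℝ) (x : ℝ) : ℝ :=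
  S x / ‖G (x + Real.pi * I)‖ ^ 2 * (Real.exp x / (Real.exp x + Real.exp L))

lemma Qf_diff (S : ℝ → ℝ) (hG0 : ∀ z : ℂ, |z.im| ≤ Real.pi → G z ≠ 0)
    (hconj : ∀ z, G (starRingEnd ℂ z) = starRingEnd ℂ (G z))
    (him : ∀ x : ℝ, (G (x + Real.pi * I)).im = S x) (x : ℝ) :
    Qf G L (x + (-Real.pi : ℝ) * I) - Qf G L (x + (Real.pi : ℝ) * I) = 2 * I * (kf G L S x : ℝ) := by
  have hA : G (x + Real.pi * I) ≠ 0 := hG0 _ (by simp [abs_of_pos Real.pi_pos])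
  have e0 : (x + (-Real.pi : ℝ) * I : ℂ) = starRingEnd ℂ (x + Real.pi * I) := by simp
  have e1 : cexp (x + Real.pi * I) = - (Real.exp x : ℝ) := by
    rw [Complex.exp_add, Complex.exp_pi_mul_I]; simp
  have e2 : cexp (starRingEnd ℂ (x + Real.pi * I)) = - (Real.exp x : ℝ) := by
    rw [Complex.exp_conj, e1, map_neg, Complex.conj_ofReal]
  rw [Qf, Qf, e0, hconj, e1, e2, ← Complex.ofReal_exp L]
  set A := G (x + Real.pi * I) with hAdef
  have hA' : starRingEnd ℂ A ≠ 0 := by simpa using hA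
  have hpos : (Real.exp x : ℂ) + Real.exp L ≠ 0 := by
    exact_mod_cast (by positivity : Real.exp x + Real.exp L ≠ 0)
  have e4 : (-(Real.exp x : ℝ) : ℂ) / (-(Real.exp x : ℝ) - (Real.exp L : ℝ)) =
      (Real.exp x : ℝ) / ((Real.exp x : ℝ) + (Real.exp L : ℝ)) := by
    rw [← neg_div_neg_eq]; congr 1 <;> ring
  have e5 : 1 / starRingEnd ℂ A - 1 / A = 2 * I * ((S x / ‖A‖ ^ 2 : ℝ) : ℂ) := by
    have h1 : A - starRingEnd ℂ A = 2 * I * (S x : ℂ) := by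
      rw [Complex.sub_conj, ← him x]; push_cast; ring
    have h2 : ((‖A‖ ^ 2 : ℝ) : ℂ) = A * starRingEnd ℂ A := by
      rw [Complex.mul_conj, Complex.normSq_eq_norm_sq]
    rw [Complex.ofReal_div, h2, ← mul_div_assoc, ← h1]
    field_simp
  rw [e4, kf, ← sub_mul, sub_sub_sub_cancel_right, e5]
  push_cast
  ring

lemma kf_integrable (S : ℝ → ℝ) (hG : Differentiable ℂ G)
    (hG0 : ∀ z : ℂ, |z.im| ≤ Real.pi → G z ≠ 0)
    (him : ∀ x : ℝ, (G (x + Real.pi * I)).im = S x)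
    (hSG : ∀ x y : ℝ, |y| ≤ Real.pi → S x ≤ ‖G (x + y * I)‖)
    {a b c : ℝ} (ha : 0 < a) (hb : b < 1) (hc : 0 < c)
    (h1 : ∀ x, 0 ≤ x → c * Real.exp (a * x) ≤ S x)
    (h2 : ∀ x, x ≤ 0 → c * Real.exp (b * x) ≤ S x) :
    Continuous (kf G L S) ∧ Integrable (kf G L S) := by
  have hGc := hG.continuous
  have hSc : Continuous S := by
    have : S = fun x : ℝ => (G (x + Real.pi * I)).im := by funext x; rw [him]
    rw [this]; fun_prop
  have hcont : Continuous (kf G L S) := by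
    unfold kf
    refine (hSc.div (by fun_prop) fun x => ?_).mul (Continuous.div (by fun_prop) (by fun_prop)
      fun x => by positivity)
    have := hG0 (x + Real.pi * I) (by simp [abs_of_pos Real.pi_pos])
    positivity
  have hbd : ∀ x E : ℝ, 0 < E → E ≤ S x →
      ‖kf G L S x‖ ≤ E⁻¹ * (Real.exp x / (Real.exp x + Real.exp L)) := by
    intro x E hE hES
    have hA := hSG x Real.pi (by simp [abs_of_pos Real.pi_pos])
    have hS := hE.trans_le hES
    have hA0 := hS.trans_le hA
    unfold kf
    rw [Real.norm_of_nonneg (by positivity)]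
    refine mul_le_mul_of_nonneg_right ?_ (by positivity)
    rw [div_le_iff₀ (by positivity), ← div_eq_inv_mul, le_div_iff₀ hE]
    nlinarith
  refine ⟨hcont, ?_⟩
  rw [← integrableOn_univ, ← Iic_union_Ioi (a := (0:ℝ))]
  refine IntegrableOn.union ?_ ?_
  · refine Integrable.mono' ((integrableOn_exp_mul_Iic (a := 1 - b) (by linarith) 0).const_mul
      (c⁻¹ * (Real.exp L)⁻¹)) hcont.aestronglyMeasurable ?_
    filter_upwards [ae_restrict_mem measurableSet_Iic] with x hx
    refine (hbd x _ (by positivity) (h2 x hx)).trans ?_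
    have : Real.exp ((1 - b) * x) = Real.exp x * (Real.exp (b * x))⁻¹ := by
      rw [← Real.exp_neg, ← Real.exp_add]; congr 1; ring
    rw [this, mul_inv]
    have h3 : Real.exp x / (Real.exp x + Real.exp L) ≤ Real.exp x * (Real.exp L)⁻¹ := by
      rw [div_eq_mul_inv]
      gcongr
      linarith [Real.exp_pos x]
    calc _ ≤ c⁻¹ * (Real.exp (b * x))⁻¹ * (Real.exp x * (Real.exp L)⁻¹) := by gcongr
      _ = _ := by ring
  · refine Integrable.mono' ((integrableOn_exp_mul_Ioi (a := -a) (by linarith) 0).const_mul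
      c⁻¹) hcont.aestronglyMeasurable ?_
    filter_upwards [ae_restrict_mem measurableSet_Ioi] with x hx
    refine (hbd x _ (by positivity) (h1 x (le_of_lt hx))).trans ?_
    have : Real.exp (-a * x) = (Real.exp (a * x))⁻¹ := by
      rw [← Real.exp_neg]; congr 1; ring
    rw [this, mul_inv]
    refine mul_le_of_le_one_right (by positivity) ?_
    rw [div_le_one (by positivity)]
    linarith [Real.exp_pos L]

lemma Qf_right (S : ℝ → ℝ) (hSG : ∀ x y : ℝ, |y| ≤ Real.pi → S x ≤ ‖G (x + y * I)‖)
    {a c : ℝ} (hc : 0 < c) (h1 : ∀ x, 0 ≤ x → c * Real.exp (a * x) ≤ S x)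
    {R : ℝ} (hR0 : 0 ≤ R) (hR : 2 * Real.exp L ≤ Real.exp R) {y : ℝ} (hy : |y| ≤ Real.pi) :
    ‖Qf G L (R + y * I) + 1 / G L‖ ≤
      2 * c⁻¹ * Real.exp (-a * R) + 2 * ‖1 / G L‖ * Real.exp L * Real.exp (-R) := by
  have hA := (h1 R hR0).trans (hSG R y hy)
  set z : ℂ := R + y * I with hz
  have hnz : ‖cexp z‖ = Real.exp R := by rw [Complex.norm_exp]; simp [hz]
  have hnL : ‖cexp L‖ = Real.exp L := by rw [Complex.norm_exp]; simp
  have hlow : Real.exp R / 2 ≤ ‖cexp z - cexp L‖ := by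
    have := norm_sub_norm_le (cexp z) (cexp L)
    rw [hnz, hnL] at this
    linarith
  have hd0 : 0 < ‖cexp z - cexp L‖ := lt_of_lt_of_le (by positivity) hlow
  have hd : cexp z - cexp L ≠ 0 := norm_pos_iff.1 hd0
  have e : Qf G L z + 1 / G L = 1 / G z * (cexp z / (cexp z - cexp L)) -
      1 / G L * (cexp L / (cexp z - cexp L)) := by
    have : cexp z / (cexp z - cexp L) = 1 + cexp L / (cexp z - cexp L) := by
      field_simp; ring
    rw [Qf, this]; ring
  rw [e]
  refine (norm_sub_le _ _).trans (add_le_add ?_ ?_)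
  · rw [norm_mul, norm_div, norm_one, norm_div, hnz]
    calc 1 / ‖G z‖ * (Real.exp R / ‖cexp z - cexp L‖) ≤
        1 / (c * Real.exp (a * R)) * (Real.exp R / (Real.exp R / 2)) := by gcongr
      _ = _ := by
        rw [neg_mul, Real.exp_neg]; field_simp
  · rw [norm_mul, norm_div (cexp L), hnL]
    calc ‖1 / G L‖ * (Real.exp L / ‖cexp z - cexp L‖) ≤
        ‖1 / G L‖ * (Real.exp L / (Real.exp R / 2)) := by gcongr
      _ = _ := by
        rw [Real.exp_neg]; field_simp

lemma Qf_left (S : ℝ → ℝ) (hSG : ∀ x y : ℝ, |y| ≤ Real.pi → S x ≤ ‖G (x + y * I)‖)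
    {b c : ℝ} (hc : 0 < c) (h2 : ∀ x, x ≤ 0 → c * Real.exp (b * x) ≤ S x)
    {R : ℝ} (hR0 : 0 ≤ R) (hR : Real.exp (-R) ≤ Real.exp L / 2) {y : ℝ} (hy : |y| ≤ Real.pi) :
    ‖Qf G L ((-R : ℝ) + y * I)‖ ≤
      2 * (Real.exp L)⁻¹ * (c⁻¹ * Real.exp (-(1 - b) * R) + ‖1 / G L‖ * Real.exp (-R)) := by
  have hA := (h2 (-R) (by linarith)).trans (hSG (-R) y hy)
  set z : ℂ := (-R : ℝ) + y * I with hz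
  have hnz : ‖cexp z‖ = Real.exp (-R) := by rw [Complex.norm_exp]; simp [hz]
  have hnL : ‖cexp L‖ = Real.exp L := by rw [Complex.norm_exp]; simp
  have hlow : Real.exp L / 2 ≤ ‖cexp z - cexp L‖ := by
    have := norm_sub_norm_le (cexp L) (cexp z)
    rw [hnz, hnL, norm_sub_rev] at this
    linarith
  rw [Qf, norm_mul, norm_div, hnz]
  have h3 : ‖1 / G z - 1 / G L‖ ≤ 1 / (c * Real.exp (b * -R)) + ‖1 / G L‖ := by
    refine (norm_sub_le _ _).trans (add_le_add ?_ le_rfl)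
    rw [norm_div, norm_one]
    gcongr
  calc _ ≤ (1 / (c * Real.exp (b * -R)) + ‖1 / G L‖) * (Real.exp (-R) / (Real.exp L / 2)) := by
        gcongr
    _ = _ := by
      have : Real.exp (-(1 - b) * R) = Real.exp (-R) * (Real.exp (b * -R))⁻¹ := by
        rw [← Real.exp_neg, ← Real.exp_add]; congr 1; ring
      rw [this]; field_simp

lemma kf_integral (S : ℝ → ℝ) (hG : Differentiable ℂ G)
    (hG0 : ∀ z : ℂ, |z.im| ≤ Real.pi → G z ≠ 0)
    (hconj : ∀ z, G (starRingEnd ℂ z) = starRingEnd ℂ (G z))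
    (him : ∀ x : ℝ, (G (x + Real.pi * I)).im = S x)
    (hSG : ∀ x y : ℝ, |y| ≤ Real.pi → S x ≤ ‖G (x + y * I)‖)
    {a b c : ℝ} (ha : 0 < a) (hb : b < 1) (hc : 0 < c)
    (h1 : ∀ x, 0 ≤ x → c * Real.exp (a * x) ≤ S x)
    (h2 : ∀ x, x ≤ 0 → c * Real.exp (b * x) ≤ S x) :
    ((∫ x, kf G L S x : ℝ) : ℂ) = Real.pi / G L := by
  have hpi := Real.pi_pos
  obtain ⟨hkc, hki⟩ := kf_integrable G L S hG hG0 him hSG ha hb hc h1 h2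
  have hQc : ∀ z : ℂ, |z.im| ≤ Real.pi → z ≠ L → ContinuousAt (Qf G L) z := fun z hz hne =>
    (Qf_differentiableAt G L hG hG0 hz hne).continuousAt
  have hexp : ∀ s : ℝ, 0 < s → Tendsto (fun R : ℝ => Real.exp (-s * R)) atTop (nhds 0) := by
    intro s hs
    exact Real.tendsto_exp_atBot.comp (tendsto_id.const_mul_atTop_of_neg (by linarith))
  have hexp1 : Tendsto (fun R : ℝ => Real.exp (-R)) atTop (nhds 0) := by
    simpa using hexp 1 one_pos
  have l1 : Tendsto (fun R : ℝ => ((∫ x in -R..R, kf G L S x : ℝ) : ℂ)) atTop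
      (nhds ((∫ x, kf G L S x : ℝ) : ℂ)) :=
    (Complex.continuous_ofReal.tendsto _).comp
      (intervalIntegral_tendsto_integral hki tendsto_neg_atTop_atBot tendsto_id)
  have l2 : Tendsto (fun R : ℝ => ∫ y : ℝ in -Real.pi..Real.pi, Qf G L ((R:ℝ) + y * I)) atTop
      (nhds (-(2 * Real.pi / G L))) := by
    rw [tendsto_iff_norm_sub_tendsto_zero]
    have hB : Tendsto (fun R : ℝ => (2 * c⁻¹ * Real.exp (-a * R) +
        2 * ‖1 / G L‖ * Real.exp L * Real.exp (-R)) * |Real.pi - -Real.pi|) atTop (nhds 0) := by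
      simpa using (((hexp a ha).const_mul (2 * c⁻¹)).add
        (hexp1.const_mul (2 * ‖1 / G L‖ * Real.exp L))).mul_const |Real.pi - -Real.pi|
    refine squeeze_zero' (Eventually.of_forall fun _ => norm_nonneg _) ?_ hB
    filter_upwards [eventually_gt_atTop |L|,
      Real.tendsto_exp_atTop.eventually_ge_atTop (2 * Real.exp L)] with R hRL hR
    have hR0 : 0 ≤ R := (abs_nonneg L).trans hRL.le
    have hii : IntervalIntegrable (fun y : ℝ => Qf G L ((R:ℝ) + y * I)) volume
        (-Real.pi) Real.pi := by
      apply ContinuousOn.intervalIntegrable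
      intro y hy
      rw [uIcc_of_le (by linarith)] at hy
      refine (ContinuousAt.comp (f := fun y : ℝ => ((R:ℝ) + y * I : ℂ)) (hQc _ ?_ ?_)
        (by fun_prop)).continuousWithinAt
      · simpa using abs_le.2 hy
      · intro h
        have := congrArg Complex.re h
        simp at this
        linarith [le_abs_self L]
    have e : (∫ y : ℝ in -Real.pi..Real.pi, Qf G L ((R:ℝ) + y * I)) - -(2 * Real.pi / G L) =
        ∫ y : ℝ in -Real.pi..Real.pi, (Qf G L ((R:ℝ) + y * I) + 1 / G L) := by
      rw [intervalIntegral.integral_add hii (by simp), intervalIntegral.integral_const,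
        Complex.real_smul]
      push_cast; ring
    rw [e]
    refine intervalIntegral.norm_integral_le_of_norm_le_const fun y hy => ?_
    rw [uIoc_of_le (by linarith)] at hy
    exact Qf_right G L S hSG hc h1 hR0 hR (abs_le.2 ⟨hy.1.le, hy.2⟩)
  have l3 : Tendsto (fun R : ℝ => ∫ y : ℝ in -Real.pi..Real.pi, Qf G L ((-R:ℝ) + y * I)) atTop
      (nhds 0) := by
    rw [tendsto_zero_iff_norm_tendsto_zero]
    have hB : Tendsto (fun R : ℝ => (2 * (Real.exp L)⁻¹ * (c⁻¹ * Real.exp (-(1 - b) * R) +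
        ‖1 / G L‖ * Real.exp (-R))) * |Real.pi - -Real.pi|) atTop (nhds 0) := by
      simpa using ((((hexp (1 - b) (by linarith)).const_mul c⁻¹).add
        (hexp1.const_mul ‖1 / G L‖)).const_mul (2 * (Real.exp L)⁻¹)).mul_const
          |Real.pi - -Real.pi|
    refine squeeze_zero' (Eventually.of_forall fun _ => norm_nonneg _) ?_ hB
    filter_upwards [eventually_ge_atTop 0,
      hexp1.eventually_le_const (by positivity : 0 < Real.exp L / 2)] with R hR0 hR
    refine intervalIntegral.norm_integral_le_of_norm_le_const fun y hy => ?_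
    rw [uIoc_of_le (by linarith)] at hy
    exact Qf_left G L S hSG hc h2 hR0 hR (abs_le.2 ⟨hy.1.le, hy.2⟩)
  have lim := ((l1.const_mul (2 * I)).add (l2.const_mul I)).sub (l3.const_mul I)
  have hev : (fun R : ℝ => 2 * I * ((∫ x in -R..R, kf G L S x : ℝ) : ℂ) +
      I * (∫ y : ℝ in -Real.pi..Real.pi, Qf G L ((R:ℝ) + y * I)) -
      I * ∫ y : ℝ in -Real.pi..Real.pi, Qf G L ((-R:ℝ) + y * I)) =ᶠ[atTop] fun _ => 0 := by
    filter_upwards [eventually_gt_atTop |L|] with R hR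
    have hh : ∀ s : ℝ, |s| = Real.pi →
        IntervalIntegrable (fun x : ℝ => Qf G L (x + s * I)) volume (-R) R := by
      intro s hs
      apply Continuous.intervalIntegrable
      rw [continuous_iff_continuousAt]
      intro x
      refine ContinuousAt.comp (f := fun x : ℝ => (x + s * I : ℂ)) (hQc _ ?_ ?_) (by fun_prop)
      · simp [hs]
      · intro h
        have := congrArg Complex.im h
        simp at this
        rw [this] at hs
        simp at hs
        linarith
    have := Qf_rect G L hG hG0 hR
    rw [← intervalIntegral.integral_sub (hh _ (by simp [abs_of_pos hpi]))
      (hh _ (by simp [abs_of_pos hpi]))] at this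
    simp only [Qf_diff G L S hG0 hconj him, intervalIntegral.integral_const_mul, smul_eq_mul,
      intervalIntegral.integral_ofReal] at this
    exact this
  have fin := tendsto_nhds_unique (lim.congr' hev) tendsto_const_nhds
  have h3 : (2 * I) * (((∫ x, kf G L S x : ℝ) : ℂ) - Real.pi / G L) = 0 := by
    rw [← fin]; ring
  have h4 : (2 * I : ℂ) ≠ 0 := by simp
  exact sub_eq_zero.1 ((mul_eq_zero.1 h3).resolve_left h4)

end Part4

theorem distributed_order_integral_kernel_completely_monotone (μ : ℝ → ℝ)
    (hc : ContinuousOn μ (Set.Icc 0 1))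
    (hnn : ∀ α ∈ Set.Icc (0:ℝ) 1, 0 ≤ μ α)
    (hne : ∃ α ∈ Set.Icc (0:ℝ) 1, μ α ≠ 0)
    (hC3 : ContDiffOn ℝ 3 μ (Set.Icc 0 1))
    (h1 : μ 1 ≠ 0)
    (h0 : μ 0 ≠ 0 ∨ ∃ a ν : ℝ, 0 < a ∧ 0 < ν ∧
      Tendsto (fun α : ℝ => μ α / (a * α ^ ν)) (nhdsWithin 0 (Set.Ioi 0)) (nhds 1))
    (κ : ℝ → ℝ) (hκc : ContinuousOn κ (Set.Ioi 0))
    (hκloc : LocallyIntegrableOn κ (Set.Ioi 0))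
    (hlap : ∀ p : ℝ, 0 < p →
      IntegrableOn (fun t : ℝ => Real.exp (-p * t) * κ t) (Set.Ioi 0) ∧
      ∫ t in Set.Ioi (0:ℝ), Real.exp (-p * t) * κ t = 1 / (p * Kreal μ p)) :
    CompletelyMonotoneOn κ := by
  set d : ℝ → ENNReal := fun α => ENNReal.ofReal (μ α) with hd
  set m : Measure ℝ := (volume.restrict (Ioc (0:ℝ) 1)).withDensity d with hmdef
  have hμi : IntegrableOn μ (Ioc 0 1) :=
    (hc.integrableOn_compact isCompact_Icc).mono_set Ioc_subset_Icc_self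
  have hdm : AEMeasurable d (volume.restrict (Ioc (0:ℝ) 1)) :=
    hμi.aestronglyMeasurable.aemeasurable.ennreal_ofReal
  have : IsFiniteMeasure m := isFiniteMeasure_withDensity_ofReal hμi.2
  have hm : ∀ᵐ α ∂m, α ∈ Icc (0:ℝ) 1 := by
    refine (withDensity_absolutelyContinuous _ _).ae_le ?_
    filter_upwards [ae_restrict_mem measurableSet_Ioc] with α hα
    exact Ioc_subset_Icc_self hα
  obtain ⟨a, b, ha, hab, hb, hpos⟩ : ∃ a b : ℝ, 0 < a ∧ a ≤ b ∧ b < 1 ∧ 0 < m (Icc a b) := by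
    have h1pos : 0 < μ 1 := lt_of_le_of_ne (hnn 1 (by simp)) (Ne.symm h1)
    have hev : ∀ᶠ α in nhdsWithin (1:ℝ) (Icc 0 1), 0 < μ α :=
      (hc 1 (by simp)).eventually_const_lt h1pos
    obtain ⟨δ, hδ, hδ'⟩ := Metric.mem_nhdsWithin_iff.1 hev
    set ε := min δ 1 / 2 with hε
    have hε0 : 0 < ε := by positivity
    have hε1 : ε ≤ 1 / 2 := by
      have := min_le_right δ 1; rw [hε]; linarith
    have hε2 : ε < δ := by
      have := min_le_left δ 1; rw [hε]; linarith
    refine ⟨1 - ε, 1 - ε / 2, by linarith, by linarith, by linarith, ?_⟩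
    rw [pos_iff_ne_zero, Ne, hmdef, withDensity_apply_eq_zero' hdm]
    have hsub : Icc (1 - ε) (1 - ε / 2) ⊆ {x | d x ≠ 0} ∩ Icc (1 - ε) (1 - ε / 2) := by
      intro α hα
      refine ⟨?_, hα⟩
      have : 0 < μ α := by
        refine hδ' ⟨?_, ?_⟩
        · rw [Metric.mem_ball, Real.dist_eq, abs_lt]
          constructor <;> linarith [hα.1, hα.2]
        · constructor <;> linarith [hα.1, hα.2]
      simpa [hd] using this
    intro h
    have h2 := measure_mono_null hsub h
    rw [Measure.restrict_apply measurableSet_Icc, inter_eq_self_of_subset_left (by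
      intro α hα
      constructor <;> linarith [hα.1, hα.2]), Real.volume_Icc, ENNReal.ofReal_eq_zero] at h2
    linarith
  obtain ⟨c, hc0, hS1, hS2⟩ := Sf_lower m hm a b ha hab hb hpos
  have hSpos : ∀ x, 0 < Sf m x := by
    intro x
    rcases le_total 0 x with h | h
    · exact lt_of_lt_of_le (by positivity) (hS1 x h)
    · exact lt_of_lt_of_le (by positivity) (hS2 x h)
  have hG := Gf_differentiable m hm
  have hSG := Gf_norm_ge m hm
  have him := Gf_im m hm
  have hG0 : ∀ z : ℂ, |z.im| ≤ Real.pi → Gf m z ≠ 0 := by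
    intro z hz
    have := (hSpos z.re).trans_le (hSG z.re z.im hz)
    rw [Complex.re_add_im] at this
    exact norm_pos_iff.1 this
  have hk := fun L => kf_integrable (Gf m) L (Sf m) hG hG0 him hSG ha hb hc0 hS1 hS2
  have hki := fun L => kf_integral (Gf m) L (Sf m) hG hG0 (Gf_conj m) him hSG ha hb hc0 hS1 hS2
  -- the value of `G` at real points
  have hval : ∀ p : ℝ, 0 < p → Gf m (Real.log p : ℝ) = ((p * Kreal μ p : ℝ) : ℂ) := by
    intro p hp
    have e1 : Gf m (Real.log p : ℝ) = ((∫ α : ℝ, Real.exp (Real.log p * α) ∂m : ℝ) : ℂ) := by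
      rw [Gf, ← integral_complex_ofReal]
      congr 1; funext α; push_cast; rfl
    rw [e1, hmdef, integral_withDensity_eq_integral_toReal_smul₀ hdm (by simp [hd]), Kreal,
      intervalIntegral.integral_of_le zero_le_one, ← integral_const_mul]
    congr 1
    refine setIntegral_congr_fun measurableSet_Ioc fun α hα => ?_
    simp only [hd, smul_eq_mul]
    rw [ENNReal.toReal_ofReal (hnn α (Ioc_subset_Icc_self hα)), ← Real.rpow_def_of_pos hp,
      ← mul_assoc, mul_comm (μ α)]
    congr 1
    rw [Real.rpow_sub_one hp.ne']; field_simp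
  set w : ℝ → ℝ := fun x => 1 / Real.pi *
    (Sf m x / ‖Gf m (x + Real.pi * Complex.I)‖ ^ 2 * Real.exp x) with hw
  have hw0 : ∀ x, 0 ≤ w x := fun x => by
    have := hSpos x; have := Real.pi_pos; simp only [hw]; positivity
  have hwk : ∀ p : ℝ, 0 < p → (fun x => w x / (p + Real.exp x)) =
      fun x => 1 / Real.pi * kf (Gf m) (Real.log p) (Sf m) x := by
    intro p hp
    funext x
    simp only [hw, kf, Real.exp_log hp]
    rw [add_comm p]; ring
  have hwm : Measurable w := by
    have : w = fun x => 1 / Real.pi * kf (Gf m) 0 (Sf m) x * (1 + Real.exp x) := by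
      funext x
      have := congrFun (hwk 1 one_pos) x
      rw [Real.log_one] at this
      rw [← this]
      have : 1 + Real.exp x ≠ 0 := by positivity
      field_simp
    rw [this]
    have := (hk 0).1
    exact Continuous.measurable (by fun_prop)
  have hint : ∀ p > (0:ℝ), Integrable (fun x => w x / (p + Real.exp x)) := by
    intro p hp
    rw [hwk p hp]
    exact (hk _).2.const_mul _
  have hval2 : ∀ p > (0:ℝ), ∫ x, w x / (p + Real.exp x) = 1 / (p * Kreal μ p) := by
    intro p hp
    rw [hwk p hp, integral_const_mul]
    have := hki (Real.log p)
    rw [hval p hp, ← Complex.ofReal_div, Complex.ofReal_inj] at this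
    rw [this]
    have := Real.pi_pos.ne'
    field_simp
  obtain ⟨hcd, hcm⟩ := cm_of_density w hw0 hwm hint
  have hlw := fun p (hp : 0 < p) => laplace_of_density w hw0 hwm hint (p := p) hp
  set K2 : ℝ → ℝ := fun t => ∫ x, w x * Real.exp (-(t * Real.exp x)) with hK2
  have hz := laplace_unique (fun t => κ t - K2 t) (hκc.sub hcd.continuousOn) (by
    intro p hp
    simp only [mul_sub]
    refine ⟨(hlap p hp).1.sub (hlw p hp).1, ?_⟩
    rw [integral_sub (hlap p hp).1 (hlw p hp).1, (hlap p hp).2, (hlw p hp).2, hval2 p hp, sub_self])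
  have heq : EqOn κ K2 (Ioi 0) := fun t ht => sub_eq_zero.1 (hz t ht)
  refine ⟨hcd.congr heq, fun n t ht => ?_⟩
  rw [iteratedDerivWithin_congr heq ht]
  exact hcm n t ht
end

section
/- Let μ be a continuous non-negative function on [0,1], not identically zero, three times continuously differentiable, with μ(1) ≠ 0, and suppose either μ(0) ≠ 0 or μ(α) ∼ a α^ν as α → 0⁺ for some a > 0, ν > 0. Let κ : (0,∞) → ℝ be continuous and locally integrable with absolutely convergent Laplace transform ∫₀^∞ e^{−pt} κ(t) dt = 1/(p K(p)) for every real p > 0, and assume κ is differentiable on (0,∞). Then there exist constants C > 0 and t₀ ∈ (0,1) such that for all 0 < t < t₀: κ(t) ≤ C log(1/t) and |κ′(t)| ≤ C t^{−1} log(1/t). -/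
open MeasureTheory Filter Set

theorem kb_peak (g : ℝ → ℝ) (hg : ContinuousOn g (Ioi 0))
    (hLint : ∀ p : ℝ, 0 < p → IntegrableOn (fun t : ℝ => Real.exp (-p * t) * g t) (Ioi 0))
    (hpos : ∀ b : ℝ, 0 < b → ∀ n : ℕ, 0 ≤ ∫ t in Ioi (0:ℝ),
      (Real.exp (-b * t) * (Real.exp (-b * t) * (1 - Real.exp (-b * t))) ^ n) * g t) :
    ∀ t : ℝ, 0 < t → 0 ≤ g t := by
  intro t₁ ht₁
  have hl2 : 0 < Real.log 2 := Real.log_pos (by norm_num)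
  obtain ⟨b, hb, hbt⟩ : ∃ b : ℝ, 0 < b ∧ b * t₁ = Real.log 2 :=
    ⟨Real.log 2 / t₁, by positivity, by field_simp⟩
  set f : ℝ → ℝ := fun t => Real.exp (-b * t) with hf
  set f' : ℝ → ℝ := fun t => Real.exp (-b * t) * (-b) with hf'
  have hder : ∀ x ∈ Ioi (0:ℝ), HasDerivWithinAt f (f' x) (Ioi 0) x := by
    intro x _
    have h1 : HasDerivAt (fun t : ℝ => -b * t) (-b) x := by
      simpa using (hasDerivAt_id x).const_mul (-b)
    exact h1.exp.hasDerivWithinAt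
  have hinj : InjOn f (Ioi 0) := by
    intro x _ y _ hxy
    have := Real.exp_injective hxy
    have hb' : -b ≠ 0 := by linarith
    exact mul_left_cancel₀ hb' this
  have himg : Set.image f (Ioi 0) = Ioo 0 1 := by
    ext x
    constructor
    · rintro ⟨t, ht, rfl⟩
      have ht' : 0 < t := ht
      refine ⟨Real.exp_pos _, ?_⟩
      rw [hf]; simp only [Real.exp_lt_one_iff]
      nlinarith
    · rintro ⟨h0, h1⟩
      refine ⟨-Real.log x / b, ?_, ?_⟩
      · have := Real.log_neg h0 h1
        exact div_pos (by linarith) hb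
      · simp only [hf]
        rw [show -b * (-Real.log x / b) = Real.log x by field_simp, Real.exp_log h0]
  set G : ℝ → ℝ := fun x => g (-Real.log x / b) with hG
  have hGf : ∀ t, G (f t) = g t := by
    intro t; simp only [hG, hf, Real.log_exp]; congr 1; field_simp
  have habs : ∀ t, |f' t| = b * Real.exp (-b * t) := by
    intro t; simp only [hf', abs_mul, abs_neg, abs_of_pos hb, Real.abs_exp]; ring
  have hGint : IntegrableOn G (Icc 0 1) := by
    rw [integrableOn_Icc_iff_integrableOn_Ioo, ← himg,
      integrableOn_image_iff_integrableOn_abs_deriv_smul measurableSet_Ioi hder hinj]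
    simp only [hGf, habs, smul_eq_mul]
    have := (hLint b hb).const_mul b
    simpa [mul_assoc, IntegrableOn] using this
  have hlogt : -Real.log (1/2 : ℝ) / b = t₁ := by
    rw [one_div, Real.log_inv, ← hbt]; field_simp
  have hGc : ContinuousAt G (1/2) := by
    have h1 : ContinuousAt (fun x : ℝ => -Real.log x / b) (1/2) := by
      have : ContinuousAt Real.log (1/2) := Real.continuousAt_log (by norm_num)
      exact this.neg.div_const b
    have h2 : ContinuousAt g (-Real.log (1/2 : ℝ) / b) := by
      rw [hlogt]; exact hg.continuousAt (Ioi_mem_nhds ht₁)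
    exact ContinuousAt.comp (g := g) h2 h1
  have key := tendsto_setIntegral_pow_smul_of_unique_maximum_of_isCompact_of_integrableOn
    (μ := volume) (s := Icc (0:ℝ) 1) (x₀ := (1/2:ℝ)) isCompact_Icc (c := fun x => x * (1 - x))
    (by fun_prop) (by
      intro y _ hy
      have : 0 < (y - 1/2)^2 := by
        have : y - 1/2 ≠ 0 := sub_ne_zero.mpr hy
        positivity
      nlinarith) (by
      intro x hx
      exact mul_nonneg hx.1 (by linarith [hx.2])) (by norm_num) (by
      rw [interior_Icc, closure_Ioo (by norm_num)]; constructor <;> norm_num)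
    hGint hGc.continuousWithinAt
  have : G (1/2) = g t₁ := by simp only [hG, hlogt]
  rw [this] at key
  refine ge_of_tendsto' key ?_
  intro n
  refine smul_nonneg (inv_nonneg.mpr ?_) ?_
  · exact setIntegral_nonneg measurableSet_Icc fun x hx =>
      pow_nonneg (mul_nonneg hx.1 (by linarith [hx.2])) _
  · rw [integral_Icc_eq_integral_Ioo, ← himg,
      integral_image_eq_integral_abs_deriv_smul measurableSet_Ioi hder hinj]
    simp only [hGf, habs, smul_eq_mul]
    have h := mul_nonneg hb.le (hpos b hb n)
    rw [← integral_const_mul] at h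
    refine h.trans (le_of_eq (integral_congr_ae (Eventually.of_forall fun t => ?_)))
    simp only [hf]; ring

theorem kb_expand (b : ℝ) (n : ℕ) (t : ℝ) :
    Real.exp (-b * t) * (Real.exp (-b * t) * (1 - Real.exp (-b * t))) ^ n =
    ∑ k ∈ Finset.range (n+1), ((-1) ^ k * (n.choose k : ℝ)) * Real.exp (-(b * (1 + n + k)) * t) := by
  have h : ∀ k : ℕ, Real.exp (-(b * (1 + n + k)) * t) =
      Real.exp (-b * t) * Real.exp (-b * t) ^ n * Real.exp (-b * t) ^ k := by
    intro k
    rw [← Real.exp_nat_mul, ← Real.exp_nat_mul, ← Real.exp_add, ← Real.exp_add]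
    congr 1; ring
  simp only [h]
  rw [mul_pow, show 1 - Real.exp (-b * t) = -Real.exp (-b * t) + 1 by ring, add_pow,
    Finset.mul_sum, Finset.mul_sum]
  refine Finset.sum_congr rfl fun k _ => ?_
  rw [neg_pow]; ring

theorem kb_pos_of_rep (g : ℝ → ℝ) (hg : ContinuousOn g (Ioi 0))
    (hLint : ∀ p : ℝ, 0 < p → IntegrableOn (fun t : ℝ => Real.exp (-p * t) * g t) (Ioi 0))
    (w : ℝ → ℝ) (hw0 : ∀ x, 0 ≤ w x) (q : ℝ → ℝ → ℝ) (hq : ∀ x, ∀ t : ℝ, 0 < t → 0 ≤ q x t)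
    (hqint : ∀ x, ∀ p : ℝ, 0 < p → IntegrableOn (fun t : ℝ => Real.exp (-p * t) * q x t) (Ioi 0))
    (hQ : ∀ p : ℝ, 0 < p →
      Continuous fun x => w x * ∫ t in Ioi (0:ℝ), Real.exp (-p * t) * q x t)
    (hlim : ∀ p : ℝ, 0 < p →
      Tendsto (fun R : ℝ => ∫ x in (-R)..R, w x * ∫ t in Ioi (0:ℝ), Real.exp (-p * t) * q x t)
        atTop (nhds (∫ t in Ioi (0:ℝ), Real.exp (-p * t) * g t))) :
    ∀ t : ℝ, 0 < t → 0 ≤ g t := by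
  apply kb_peak g hg hLint
  intro b hb n
  have hpk : ∀ k : ℕ, 0 < b * (1 + n + k) := fun k => by positivity
  have expand : ∀ u : ℝ → ℝ,
      (∀ p : ℝ, 0 < p → IntegrableOn (fun t : ℝ => Real.exp (-p * t) * u t) (Ioi 0)) →
      ∫ t in Ioi (0:ℝ),
        (Real.exp (-b * t) * (Real.exp (-b * t) * (1 - Real.exp (-b * t))) ^ n) * u t =
      ∑ k ∈ Finset.range (n+1), ((-1) ^ k * (n.choose k : ℝ)) *
        ∫ t in Ioi (0:ℝ), Real.exp (-(b * (1 + n + k)) * t) * u t := by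
    intro u hu
    simp only [kb_expand, Finset.sum_mul]
    rw [integral_finsetSum]
    · refine Finset.sum_congr rfl fun k _ => ?_
      rw [← integral_const_mul]
      simp only [mul_assoc]
    · intro k _
      have := (hu _ (hpk k)).const_mul ((-1) ^ k * (n.choose k : ℝ))
      simpa [mul_assoc, IntegrableOn] using this
  rw [expand g hLint]
  have hl := tendsto_finsetSum (Finset.range (n+1)) fun k _ =>
    (hlim _ (hpk k)).const_mul ((-1) ^ k * (n.choose k : ℝ))
  refine ge_of_tendsto hl ?_
  filter_upwards [eventually_ge_atTop 0] with R hR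
  simp only [← intervalIntegral.integral_const_mul]
  rw [← intervalIntegral.integral_finsetSum]
  · apply intervalIntegral.integral_nonneg (by linarith)
    intro x _
    have : ∑ k ∈ Finset.range (n+1), ((-1) ^ k * (n.choose k : ℝ)) *
        (w x * ∫ t in Ioi (0:ℝ), Real.exp (-(b * (1 + n + k)) * t) * q x t) =
        w x * ∫ t in Ioi (0:ℝ),
        (Real.exp (-b * t) * (Real.exp (-b * t) * (1 - Real.exp (-b * t))) ^ n) * q x t := by
      rw [expand (q x) (hqint x), Finset.mul_sum]
      refine Finset.sum_congr rfl fun k _ => ?_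
      ring
    rw [this]
    refine mul_nonneg (hw0 x) (setIntegral_nonneg measurableSet_Ioi fun t ht => ?_)
    have ht' : 0 < t := ht
    have h1 : Real.exp (-b * t) ≤ 1 := Real.exp_le_one_iff.mpr (by nlinarith)
    have h2 := Real.exp_pos (-b * t)
    exact mul_nonneg (mul_nonneg h2.le (pow_nonneg (mul_nonneg h2.le (by linarith)) _)) (hq x t ht)
  · intro k _
    exact ((hQ _ (hpk k)).const_mul _).intervalIntegrable _ _
noncomputable def kbF (μ : ℝ → ℝ) (z : ℂ) : ℂ :=
  ∫ α in (0:ℝ)..1, Complex.exp (α * z) * (μ α : ℂ)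

noncomputable def kbB (μ : ℝ → ℝ) (x : ℝ) : ℝ :=
  ∫ α in (0:ℝ)..1, Real.exp (α * x) * (Real.sin (Real.pi * α) * μ α)

theorem kbF_diff (μ : ℝ → ℝ) (hc : Continuous μ) : Differentiable ℂ (kbF μ) := by
  intro z₀
  have h := intervalIntegral.hasDerivAt_integral_of_dominated_loc_of_deriv_le (μ := volume)
    (F := fun (z : ℂ) (α : ℝ) => Complex.exp (α * z) * (μ α : ℂ))
    (F' := fun (z : ℂ) (α : ℝ) => Complex.exp (α * z) * α * (μ α : ℂ))
    (bound := fun α : ℝ => Real.exp (‖z₀‖ + 1) * |μ α|) (a := 0) (b := 1) (x₀ := z₀)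
    (Metric.ball_mem_nhds z₀ one_pos)
    (Eventually.of_forall fun z => (by fun_prop : Continuous fun α : ℝ =>
      Complex.exp (α * z) * (μ α : ℂ)).aestronglyMeasurable)
    ((by fun_prop : Continuous fun α : ℝ =>
      Complex.exp (α * z₀) * (μ α : ℂ)).intervalIntegrable _ _)
    ((by fun_prop : Continuous fun α : ℝ =>
      Complex.exp (α * z₀) * α * (μ α : ℂ)).aestronglyMeasurable)
    (Eventually.of_forall fun α hα z hz => by
      rw [uIoc_of_le zero_le_one] at hα
      rw [norm_mul, norm_mul, Complex.norm_exp, Complex.norm_real, Complex.norm_real,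
        Real.norm_eq_abs, Real.norm_eq_abs, abs_of_pos hα.1]
      have h1 : ‖z‖ ≤ ‖z₀‖ + 1 := by
        have : ‖z - z₀‖ < 1 := by simpa [dist_eq_norm] using hz
        have := norm_le_norm_add_norm_sub' z z₀
        linarith
      have h2 : (α * z).re ≤ ‖z₀‖ + 1 := by
        refine (Complex.re_le_norm _).trans ?_
        rw [norm_mul, Complex.norm_real, Real.norm_eq_abs, abs_of_pos hα.1]
        have := norm_nonneg z
        nlinarith [hα.2]
      refine mul_le_mul_of_nonneg_right ?_ (abs_nonneg _)
      calc Real.exp (α * z).re * α ≤ Real.exp (α * z).re * 1 := by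
            gcongr; exact hα.2
        _ ≤ _ := by rw [mul_one]; exact Real.exp_le_exp.mpr h2)
    ((by fun_prop : Continuous fun α : ℝ =>
      Real.exp (‖z₀‖ + 1) * |μ α|).intervalIntegrable _ _)
    (Eventually.of_forall fun α hα z hz => by
      have h1 : HasDerivAt (fun z : ℂ => (α : ℂ) * z) α z := by
        simpa using (hasDerivAt_id z).const_mul (α : ℂ)
      exact h1.cexp.mul_const _)
  exact h.2.differentiableAt

theorem kbF_conj (μ : ℝ → ℝ) (z : ℂ) :
    kbF μ ((starRingEnd ℂ) z) = (starRingEnd ℂ) (kbF μ z) := by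
  unfold kbF
  rw [← intervalIntegral.intervalIntegral_conj]
  refine intervalIntegral.integral_congr fun α _ => ?_
  simp [← Complex.exp_conj]

theorem kbF_re (μ : ℝ → ℝ) (hc : Continuous μ) (u z : ℂ) :
    (u * kbF μ z).re = ∫ α in (0:ℝ)..1, (u * Complex.exp (α * z)).re * μ α := by
  unfold kbF
  rw [← intervalIntegral.integral_const_mul]
  have hi : IntervalIntegrable (fun α : ℝ => u * (Complex.exp (α * z) * (μ α : ℂ))) volume 0 1 :=
    (by fun_prop : Continuous fun α : ℝ =>
      u * (Complex.exp (α * z) * (μ α : ℂ))).intervalIntegrable _ _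
  have := Complex.reCLM.intervalIntegral_comp_comm hi
  simp only [Complex.reCLM_apply] at this
  rw [← this]
  refine intervalIntegral.integral_congr fun α _ => ?_
  rw [← mul_assoc, Complex.re_mul_ofReal]

theorem kbF_norm (μ : ℝ → ℝ) (hc : Continuous μ) (h0 : ∀ a, 0 ≤ μ a) (x y : ℝ)
    (hy : |y| ≤ Real.pi) : kbB μ x ≤ ‖kbF μ (x + y * Complex.I)‖ := by
  have h1 : ((Complex.exp (((-(y / 2) : ℝ) : ℂ) * Complex.I)) * kbF μ (x + y * Complex.I)).re
      ≤ ‖kbF μ (x + y * Complex.I)‖ := by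
    refine (Complex.re_le_norm _).trans ?_
    rw [norm_mul, Complex.norm_exp_ofReal_mul_I, one_mul]
  refine le_trans ?_ h1
  rw [kbF_re μ hc]
  unfold kbB
  refine intervalIntegral.integral_mono_on zero_le_one
    (Continuous.intervalIntegrable (by fun_prop) _ _)
    (Continuous.intervalIntegrable (by fun_prop) _ _) fun α hα => ?_
  rw [← mul_assoc]
  refine mul_le_mul_of_nonneg_right ?_ (h0 α)
  rw [← Complex.exp_add]
  have he : (((-(y / 2) : ℝ) : ℂ) * Complex.I + α * (x + y * Complex.I)) =
      ((α * x : ℝ) : ℂ) + ((y * (α - 1/2) : ℝ) : ℂ) * Complex.I := by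
    push_cast; ring
  rw [he, Complex.exp_re]
  have e1 : (((α * x : ℝ) : ℂ) + ((y * (α - 1/2) : ℝ) : ℂ) * Complex.I).re = α * x := by simp
  have e2 : (((α * x : ℝ) : ℂ) + ((y * (α - 1/2) : ℝ) : ℂ) * Complex.I).im = y * (α - 1/2) := by
    simp
  rw [e1, e2]
  refine mul_le_mul_of_nonneg_left ?_ (Real.exp_pos _).le
  rw [← Real.cos_pi_div_two_sub, show Real.pi / 2 - Real.pi * α = -(Real.pi * (α - 1/2)) by ring,
    Real.cos_neg, ← Real.cos_abs (y * _), ← Real.cos_abs (Real.pi * _)]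
  have hp := Real.pi_pos
  have h12 : |α - 1/2| ≤ 1/2 := by rw [abs_le]; constructor <;> linarith [hα.1, hα.2]
  refine Real.cos_le_cos_of_nonneg_of_le_pi (abs_nonneg _) ?_ ?_
  · rw [abs_mul, abs_of_pos hp]; nlinarith
  · rw [abs_mul, abs_mul, abs_of_pos hp]
    exact mul_le_mul_of_nonneg_right hy (abs_nonneg _)

theorem kbF_im_top (μ : ℝ → ℝ) (hc : Continuous μ) (x : ℝ) :
    (kbF μ (x + Real.pi * Complex.I)).im = kbB μ x := by
  have h : (kbF μ (x + Real.pi * Complex.I)).im =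
      ((-Complex.I) * kbF μ (x + Real.pi * Complex.I)).re := by simp
  rw [h, kbF_re μ hc]
  unfold kbB
  refine intervalIntegral.integral_congr fun α _ => ?_
  have he : ((α:ℂ) * (x + Real.pi * Complex.I)) =
      ((α * x : ℝ) : ℂ) + ((Real.pi * α : ℝ) : ℂ) * Complex.I := by
    push_cast; ring
  have e1 : (((α * x : ℝ) : ℂ) + ((Real.pi * α : ℝ) : ℂ) * Complex.I).re = α * x := by simp
  have e2 : (((α * x : ℝ) : ℂ) + ((Real.pi * α : ℝ) : ℂ) * Complex.I).im = Real.pi * α := by simp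
  have e3 : ((-Complex.I) * Complex.exp (α * (x + Real.pi * Complex.I))).re =
    (Complex.exp (α * (x + Real.pi * Complex.I))).im := by simp
  rw [e3, he, Complex.exp_im, e1, e2]; ring

theorem kbF_real (μ : ℝ → ℝ) (s : ℝ) :
    kbF μ s = ((Real.exp s * Kreal μ (Real.exp s) : ℝ) : ℂ) := by
  unfold kbF Kreal
  rw [← intervalIntegral.integral_const_mul, ← intervalIntegral.integral_ofReal]
  refine intervalIntegral.integral_congr fun α _ => ?_
  rw [← Real.exp_mul, ← mul_assoc, ← Real.exp_add]
  push_cast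
  congr 2
  ring

theorem kb_mu_pos (μ : ℝ → ℝ) (hc : Continuous μ) (h1 : 0 < μ 1) :
    ∃ d : ℝ, 0 < d ∧ d ≤ 1/4 ∧ ∃ m : ℝ, 0 < m ∧ ∀ a ∈ Icc (1 - 2 * d) 1, m ≤ μ a := by
  have h : ∀ᶠ a in nhds (1:ℝ), μ 1 / 2 < μ a :=
    hc.continuousAt.eventually_const_lt (by linarith)
  obtain ⟨e, he, h⟩ := Metric.eventually_nhds_iff.mp h
  refine ⟨min (e/4) (1/4), by positivity, min_le_right _ _, μ 1 / 2, by linarith, ?_⟩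
  intro a ha
  refine (h ?_).le
  rw [Real.dist_eq, abs_lt]
  have := min_le_left (e/4) (1/4 : ℝ)
  constructor <;> linarith [ha.1, ha.2]

theorem kbB_lower (μ : ℝ → ℝ) (hc : Continuous μ) (h0 : ∀ a, 0 ≤ μ a) (h1 : 0 < μ 1) :
    ∃ c d : ℝ, 0 < c ∧ 0 < d ∧ d ≤ 1/4 ∧ (∀ x, 0 ≤ x → c * Real.exp ((1 - 2 * d) * x) ≤ kbB μ x) ∧
      (∀ x, x ≤ 0 → c * Real.exp ((1 - d) * x) ≤ kbB μ x) := by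
  obtain ⟨d, hd, hd4, m, hm, hmu⟩ := kb_mu_pos μ hc h1
  have hp := Real.pi_pos
  set σ := Real.sin (Real.pi * (1 - d)) with hσ
  have hσ0 : 0 < σ := Real.sin_pos_of_pos_of_lt_pi (by nlinarith) (by nlinarith)
  have main : ∀ x β : ℝ, (∀ α ∈ Icc (1 - 2 * d) (1 - d), β * x ≤ α * x) →
      (d * (σ * m)) * Real.exp (β * x) ≤ kbB μ x := by
    intro x β hβ
    have hsub : ∫ α in (1 - 2 * d)..(1 - d), Real.exp (α * x) * (Real.sin (Real.pi * α) * μ α)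
        ≤ kbB μ x := by
      unfold kbB
      refine intervalIntegral.integral_mono_interval (by linarith) (by linarith) (by linarith) ?_
        (Continuous.intervalIntegrable (by fun_prop) _ _)
      refine (ae_restrict_iff' measurableSet_Ioc).mpr (Eventually.of_forall fun α hα => ?_)
      have : 0 ≤ Real.sin (Real.pi * α) :=
        Real.sin_nonneg_of_nonneg_of_le_pi (by nlinarith [hα.1]) (by nlinarith [hα.2])
      exact mul_nonneg (Real.exp_pos _).le (mul_nonneg this (h0 α))
    refine le_trans ?_ hsub
    have hcst : (d * (σ * m)) * Real.exp (β * x) =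
        ∫ α in (1 - 2 * d)..(1 - d), Real.exp (β * x) * (σ * m) := by
      rw [intervalIntegral.integral_const, smul_eq_mul]; ring
    rw [hcst]
    refine intervalIntegral.integral_mono_on (by linarith)
      (Continuous.intervalIntegrable (by fun_prop) _ _)
      (Continuous.intervalIntegrable (by fun_prop) _ _) fun α hα => ?_
    refine mul_le_mul (Real.exp_le_exp.mpr (hβ α hα)) ?_ (by positivity) (Real.exp_pos _).le
    refine mul_le_mul ?_ (hmu α ⟨hα.1, by linarith [hα.2]⟩) hm.le ?_
    · rw [hσ, ← Real.sin_pi_sub (Real.pi * (1 - d)), ← Real.sin_pi_sub (Real.pi * α)]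
      refine Real.sin_le_sin_of_le_of_le_pi_div_two ?_ ?_ ?_ <;> nlinarith [hα.1, hα.2]
    · exact Real.sin_nonneg_of_nonneg_of_le_pi (by nlinarith [hα.1]) (by nlinarith [hα.2])
  refine ⟨d * (σ * m), d, by positivity, hd, hd4, ?_, ?_⟩
  · intro x hx
    exact main x _ fun α hα => mul_le_mul_of_nonneg_right hα.1 hx
  · intro x hx
    exact main x _ fun α hα => mul_le_mul_of_nonpos_right hα.2 hx

theorem kbB_pos (μ : ℝ → ℝ) (hc : Continuous μ) (h0 : ∀ a, 0 ≤ μ a) (h1 : 0 < μ 1) (x : ℝ) :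
    0 < kbB μ x := by
  obtain ⟨c, d, hc0, hd, -, hA, hB⟩ := kbB_lower μ hc h0 h1
  rcases le_total 0 x with h | h
  · exact lt_of_lt_of_le (by positivity) (hA x h)
  · exact lt_of_lt_of_le (by positivity) (hB x h)

theorem kbB_top (μ : ℝ → ℝ) (hc : Continuous μ) (h0 : ∀ a, 0 ≤ μ a) (h1 : 0 < μ 1) :
    Tendsto (fun R : ℝ => (kbB μ R)⁻¹) atTop (nhds 0) := by
  obtain ⟨c, d, hc0, hd, hd4, hA, hB⟩ := kbB_lower μ hc h0 h1
  refine Tendsto.inv_tendsto_atTop ?_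
  refine tendsto_atTop_mono' _ ((eventually_ge_atTop 0).mono fun x hx => hA x hx) ?_
  refine Tendsto.const_mul_atTop hc0 (Real.tendsto_exp_atTop.comp ?_)
  exact Tendsto.const_mul_atTop (by linarith) tendsto_id

theorem kbB_bot (μ : ℝ → ℝ) (hc : Continuous μ) (h0 : ∀ a, 0 ≤ μ a) (h1 : 0 < μ 1) :
    Tendsto (fun R : ℝ => (kbB μ (-R))⁻¹ * Real.exp (-R)) atTop (nhds 0) := by
  obtain ⟨c, d, hc0, hd, hd4, hA, hB⟩ := kbB_lower μ hc h0 h1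
  have h : Tendsto (fun R : ℝ => (kbB μ (-R)) * Real.exp R) atTop atTop := by
    have ht : Tendsto (fun R : ℝ => c * Real.exp (d * R)) atTop atTop :=
      Tendsto.const_mul_atTop hc0
        (Real.tendsto_exp_atTop.comp (Tendsto.const_mul_atTop hd tendsto_id))
    refine tendsto_atTop_mono' _ ((eventually_ge_atTop 0).mono fun R hR => ?_) ht
    have := mul_le_mul_of_nonneg_right (hB (-R) (by linarith)) (Real.exp_pos R).le
    refine le_trans (le_of_eq ?_) this
    rw [mul_assoc, ← Real.exp_add]; congr 2; ring
  refine (h.inv_tendsto_atTop).congr fun R => ?_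
  simp [Real.exp_neg, mul_comm]

theorem kb_kernel_ne {z : ℂ} {s : ℝ} (hz : |z.im| ≤ Real.pi) (hne : z ≠ s) :
    Complex.exp z ≠ Complex.exp s := by
  intro h
  obtain ⟨n, hn⟩ := Complex.exp_eq_exp_iff_exists_int.mp h
  have him : z.im = n * (2 * Real.pi) := by
    have := congrArg Complex.im hn
    simpa using this
  have hp := Real.pi_pos
  have hn0 : n = 0 := by
    rw [him, abs_mul, abs_of_pos (by positivity : 0 < 2 * Real.pi)] at hz
    have h1 : |(n:ℝ)| < 1 := by
      by_contra hcon
      push Not at hcon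
      nlinarith
    have h2 : |n| < 1 := by exact_mod_cast h1
    exact Int.abs_lt_one_iff.mp h2
  apply hne
  rw [hn, hn0]; simp

/-- The holomorphic function (pole removed) used in the contour integral. -/
noncomputable def kbH (μ : ℝ → ℝ) (s : ℝ) (z : ℂ) : ℂ :=
  dslope (fun z => (kbF μ z)⁻¹) (s : ℂ) z * (Complex.exp z / dslope Complex.exp (s : ℂ) z)

theorem kbH_off (μ : ℝ → ℝ) (s : ℝ) {z : ℂ} (hne : z ≠ s) :
    kbH μ s z = ((kbF μ z)⁻¹ - (kbF μ s)⁻¹) * (Complex.exp z / (Complex.exp z - Complex.exp s)) := by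
  unfold kbH
  rw [dslope_of_ne _ hne, dslope_of_ne _ hne, slope_def_field, slope_def_field]
  have : z - s ≠ 0 := sub_ne_zero.mpr hne
  field_simp

theorem kbH_diff (μ : ℝ → ℝ) (hc : Continuous μ) (h0 : ∀ a, 0 ≤ μ a) (h1 : 0 < μ 1) (s : ℝ) :
    DifferentiableOn ℂ (kbH μ s) {z | |z.im| ≤ Real.pi} := by
  have hne : ∀ z : ℂ, |z.im| ≤ Real.pi → kbF μ z ≠ 0 := by
    intro z hz h
    have := kbF_norm μ hc h0 z.re z.im hz
    rw [Complex.re_add_im, h, norm_zero] at this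
    linarith [kbB_pos μ hc h0 h1 z.re]
  have hU : IsOpen {z | kbF μ z ≠ 0} := isOpen_ne_fun (kbF_diff μ hc).continuous continuous_const
  have hs : kbF μ s ≠ 0 := hne s (by simp [Real.pi_pos.le])
  have hG : DifferentiableOn ℂ (dslope (fun z => (kbF μ z)⁻¹) (s : ℂ)) {z | kbF μ z ≠ 0} := by
    rw [Complex.differentiableOn_dslope (hU.mem_nhds hs)]
    exact (kbF_diff μ hc).differentiableOn.inv fun z hz => hz
  have hE : DifferentiableOn ℂ (dslope Complex.exp (s : ℂ)) univ := by
    rw [Complex.differentiableOn_dslope univ_mem]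
    exact Complex.differentiable_exp.differentiableOn
  refine DifferentiableOn.mul (hG.mono fun z hz => hne z hz) ?_
  refine DifferentiableOn.div Complex.differentiable_exp.differentiableOn
    (hE.mono (subset_univ _)) ?_
  intro z hz
  by_cases hzs : z = s
  · rw [hzs, dslope_same, Complex.deriv_exp]; exact Complex.exp_ne_zero _
  · rw [dslope_of_ne _ hzs, slope_def_field]
    exact div_ne_zero (sub_ne_zero.mpr (kb_kernel_ne hz hzs)) (sub_ne_zero.mpr hzs)

noncomputable def kbw (μ : ℝ → ℝ) (x : ℝ) : ℝ :=
  -((kbF μ (x + Real.pi * Complex.I))⁻¹).im / Real.pi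

theorem kbw_nonneg (μ : ℝ → ℝ) (hc : Continuous μ) (h0 : ∀ a, 0 ≤ μ a) (h1 : 0 < μ 1) (x : ℝ) :
    0 ≤ kbw μ x := by
  unfold kbw
  rw [Complex.inv_im, kbF_im_top μ hc]
  have := kbB_pos μ hc h0 h1 x
  have h2 := Complex.normSq_nonneg (kbF μ (x + Real.pi * Complex.I))
  have := Real.pi_pos
  rw [neg_div, neg_div, neg_div, neg_neg]
  positivity

theorem kbw_cont (μ : ℝ → ℝ) (hc : Continuous μ) (h0 : ∀ a, 0 ≤ μ a) (h1 : 0 < μ 1) :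
    Continuous (kbw μ) := by
  unfold kbw
  have h : Continuous fun x : ℝ => (kbF μ (x + Real.pi * Complex.I))⁻¹ := by
    refine Continuous.inv₀ ((kbF_diff μ hc).continuous.comp (by fun_prop)) fun x hx => ?_
    have := kbF_im_top μ hc x
    have h2 := kbB_pos μ hc h0 h1 x
    rw [hx] at this
    simp at this
    linarith
  exact (Complex.continuous_im.comp h).neg.div_const _

theorem kbH_lines (μ : ℝ → ℝ) (s x : ℝ) :
    kbH μ s (x + ((-Real.pi : ℝ) : ℂ) * Complex.I) - kbH μ s (x + (Real.pi : ℂ) * Complex.I) =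
    Complex.I * ((2 * Real.pi * (kbw μ x * (Real.exp x / (Real.exp x + Real.exp s))) : ℝ) : ℂ) := by
  have hp := Real.pi_pos
  have hne1 : (x + ((-Real.pi : ℝ) : ℂ) * Complex.I) ≠ (s : ℂ) := by
    intro h
    have := congrArg Complex.im h
    simp at this
  have hne2 : (x + (Real.pi : ℂ) * Complex.I) ≠ (s : ℂ) := by
    intro h
    have := congrArg Complex.im h
    simp at this
  rw [kbH_off μ s hne1, kbH_off μ s hne2]
  have e2 : Complex.exp (x + (Real.pi : ℂ) * Complex.I) = -(Real.exp x : ℂ) := by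
    rw [Complex.exp_add, Complex.exp_pi_mul_I]; push_cast; ring
  have e1 : Complex.exp (x + ((-Real.pi : ℝ) : ℂ) * Complex.I) = -(Real.exp x : ℂ) := by
    rw [Complex.exp_add]; push_cast; rw [neg_mul, Complex.exp_neg_pi_mul_I]; ring
  have c : (x + ((-Real.pi : ℝ) : ℂ) * Complex.I) =
      (starRingEnd ℂ) (x + (Real.pi : ℂ) * Complex.I) := by simp
  have k : -(Real.exp x : ℂ) / (-(Real.exp x : ℂ) - Complex.exp s) =
      ((Real.exp x / (Real.exp x + Real.exp s) : ℝ) : ℂ) := by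
    push_cast
    rw [show -Complex.exp x - Complex.exp s = -(Complex.exp x + Complex.exp s) by ring,
      neg_div_neg_eq]
  rw [e1, e2, k, c, kbF_conj, ← sub_mul]
  unfold kbw
  set g := (kbF μ (x + (Real.pi : ℂ) * Complex.I)) with hg
  have hcj : ((starRingEnd ℂ) g)⁻¹ - (kbF μ s)⁻¹ - (g⁻¹ - (kbF μ s)⁻¹) =
      Complex.I * ((-2 * (g⁻¹).im : ℝ) : ℂ) := by
    rw [← map_inv₀]
    apply Complex.ext <;> simp
    ring
  rw [hcj, mul_assoc, ← Complex.ofReal_mul]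
  congr 2
  field_simp

theorem kb_side_left (μ : ℝ → ℝ) (hc : Continuous μ) (h0 : ∀ a, 0 ≤ μ a) (h1 : 0 < μ 1) (s : ℝ) :
    Tendsto (fun R : ℝ => ∫ y in (-Real.pi)..Real.pi, kbH μ s (((-R : ℝ) : ℂ) + y * Complex.I))
      atTop (nhds 0) := by
  have hp := Real.pi_pos
  have hexp : Tendsto (fun R : ℝ => Real.exp (-R)) atTop (nhds 0) :=
    Real.tendsto_exp_neg_atTop_nhds_zero
  set g0 := ‖(kbF μ s)⁻¹‖
  have hlim : Tendsto (fun R : ℝ => (((kbB μ (-R))⁻¹ * Real.exp (-R) + g0 * Real.exp (-R)) /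
      (Real.exp s - Real.exp (-R))) * |Real.pi - (-Real.pi)|) atTop (nhds 0) := by
    have := ((((kbB_bot μ hc h0 h1).add (hexp.const_mul g0)).div
      (tendsto_const_nhds (x := Real.exp s) |>.sub hexp)
      (by simp [(Real.exp_pos s).ne'])).mul_const |Real.pi - (-Real.pi)|)
    simpa using this
  refine squeeze_zero_norm' ?_ hlim
  filter_upwards [eventually_gt_atTop (-s)] with R hR
  refine intervalIntegral.norm_integral_le_of_norm_le_const fun y hy => ?_
  rw [uIoc_of_le (by linarith)] at hy
  have hyp : |y| ≤ Real.pi := abs_le.mpr ⟨hy.1.le, hy.2⟩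
  have hne : (((-R : ℝ) : ℂ) + y * Complex.I) ≠ s := by
    intro h
    have := congrArg Complex.re h
    simp at this; linarith
  have hlt : Real.exp (-R) < Real.exp s := Real.exp_lt_exp.mpr (by linarith)
  have hn : ‖Complex.exp (((-R : ℝ) : ℂ) + y * Complex.I)‖ = Real.exp (-R) := by
    rw [Complex.norm_exp]; simp
  have hn2 : ‖Complex.exp (s : ℂ)‖ = Real.exp s := by rw [Complex.norm_exp]; simp
  rw [kbH_off μ s hne, norm_mul, norm_div, hn, ← add_mul, mul_div_assoc]
  have hB := kbB_pos μ hc h0 h1 (-R)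
  have hden : 0 < Real.exp s - Real.exp (-R) := by linarith
  refine mul_le_mul ?_ ?_ (by positivity) (by positivity)
  · refine (norm_sub_le _ _).trans (add_le_add ?_ le_rfl)
    rw [norm_inv]
    exact inv_anti₀ hB (kbF_norm μ hc h0 (-R) y hyp)
  · refine div_le_div_of_nonneg_left (Real.exp_pos _).le hden ?_
    rw [← hn2, ← hn, norm_sub_rev]
    exact norm_sub_norm_le _ _

theorem kb_side_right (μ : ℝ → ℝ) (hc : Continuous μ) (h0 : ∀ a, 0 ≤ μ a) (h1 : 0 < μ 1) (s : ℝ) :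
    Tendsto (fun R : ℝ => ∫ y in (-Real.pi)..Real.pi, kbH μ s ((R : ℂ) + y * Complex.I))
      atTop (nhds (-(2 * Real.pi * (kbF μ s)⁻¹))) := by
  have hp := Real.pi_pos
  have hexp : Tendsto (fun R : ℝ => Real.exp (-R)) atTop (nhds 0) :=
    Real.tendsto_exp_neg_atTop_nhds_zero
  set g0 := (kbF μ s)⁻¹ with hg0
  have hlim : Tendsto (fun R : ℝ => (((kbB μ R)⁻¹ + ‖g0‖ * (Real.exp s * Real.exp (-R))) /
      (1 - Real.exp s * Real.exp (-R))) * |Real.pi - (-Real.pi)|) atTop (nhds 0) := by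
    have := ((((kbB_top μ hc h0 h1).add ((hexp.const_mul (Real.exp s)).const_mul ‖g0‖)).div
      (tendsto_const_nhds (x := (1:ℝ)) |>.sub (hexp.const_mul (Real.exp s)))
      (by simp)).mul_const |Real.pi - (-Real.pi)|)
    simpa using this
  rw [tendsto_iff_norm_sub_tendsto_zero]
  refine squeeze_zero' (Eventually.of_forall fun _ => norm_nonneg _) ?_ hlim
  filter_upwards [eventually_gt_atTop s] with R hR
  have hcont : IntervalIntegrable (fun y : ℝ => kbH μ s ((R : ℂ) + y * Complex.I)) volume
      (-Real.pi) Real.pi := by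
    apply ContinuousOn.intervalIntegrable
    refine (kbH_diff μ hc h0 h1 s).continuousOn.comp (by fun_prop) ?_
    intro y hy
    rw [uIcc_of_le (by linarith)] at hy
    simpa using abs_le.mpr hy
  have heq : (∫ y in (-Real.pi)..Real.pi, kbH μ s ((R : ℂ) + y * Complex.I)) -
      -(2 * Real.pi * g0) =
      ∫ y in (-Real.pi)..Real.pi, (kbH μ s ((R : ℂ) + y * Complex.I) + g0) := by
    rw [intervalIntegral.integral_add hcont intervalIntegrable_const,
      intervalIntegral.integral_const, Complex.real_smul]
    push_cast; ring
  rw [heq]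
  refine intervalIntegral.norm_integral_le_of_norm_le_const fun y hy => ?_
  rw [uIoc_of_le (by linarith)] at hy
  have hyp : |y| ≤ Real.pi := abs_le.mpr ⟨hy.1.le, hy.2⟩
  have hne : ((R : ℂ) + y * Complex.I) ≠ s := by
    intro h
    have := congrArg Complex.re h
    simp at this; linarith
  have hlt : Real.exp s < Real.exp R := Real.exp_lt_exp.mpr (by linarith)
  have hn : ‖Complex.exp ((R : ℂ) + y * Complex.I)‖ = Real.exp R := by
    rw [Complex.norm_exp]; simp
  have hn2 : ‖Complex.exp (s : ℂ)‖ = Real.exp s := by rw [Complex.norm_exp]; simp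
  rw [kbH_off μ s hne]
  have hB := kbB_pos μ hc h0 h1 R
  have hden : 0 < Real.exp R - Real.exp s := by linarith
  have hdn : Real.exp R - Real.exp s ≤
      ‖Complex.exp ((R : ℂ) + y * Complex.I) - Complex.exp s‖ := by
    rw [← hn2, ← hn]; exact norm_sub_norm_le _ _
  have hd0 : Complex.exp ((R : ℂ) + y * Complex.I) - Complex.exp s ≠ 0 := by
    rw [← norm_pos_iff]; linarith
  have hrew : ((kbF μ ((R : ℂ) + y * Complex.I))⁻¹ - (kbF μ s)⁻¹) *
      (Complex.exp ((R : ℂ) + y * Complex.I) / (Complex.exp ((R : ℂ) + y * Complex.I) - Complex.exp s))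
      + g0 = ((kbF μ ((R : ℂ) + y * Complex.I))⁻¹ * Complex.exp ((R : ℂ) + y * Complex.I) -
        g0 * Complex.exp s) / (Complex.exp ((R : ℂ) + y * Complex.I) - Complex.exp s) := by
    rw [← hg0]
    rw [eq_div_iff hd0, add_mul, mul_assoc, div_mul_cancel₀ _ hd0]; ring
  rw [hrew, norm_div]
  have hR' : ((kbB μ R)⁻¹ + ‖g0‖ * (Real.exp s * Real.exp (-R))) /
      (1 - Real.exp s * Real.exp (-R)) =
      ((kbB μ R)⁻¹ * Real.exp R + ‖g0‖ * Real.exp s) / (Real.exp R - Real.exp s) := by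
    rw [Real.exp_neg]
    have := (Real.exp_pos R).ne'
    have h2 : 1 - Real.exp s * (Real.exp R)⁻¹ ≠ 0 := by
      have : 1 - Real.exp s * (Real.exp R)⁻¹ = (Real.exp R - Real.exp s) * (Real.exp R)⁻¹ := by
        field_simp
      rw [this]; positivity
    rw [div_eq_div_iff h2 hden.ne']
    field_simp
  rw [hR']
  refine div_le_div₀ (by positivity) ?_ hden hdn
  refine (norm_sub_le _ _).trans ?_
  rw [norm_mul, norm_mul, hn, hn2, norm_inv]
  have := inv_anti₀ hB (kbF_norm μ hc h0 R y hyp)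
  gcongr

theorem kb_rep (μ : ℝ → ℝ) (hc : Continuous μ) (h0 : ∀ a, 0 ≤ μ a) (h1 : 0 < μ 1) (p : ℝ)
    (hp0 : 0 < p) :
    Tendsto (fun R : ℝ => ∫ x in (-R)..R, kbw μ x * (Real.exp x / (Real.exp x + p))) atTop
      (nhds (1 / (p * Kreal μ p))) := by
  have hp := Real.pi_pos
  obtain ⟨s, rfl⟩ : ∃ s, Real.exp s = p := ⟨Real.log p, Real.exp_log hp0⟩
  set J : ℝ → ℝ := fun R => ∫ x in (-R)..R, kbw μ x * (Real.exp x / (Real.exp x + Real.exp s))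
  have hJ : ∀ R : ℝ, ((J R : ℝ) : ℂ) = (2 * Real.pi : ℂ)⁻¹ *
      ((∫ y in (-Real.pi)..Real.pi, kbH μ s (((-R : ℝ) : ℂ) + y * Complex.I)) -
       (∫ y in (-Real.pi)..Real.pi, kbH μ s ((R : ℂ) + y * Complex.I))) := by
    intro R
    have hd := kbH_diff μ hc h0 h1 s
    have hrect := Complex.integral_boundary_rect_eq_zero_of_differentiableOn (kbH μ s)
      (⟨-R, -Real.pi⟩) (⟨R, Real.pi⟩) (hd.mono (by
        intro z hz
        have := hz.2
        simp only [mem_preimage] at this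
        rw [uIcc_of_le (by linarith)] at this
        exact abs_le.mpr this))
    simp only [smul_eq_mul] at hrect
    have hcl : ∀ y : ℝ, |y| ≤ Real.pi → IntervalIntegrable
        (fun x : ℝ => kbH μ s ((x : ℂ) + (y : ℂ) * Complex.I)) volume (-R) R := by
      intro y hy
      apply Continuous.intervalIntegrable
      rw [← continuousOn_univ]
      refine hd.continuousOn.comp (by fun_prop) ?_
      intro x _
      simpa using hy
    rw [← intervalIntegral.integral_sub (hcl (-Real.pi) (by rw [abs_neg, abs_of_pos hp]))
      (hcl Real.pi (by rw [abs_of_pos hp]))] at hrect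
    simp only [kbH_lines] at hrect
    rw [intervalIntegral.integral_const_mul, intervalIntegral.integral_ofReal,
      intervalIntegral.integral_const_mul, ← mul_add, ← mul_sub] at hrect
    have h3 := (mul_eq_zero.mp hrect).resolve_left Complex.I_ne_zero
    have hpc : (2 * Real.pi : ℂ) ≠ 0 := by
      exact_mod_cast (by positivity : (2 * Real.pi) ≠ 0)
    rw [eq_inv_mul_iff_mul_eq₀ hpc]
    push_cast at h3 ⊢
    linear_combination h3
  have hlimC : Tendsto (fun R => ((J R : ℝ) : ℂ)) atTop (nhds ((kbF μ s)⁻¹)) := by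
    have := ((kb_side_left μ hc h0 h1 s).sub (kb_side_right μ hc h0 h1 s)).const_mul
      ((2 * Real.pi : ℂ)⁻¹)
    have hpc : (2 * Real.pi : ℂ) ≠ 0 := by
      exact_mod_cast (by positivity : (2 * Real.pi) ≠ 0)
    rw [zero_sub, neg_neg, inv_mul_cancel_left₀ hpc] at this
    exact this.congr fun R => (hJ R).symm
  have hre := (Complex.continuous_re.tendsto _).comp hlimC
  rw [kbF_real, ← Complex.ofReal_inv, Complex.ofReal_re] at hre
  rw [one_div]
  exact hre

theorem kb_exp_lap (a : ℝ) (ha : 0 < a) :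
    IntegrableOn (fun t : ℝ => Real.exp (-a * t)) (Ioi 0) ∧
    ∫ t in Ioi (0:ℝ), Real.exp (-a * t) = 1 / a := by
  refine ⟨integrableOn_exp_mul_Ioi (by linarith) 0, ?_⟩
  rw [integral_exp_mul_Ioi (by linarith)]
  simp

theorem kb_dil (μ κ : ℝ → ℝ)
    (hlap : ∀ p : ℝ, 0 < p →
      IntegrableOn (fun t : ℝ => Real.exp (-p * t) * κ t) (Set.Ioi 0) ∧
      ∫ t in Set.Ioi (0:ℝ), Real.exp (-p * t) * κ t = 1 / (p * Kreal μ p))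
    (l : ℝ) (hl : 0 < l) (p : ℝ) (hp : 0 < p) :
    IntegrableOn (fun t : ℝ => Real.exp (-p * t) * κ (l * t)) (Set.Ioi 0) ∧
      ∫ t in Set.Ioi (0:ℝ), Real.exp (-p * t) * κ (l * t) =
        l⁻¹ * (1 / ((p / l) * Kreal μ (p / l))) := by
  obtain ⟨hi, he⟩ := hlap (p / l) (by positivity)
  have hfun : (fun t : ℝ => Real.exp (-p * t) * κ (l * t)) =
      fun t => (fun u : ℝ => Real.exp (-(p / l) * u) * κ u) (l * t) := by
    funext t
    simp only
    congr 2
    field_simp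
  constructor
  · rw [hfun]
    have := (integrableOn_Ioi_comp_mul_left_iff
      (fun u : ℝ => Real.exp (-(p / l) * u) * κ u) 0 hl).mpr
    rw [mul_zero] at this
    exact this hi
  · rw [hfun]
    have := integral_comp_mul_left_Ioi (fun u : ℝ => Real.exp (-(p / l) * u) * κ u) 0 hl
    rw [mul_zero, he, smul_eq_mul] at this
    exact this

theorem kb_comb (μ : ℝ → ℝ) (hc : Continuous μ) (h0 : ∀ a, 0 ≤ μ a) (h1 : 0 < μ 1)
    (κ : ℝ → ℝ) (hκc : ContinuousOn κ (Set.Ioi 0))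
    (hlap : ∀ p : ℝ, 0 < p →
      IntegrableOn (fun t : ℝ => Real.exp (-p * t) * κ t) (Set.Ioi 0) ∧
      ∫ t in Set.Ioi (0:ℝ), Real.exp (-p * t) * κ t = 1 / (p * Kreal μ p))
    (a₁ a₂ a₃ l₁ l₂ l₃ : ℝ) (hl₁ : 0 < l₁) (hl₂ : 0 < l₂) (hl₃ : 0 < l₃)
    (hpos : ∀ u : ℝ, 0 < u →
      0 ≤ a₁ * Real.exp (-(l₁ * u)) + a₂ * Real.exp (-(l₂ * u)) + a₃ * Real.exp (-(l₃ * u))) :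
    ∀ t : ℝ, 0 < t → 0 ≤ a₁ * κ (l₁ * t) + a₂ * κ (l₂ * t) + a₃ * κ (l₃ * t) := by
  have hcomp : ∀ l : ℝ, 0 < l → ContinuousOn (fun t => κ (l * t)) (Ioi 0) := by
    intro l hl
    refine hκc.comp (by fun_prop) ?_
    intro t ht
    exact mul_pos hl ht
  -- splitting Laplace transforms of three-term combinations
  have split : ∀ (p : ℝ) (u₁ u₂ u₃ : ℝ → ℝ),
      IntegrableOn (fun t : ℝ => Real.exp (-p * t) * u₁ t) (Ioi 0) →
      IntegrableOn (fun t : ℝ => Real.exp (-p * t) * u₂ t) (Ioi 0) →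
      IntegrableOn (fun t : ℝ => Real.exp (-p * t) * u₃ t) (Ioi 0) →
      IntegrableOn (fun t : ℝ => Real.exp (-p * t) * (a₁ * u₁ t + a₂ * u₂ t + a₃ * u₃ t)) (Ioi 0) ∧
      ∫ t in Ioi (0:ℝ), Real.exp (-p * t) * (a₁ * u₁ t + a₂ * u₂ t + a₃ * u₃ t) =
        a₁ * (∫ t in Ioi (0:ℝ), Real.exp (-p * t) * u₁ t) +
        a₂ * (∫ t in Ioi (0:ℝ), Real.exp (-p * t) * u₂ t) +
        a₃ * (∫ t in Ioi (0:ℝ), Real.exp (-p * t) * u₃ t) := by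
    intro p u₁ u₂ u₃ i₁ i₂ i₃
    have hfun : (fun t : ℝ => Real.exp (-p * t) * (a₁ * u₁ t + a₂ * u₂ t + a₃ * u₃ t)) =
        fun t => a₁ * (Real.exp (-p * t) * u₁ t) + a₂ * (Real.exp (-p * t) * u₂ t) +
          a₃ * (Real.exp (-p * t) * u₃ t) := by
      funext t; ring
    have j₁ := Integrable.const_mul i₁ a₁
    have j₂ := Integrable.const_mul i₂ a₂
    have j₃ := Integrable.const_mul i₃ a₃
    rw [hfun]
    refine ⟨(j₁.add j₂).add j₃, ?_⟩
    have e1 := integral_add (j₁.add j₂) j₃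
    have e2 := integral_add j₁ j₂
    simp only [Pi.add_apply] at e1 e2
    rw [e1, e2, integral_const_mul, integral_const_mul, integral_const_mul]
  -- elementary kernels
  have elem : ∀ (l : ℝ), 0 < l → ∀ (x p : ℝ), 0 < p →
      IntegrableOn (fun t : ℝ => Real.exp (-p * t) *
        (Real.exp x * Real.exp (-(l * (Real.exp x * t))))) (Ioi 0) ∧
      ∫ t in Ioi (0:ℝ), Real.exp (-p * t) * (Real.exp x * Real.exp (-(l * (Real.exp x * t)))) =
        l⁻¹ * (Real.exp x / (Real.exp x + p / l)) := by
    intro l hl x p hp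
    have hx := Real.exp_pos x
    obtain ⟨hi, he⟩ := kb_exp_lap (p + l * Real.exp x) (by positivity)
    have hfun : (fun t : ℝ => Real.exp (-p * t) *
        (Real.exp x * Real.exp (-(l * (Real.exp x * t))))) =
        fun t => Real.exp x * Real.exp (-(p + l * Real.exp x) * t) := by
      funext t
      rw [mul_left_comm, ← Real.exp_add]
      congr 2; ring
    rw [hfun]
    refine ⟨Integrable.const_mul hi _, ?_⟩
    rw [integral_const_mul, he]
    field_simp
    ring
  have hwc := kbw_cont μ hc h0 h1
  have contE : ∀ (l : ℝ), 0 < l → ∀ (p : ℝ), 0 < p → Continuous fun x : ℝ =>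
      kbw μ x * (Real.exp x / (Real.exp x + p / l)) := by
    intro l hl p hp
    refine hwc.mul (Continuous.div (by fun_prop) (by fun_prop) fun x => ?_)
    have := Real.exp_pos x
    positivity
  have hQeq : ∀ (x p : ℝ), 0 < p → ∫ t in Ioi (0:ℝ), Real.exp (-p * t) *
      (a₁ * (Real.exp x * Real.exp (-(l₁ * (Real.exp x * t)))) +
       a₂ * (Real.exp x * Real.exp (-(l₂ * (Real.exp x * t)))) +
       a₃ * (Real.exp x * Real.exp (-(l₃ * (Real.exp x * t))))) =
      a₁ * (l₁⁻¹ * (Real.exp x / (Real.exp x + p / l₁))) +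
      a₂ * (l₂⁻¹ * (Real.exp x / (Real.exp x + p / l₂))) +
      a₃ * (l₃⁻¹ * (Real.exp x / (Real.exp x + p / l₃))) := by
    intro x p hp
    rw [(split p _ _ _ (elem l₁ hl₁ x p hp).1 (elem l₂ hl₂ x p hp).1 (elem l₃ hl₃ x p hp).1).2,
      (elem l₁ hl₁ x p hp).2, (elem l₂ hl₂ x p hp).2, (elem l₃ hl₃ x p hp).2]
  have hsum : ∀ (x p : ℝ), kbw μ x * (a₁ * (l₁⁻¹ * (Real.exp x / (Real.exp x + p / l₁))) +
      a₂ * (l₂⁻¹ * (Real.exp x / (Real.exp x + p / l₂))) +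
      a₃ * (l₃⁻¹ * (Real.exp x / (Real.exp x + p / l₃)))) =
      (a₁ * l₁⁻¹) * (kbw μ x * (Real.exp x / (Real.exp x + p / l₁))) +
      (a₂ * l₂⁻¹) * (kbw μ x * (Real.exp x / (Real.exp x + p / l₂))) +
      (a₃ * l₃⁻¹) * (kbw μ x * (Real.exp x / (Real.exp x + p / l₃))) := by
    intro x p; ring
  refine kb_pos_of_rep (fun t => a₁ * κ (l₁ * t) + a₂ * κ (l₂ * t) + a₃ * κ (l₃ * t)) ?_ ?_
    (kbw μ) (kbw_nonneg μ hc h0 h1)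
    (fun x t => a₁ * (Real.exp x * Real.exp (-(l₁ * (Real.exp x * t)))) +
       a₂ * (Real.exp x * Real.exp (-(l₂ * (Real.exp x * t)))) +
       a₃ * (Real.exp x * Real.exp (-(l₃ * (Real.exp x * t))))) ?_ ?_ ?_ ?_
  · exact ((continuousOn_const.mul (hcomp l₁ hl₁)).add (continuousOn_const.mul (hcomp l₂ hl₂))).add
      (continuousOn_const.mul (hcomp l₃ hl₃))
  · intro p hp
    exact (split p _ _ _ (kb_dil μ κ hlap l₁ hl₁ p hp).1 (kb_dil μ κ hlap l₂ hl₂ p hp).1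
      (kb_dil μ κ hlap l₃ hl₃ p hp).1).1
  · intro x t ht
    have hx := Real.exp_pos x
    have := mul_nonneg hx.le (hpos (Real.exp x * t) (by positivity))
    refine this.trans (le_of_eq ?_)
    ring
  · intro x p hp
    exact (split p _ _ _ (elem l₁ hl₁ x p hp).1 (elem l₂ hl₂ x p hp).1 (elem l₃ hl₃ x p hp).1).1
  · intro p hp
    simp only [hQeq _ p hp, hsum]
    exact ((continuous_const.mul (contE l₁ hl₁ p hp)).add
      (continuous_const.mul (contE l₂ hl₂ p hp))).add (continuous_const.mul (contE l₃ hl₃ p hp))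
  · intro p hp
    simp only [hQeq _ p hp, hsum]
    rw [(split p _ _ _ (kb_dil μ κ hlap l₁ hl₁ p hp).1 (kb_dil μ κ hlap l₂ hl₂ p hp).1
      (kb_dil μ κ hlap l₃ hl₃ p hp).1).2, (kb_dil μ κ hlap l₁ hl₁ p hp).2,
      (kb_dil μ κ hlap l₂ hl₂ p hp).2, (kb_dil μ κ hlap l₃ hl₃ p hp).2]
    have r₁ := (kb_rep μ hc h0 h1 (p / l₁) (by positivity)).const_mul (a₁ * l₁⁻¹)
    have r₂ := (kb_rep μ hc h0 h1 (p / l₂) (by positivity)).const_mul (a₂ * l₂⁻¹)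
    have r₃ := (kb_rep μ hc h0 h1 (p / l₃) (by positivity)).const_mul (a₃ * l₃⁻¹)
    have r := (r₁.add r₂).add r₃
    simp only [← mul_assoc] at r ⊢
    refine r.congr fun R => ?_
    have c₁ := ((contE l₁ hl₁ p hp).const_mul (a₁ * l₁⁻¹)).intervalIntegrable
      (μ := volume) (-R) R
    have c₂ := ((contE l₂ hl₂ p hp).const_mul (a₂ * l₂⁻¹)).intervalIntegrable
      (μ := volume) (-R) R
    have c₃ := ((contE l₃ hl₃ p hp).const_mul (a₃ * l₃⁻¹)).intervalIntegrable
      (μ := volume) (-R) R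
    have e1 := intervalIntegral.integral_add (c₁.add c₂) c₃
    have e2 := intervalIntegral.integral_add c₁ c₂
    simp only [← mul_assoc] at e1 e2
    rw [e1, e2]
    simp only [mul_assoc, intervalIntegral.integral_const_mul]

theorem kb_K_lower (μ : ℝ → ℝ) (hc : Continuous μ) (h0 : ∀ a, 0 ≤ μ a) (h1 : 0 < μ 1) :
    ∃ m L : ℝ, 0 < m ∧ 1 ≤ L ∧ ∀ x : ℝ, L ≤ x → m / x ≤ Kreal μ (Real.exp x) := by
  obtain ⟨d, hd, hd4, m, hm, hmu⟩ := kb_mu_pos μ hc h1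
  refine ⟨m * Real.exp (-1), 1 / d, by positivity, ?_, ?_⟩
  · rw [le_div_iff₀ hd]; linarith
  intro x hx
  have hx1 : 1 ≤ d * x := by rw [div_le_iff₀ hd] at hx; linarith
  have hx0 : 0 < x := by
    by_contra h
    push Not at h
    nlinarith
  have hxinv : 1 / x ≤ d := by rw [div_le_iff₀ hx0]; exact hx1
  have hxi : 0 < 1 / x := by positivity
  have hK : Kreal μ (Real.exp x) = ∫ α in (0:ℝ)..1, Real.exp (x * (α - 1)) * μ α := by
    unfold Kreal
    refine intervalIntegral.integral_congr fun α _ => ?_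
    simp only [← Real.exp_mul]
  rw [hK]
  have hsub : ∫ α in (1 - 1 / x)..1, Real.exp (x * (α - 1)) * μ α ≤
      ∫ α in (0:ℝ)..1, Real.exp (x * (α - 1)) * μ α := by
    refine intervalIntegral.integral_mono_interval (by linarith) (by linarith) le_rfl
      (Eventually.of_forall fun α => mul_nonneg (Real.exp_pos _).le (h0 α))
      (Continuous.intervalIntegrable (by fun_prop) _ _)
  refine le_trans ?_ hsub
  have hcst : m * Real.exp (-1) / x = ∫ α in (1 - 1 / x)..1, Real.exp (-1) * m := by
    rw [intervalIntegral.integral_const, smul_eq_mul]; ring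
  rw [hcst]
  refine intervalIntegral.integral_mono_on (by linarith)
    (Continuous.intervalIntegrable (by fun_prop) _ _)
    (Continuous.intervalIntegrable (by fun_prop) _ _) fun α hα => ?_
  refine mul_le_mul (Real.exp_le_exp.mpr ?_) (hmu α ⟨by linarith [hα.1], hα.2⟩) hm.le
    (Real.exp_pos _).le
  have h3 : x * (1 - 1 / x) ≤ x * α := mul_le_mul_of_nonneg_left hα.1 hx0.le
  have h4 : x * (1 - 1 / x) = x - 1 := by field_simp
  linarith

theorem kb_main (μ : ℝ → ℝ) (hc : Continuous μ) (h0 : ∀ a, 0 ≤ μ a) (h1 : 0 < μ 1)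
    (κ : ℝ → ℝ) (hκc : ContinuousOn κ (Set.Ioi 0))
    (hκdiff : DifferentiableOn ℝ κ (Set.Ioi 0))
    (hlap : ∀ p : ℝ, 0 < p →
      IntegrableOn (fun t : ℝ => Real.exp (-p * t) * κ t) (Set.Ioi 0) ∧
      ∫ t in Set.Ioi (0:ℝ), Real.exp (-p * t) * κ t = 1 / (p * Kreal μ p)) :
    ∃ C > (0:ℝ), ∃ t₀ ∈ Set.Ioo (0:ℝ) 1, ∀ t : ℝ, 0 < t → t < t₀ →
      κ t ≤ C * Real.log (1 / t) ∧
      |deriv κ t| ≤ C * t⁻¹ * Real.log (1 / t) := by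
  have comb := kb_comb μ hc h0 h1 κ hκc hlap
  have knn : ∀ t : ℝ, 0 < t → 0 ≤ κ t := by
    intro t ht
    have := comb 1 0 0 1 1 1 one_pos one_pos one_pos (fun u _ => by simp; positivity) t ht
    simpa using this
  have kmono : ∀ s t : ℝ, 0 < s → s ≤ t → κ t ≤ κ s := by
    intro s t hs hst
    have ht : 0 < t := by linarith
    have := comb 1 (-1) 0 1 (t / s) 1 one_pos (by positivity) one_pos (fun u hu => by
      have h2 : 1 ≤ t / s := by rw [le_div_iff₀ hs]; linarith
      have : Real.exp (-(t / s * u)) ≤ Real.exp (-(1 * u)) := Real.exp_le_exp.mpr (by nlinarith)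
      linarith) s hs
    rw [div_mul_cancel₀ _ hs.ne', one_mul, one_mul] at this
    linarith
  have klip : ∀ t h : ℝ, 0 < t → 0 < h → κ t - κ (t + h) ≤ 2 * (h / t) * κ (t / 2) := by
    intro t h ht hh
    have := comb (-1) 1 (2 * (h / t)) 1 (1 + h / t) (1 / 2) one_pos (by positivity) (by norm_num)
      (fun u hu => by
        set e := h / t with he
        have he0 : 0 < e := by positivity
        have a1 : Real.exp (-((1 + e) * u)) = Real.exp (-u) * Real.exp (-(e * u)) := by
          rw [← Real.exp_add]; congr 1; ring
        have a2 : 1 - e * u ≤ Real.exp (-(e * u)) := by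
          have := Real.add_one_le_exp (-(e * u)); linarith
        have a3 : Real.exp (-(1 / 2 * u)) = Real.exp (-u) * Real.exp (u / 2) := by
          rw [← Real.exp_add]; congr 1; ring
        have a4 : u / 2 ≤ Real.exp (u / 2) := by
          have := Real.add_one_le_exp (u / 2); linarith
        rw [a1, a3, one_mul]
        have hE := Real.exp_pos (-u)
        have hkey : 0 ≤ -1 + Real.exp (-(e * u)) + 2 * e * Real.exp (u / 2) := by nlinarith
        nlinarith [mul_nonneg hE.le hkey]) t ht
    have e1 : (1 + h / t) * t = t + h := by field_simp
    have e2 : 1 / 2 * t = t / 2 := by ring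
    rw [e1, e2, one_mul] at this
    linarith
  obtain ⟨m, L, hm, hL, hK⟩ := kb_K_lower μ hc h0 h1
  -- upper bound for κ
  have kup : ∀ t : ℝ, 0 < t → L ≤ Real.log (1 / t) →
      κ t ≤ Real.exp 1 / m * Real.log (1 / t) := by
    intro t ht hLt
    set x := Real.log (1 / t) with hx
    have hx0 : 0 < x := by linarith
    have hex : Real.exp x = 1 / t := Real.exp_log (by positivity)
    obtain ⟨hi, he⟩ := hlap (1 / t) (by positivity)
    have hKx := hK x hLt
    rw [hex] at hKx
    have hKpos : 0 < Kreal μ (1 / t) := lt_of_lt_of_le (by positivity) hKx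
    have hlow : t * (Real.exp (-1) * κ t) ≤ 1 / (1 / t * Kreal μ (1 / t)) := by
      rw [← he]
      have hsub : ∫ s in Ioc 0 t, Real.exp (-(1 / t) * s) * κ s ≤
          ∫ s in Ioi (0:ℝ), Real.exp (-(1 / t) * s) * κ s := by
        refine setIntegral_mono_set hi ?_ (Eventually.of_forall Ioc_subset_Ioi_self)
        refine (ae_restrict_iff' measurableSet_Ioi).mpr (Eventually.of_forall fun s hs => ?_)
        exact mul_nonneg (Real.exp_pos _).le (knn s hs)
      refine le_trans ?_ hsub
      have hcst : t * (Real.exp (-1) * κ t) = ∫ s in Ioc 0 t, Real.exp (-1) * κ t := by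
        rw [setIntegral_const, smul_eq_mul]
        simp [measureReal_def, ht.le]
      rw [hcst]
      refine setIntegral_mono_on (integrableOn_const (by simp)) (hi.mono_set Ioc_subset_Ioi_self)
        measurableSet_Ioc fun s hs => ?_
      refine mul_le_mul (Real.exp_le_exp.mpr ?_) (kmono s t hs.1 hs.2) (knn t ht)
        (Real.exp_pos _).le
      have : 1 / t * s ≤ 1 := by rw [one_div, inv_mul_le_iff₀ ht]; linarith [hs.2]
      linarith
    have h5 : 1 / (1 / t * Kreal μ (1 / t)) = t * (1 / Kreal μ (1 / t)) := by
      field_simp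
    rw [h5] at hlow
    have h6 : Real.exp (-1) * κ t ≤ 1 / Kreal μ (1 / t) := le_of_mul_le_mul_left hlow ht
    have h7 : 1 / Kreal μ (1 / t) ≤ x / m := by
      rw [div_le_div_iff₀ hKpos hm]
      rw [div_le_iff₀ hx0] at hKx
      linarith
    have h8 : κ t = Real.exp 1 * (Real.exp (-1) * κ t) := by
      rw [← mul_assoc, ← Real.exp_add]; simp
    rw [h8]
    calc Real.exp 1 * (Real.exp (-1) * κ t) ≤ Real.exp 1 * (x / m) :=
          mul_le_mul_of_nonneg_left (h6.trans h7) (Real.exp_pos _).le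
      _ = _ := by ring
  have hE1 := Real.exp_pos 1
  have hA : 0 < Real.exp 1 / m := by positivity
  refine ⟨4 * (Real.exp 1 / m), by positivity, Real.exp (-L),
    ⟨Real.exp_pos _, Real.exp_lt_one_iff.mpr (by linarith)⟩, ?_⟩
  intro t ht htL
  have hlogt : L ≤ Real.log (1 / t) := by
    rw [one_div, Real.log_inv]
    have := (Real.log_lt_iff_lt_exp ht).mpr htL
    linarith
  have hlog2 : Real.log (1 / (t / 2)) = Real.log 2 + Real.log (1 / t) := by
    rw [show 1 / (t / 2) = 2 * (1 / t) by field_simp,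
      Real.log_mul (by norm_num) (by positivity)]
  have hl2 : Real.log 2 < 1 := by linarith [Real.log_two_lt_d9]
  have hl2' : 0 < Real.log 2 := Real.log_pos (by norm_num)
  constructor
  · refine (kup t ht hlogt).trans ?_
    have : 0 ≤ Real.exp 1 / m * Real.log (1 / t) := mul_nonneg hA.le (by linarith)
    linarith
  · have hd : HasDerivAt κ (deriv κ t) t :=
      (hκdiff.differentiableAt (Ioi_mem_nhds ht)).hasDerivAt
    have hs : Tendsto (fun h : ℝ => h⁻¹ • (κ (t + h) - κ t)) (nhdsWithin 0 (Ioi 0))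
        (nhds (deriv κ t)) := hd.tendsto_slope_zero_right
    have hup : deriv κ t ≤ 0 := by
      refine le_of_tendsto hs ?_
      filter_upwards [self_mem_nhdsWithin] with h hh
      have hh' : 0 < h := hh
      have := kmono t (t + h) ht (by linarith)
      exact mul_nonpos_of_nonneg_of_nonpos (by positivity) (by linarith)
    have hlo : -(2 * t⁻¹ * κ (t / 2)) ≤ deriv κ t := by
      refine ge_of_tendsto hs ?_
      filter_upwards [self_mem_nhdsWithin] with h hh
      have hh' : 0 < h := hh
      have := klip t h ht hh'
      rw [smul_eq_mul, ← div_eq_inv_mul, le_div_iff₀ hh']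
      have e : 2 * (h / t) * κ (t / 2) = 2 * t⁻¹ * κ (t / 2) * h := by ring
      linarith
    rw [abs_of_nonpos hup]
    have hk2 := kup (t / 2) (by positivity) (by rw [hlog2]; linarith)
    rw [hlog2] at hk2
    have h9 : κ (t / 2) ≤ Real.exp 1 / m * (2 * Real.log (1 / t)) :=
      hk2.trans (mul_le_mul_of_nonneg_left (by linarith) hA.le)
    have h10 := mul_le_mul_of_nonneg_left h9 (by positivity : 0 ≤ 2 * t⁻¹)
    calc -deriv κ t ≤ 2 * t⁻¹ * κ (t / 2) := by linarith
      _ ≤ _ := h10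
      _ = _ := by ring

theorem distributed_order_integral_kernel_bounds (μ : ℝ → ℝ)
    (hc : ContinuousOn μ (Set.Icc 0 1))
    (hnn : ∀ α ∈ Set.Icc (0:ℝ) 1, 0 ≤ μ α)
    (hne : ∃ α ∈ Set.Icc (0:ℝ) 1, μ α ≠ 0)
    (hC3 : ContDiffOn ℝ 3 μ (Set.Icc 0 1))
    (h1 : μ 1 ≠ 0)
    (h0 : μ 0 ≠ 0 ∨ ∃ a ν : ℝ, 0 < a ∧ 0 < ν ∧
      Tendsto (fun α : ℝ => μ α / (a * α ^ ν)) (nhdsWithin 0 (Set.Ioi 0)) (nhds 1))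
    (κ : ℝ → ℝ) (hκc : ContinuousOn κ (Set.Ioi 0))
    (hκloc : LocallyIntegrableOn κ (Set.Ioi 0))
    (hκdiff : DifferentiableOn ℝ κ (Set.Ioi 0))
    (hlap : ∀ p : ℝ, 0 < p →
      IntegrableOn (fun t : ℝ => Real.exp (-p * t) * κ t) (Set.Ioi 0) ∧
      ∫ t in Set.Ioi (0:ℝ), Real.exp (-p * t) * κ t = 1 / (p * Kreal μ p)) :
    ∃ C > (0:ℝ), ∃ t₀ ∈ Set.Ioo (0:ℝ) 1, ∀ t : ℝ, 0 < t → t < t₀ →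
      κ t ≤ C * Real.log (1 / t) ∧
      |deriv κ t| ≤ C * t⁻¹ * Real.log (1 / t) := by

  have hzero : (0:ℝ) ≤ 1 := zero_le_one
  set m : ℝ → ℝ := Set.IccExtend hzero (Set.domRestrict (Set.Icc 0 1) μ) with hm
  have hmc : Continuous m := (continuousOn_iff_continuous_domRestrict.mp hc).Icc_extend'
  have hmeq : ∀ a ∈ Set.Icc (0:ℝ) 1, m a = μ a := by
    intro a ha
    rw [hm, Set.IccExtend_of_mem hzero _ ha]; rfl
  have hm0 : ∀ a, 0 ≤ m a := by
    intro a
    rw [hm]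
    exact hnn _ (Set.projIcc 0 1 hzero a).2
  have hm1 : 0 < m 1 := by
    rw [hmeq 1 (by simp)]
    exact lt_of_le_of_ne (hnn 1 (by simp)) (Ne.symm h1)
  have hKeq : ∀ p, Kreal m p = Kreal μ p := by
    intro p
    unfold Kreal
    refine intervalIntegral.integral_congr fun α hα => ?_
    rw [Set.uIcc_of_le hzero] at hα
    simp only [hmeq α hα]
  refine kb_main m hmc hm0 hm1 κ hκc hκdiff ?_
  intro p hp
  rw [hKeq]
  exact hlap p hp
end

section
/- Let μ be twice continuously differentiable on [0,1] with μ(α) = α^ν μ₁(α), where ν ≥ 0, μ₁ is continuous and μ₁(α) ≥ ρ for all α ∈ [0,1] for some ρ > 0. Let Z be the fundamental solution of the one-dimensional ultraslow diffusion equation, characterized by its Laplace transform in t. Then for every T > 0 and every ε ∈ (0,1) there exist constants C > 0, a > 0 such that: (1) |Z(t,x)| ≤ C t^{−1/2} whenever 0 < t ≤ T and |x| ≤ ε; and (2) |Z(t,x)| ≤ C e^{−a|x|} whenever 0 < t ≤ T and |x| ≥ ε^{−1}. -/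
open MeasureTheory Filter Set

/-- Complex Laplace transform. -/
noncomputable def Lap (f : ℝ → ℝ) (p : ℂ) : ℂ :=
  ∫ t in Set.Ioi (0:ℝ), Complex.exp (-p * t) * (f t : ℂ)

lemma lap_norm (f : ℝ → ℝ) (p : ℂ) (t : ℝ) :
    ‖Complex.exp (-p * t) * (f t : ℂ)‖ = ‖Real.exp (-p.re * t) * f t‖ := by
  rw [norm_mul, norm_mul, Complex.norm_exp, Complex.norm_real, Real.norm_of_nonneg (Real.exp_pos _).le]
  simp

lemma lap_meas {f : ℝ → ℝ} (hf : ContinuousOn f (Set.Ioi 0)) (p : ℂ) :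
    AEStronglyMeasurable (fun t : ℝ => Complex.exp (-p * t) * (f t : ℂ))
      (volume.restrict (Set.Ioi (0:ℝ))) := by
  apply ContinuousOn.aestronglyMeasurable _ measurableSet_Ioi
  apply ContinuousOn.mul
  · fun_prop
  · exact Complex.continuous_ofReal.comp_continuousOn hf

lemma lap_integrable {f : ℝ → ℝ} (hf : ContinuousOn f (Set.Ioi 0))
    (hi : ∀ p : ℝ, 0 < p → IntegrableOn (fun t : ℝ => Real.exp (-p * t) * f t) (Set.Ioi 0))
    (p : ℂ) (hp : 0 < p.re) :
    IntegrableOn (fun t : ℝ => Complex.exp (-p * t) * (f t : ℂ)) (Set.Ioi 0) := by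
  refine Integrable.mono (hi p.re hp) (lap_meas hf p) ?_
  filter_upwards with t
  rw [lap_norm]

lemma lap_bound_aux (σ t s : ℝ) (hσ : 0 < σ) (ht : 0 < t) (hs : σ / 2 ≤ s) :
    t * Real.exp (-s * t) ≤ (4 / σ) * Real.exp (-(σ / 4) * t) := by
  have h1 : σ / 4 * t ≤ Real.exp (σ / 4 * t) := by
    linarith [Real.add_one_le_exp (σ / 4 * t)]
  have h2 : Real.exp (-s * t) ≤ Real.exp (-(σ / 2) * t) := by
    apply Real.exp_le_exp.2; nlinarith
  have h3 : Real.exp (-(σ / 4) * t) = Real.exp (σ / 4 * t) * Real.exp (-(σ / 2) * t) := by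
    rw [← Real.exp_add]; congr 1; ring
  have h4 : t = 4 / σ * (σ / 4 * t) := by field_simp
  calc t * Real.exp (-s * t) ≤ t * Real.exp (-(σ / 2) * t) := by gcongr
    _ = (4 / σ * (σ / 4 * t)) * Real.exp (-(σ / 2) * t) := by rw [← h4]
    _ ≤ (4 / σ * Real.exp (σ / 4 * t)) * Real.exp (-(σ / 2) * t) := by gcongr
    _ = _ := by rw [h3]; ring

lemma lap_mul_integrable {f : ℝ → ℝ} (hf : ContinuousOn f (Set.Ioi 0))
    (hi : ∀ p : ℝ, 0 < p → IntegrableOn (fun t : ℝ => Real.exp (-p * t) * f t) (Set.Ioi 0))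
    (p : ℝ) (hp : 0 < p) :
    IntegrableOn (fun t : ℝ => Real.exp (-p * t) * (t * f t)) (Set.Ioi 0) := by
  refine Integrable.mono ((hi (p / 4) (by positivity)).const_mul (4 / p)) ?_ ?_
  · apply ContinuousOn.aestronglyMeasurable _ measurableSet_Ioi
    fun_prop
  · filter_upwards [ae_restrict_mem measurableSet_Ioi] with t ht
    have ht' : 0 < t := ht
    have := lap_bound_aux p t p hp ht (by linarith)
    rw [norm_mul, norm_mul, norm_mul, norm_mul, Real.norm_of_nonneg (Real.exp_pos _).le,
      Real.norm_of_nonneg (Real.exp_pos _).le, Real.norm_of_nonneg ht'.le,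
      Real.norm_of_nonneg (by positivity : 0 ≤ 4 / p)]
    nlinarith [norm_nonneg (f t)]

lemma lap_hasDerivAt {f : ℝ → ℝ} (hf : ContinuousOn f (Set.Ioi 0))
    (hi : ∀ p : ℝ, 0 < p → IntegrableOn (fun t : ℝ => Real.exp (-p * t) * f t) (Set.Ioi 0))
    (p : ℂ) (hp : 0 < p.re) :
    HasDerivAt (Lap f) (-(Lap (fun t => t * f t) p)) p := by
  have hs : {q : ℂ | p.re / 2 < q.re} ∈ nhds p := by
    apply (isOpen_lt continuous_const Complex.continuous_re).mem_nhds
    show p.re / 2 < p.re; linarith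
  have hm : ContinuousOn (fun t : ℝ => t * f t) (Set.Ioi 0) := by fun_prop
  have := hasDerivAt_integral_of_dominated_loc_of_deriv_le (μ := volume.restrict (Set.Ioi (0:ℝ)))
    (F := fun (q : ℂ) (t : ℝ) => Complex.exp (-q * t) * (f t : ℂ))
    (F' := fun (q : ℂ) (t : ℝ) => -(Complex.exp (-q * t) * ((t * f t : ℝ) : ℂ)))
    (bound := fun t => (4 / p.re) * ‖Real.exp (-(p.re / 4) * t) * f t‖)
    (x₀ := p) hs (Eventually.of_forall fun q => lap_meas hf q) (lap_integrable hf hi p hp)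
    (lap_meas hm p).neg ?_ ((hi (p.re / 4) (by positivity)).norm.const_mul _) ?_
  · have h2 := this.2
    rw [integral_neg] at h2
    exact h2
  · filter_upwards [ae_restrict_mem measurableSet_Ioi] with t ht q hq
    have ht' : 0 < t := ht
    have hq' : p.re / 2 < q.re := hq
    have := lap_bound_aux p.re t q.re hp ht hq'.le
    rw [norm_neg, lap_norm (fun t => t * f t), norm_mul, norm_mul, norm_mul,
      Real.norm_of_nonneg (Real.exp_pos _).le,
      Real.norm_of_nonneg (Real.exp_pos _).le, Real.norm_of_nonneg ht'.le]
    nlinarith [norm_nonneg (f t)]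
  · filter_upwards with t q hq
    have h1 : HasDerivAt (fun q : ℂ => -q * (t : ℂ)) (-1 * t) q :=
      ((hasDerivAt_id q).neg).mul_const _
    refine ((h1.cexp).mul_const (f t : ℂ)).congr_deriv ?_
    push_cast; ring

open scoped FourierTransform in
lemma lap_inv_bound : ∃ I > (0:ℝ), ∀ (f : ℝ → ℝ), ContinuousOn f (Set.Ioi 0) →
    (∀ p : ℝ, 0 < p → IntegrableOn (fun t : ℝ => Real.exp (-p * t) * f t) (Set.Ioi 0)) →
    ∀ c > (0:ℝ), ∀ B ≥ (0:ℝ),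
      (∀ p : ℂ, p.re = c → ‖Lap f p‖ ≤ B * ‖p‖ ^ (-(3 / 2) : ℝ)) →
      ∀ t > (0:ℝ), |f t| ≤ I * B * c ^ (-(1 / 2) : ℝ) * Real.exp (c * t) := by
  set φ : ℝ → ℝ := fun u => (1 + ‖u‖ ^ 2) ^ (-(3 / 2 : ℝ) / 2) with hφ
  have hφi : Integrable φ := integrable_rpow_neg_one_add_norm_sq (by simp; norm_num)
  have hφ0 : ∀ u, 0 ≤ φ u := fun u => by positivity
  refine ⟨(∫ u, φ u) + 1, by have : 0 ≤ ∫ u, φ u := integral_nonneg hφ0; positivity, ?_⟩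
  intro f hf hi c hc B hB hb t ht
  set h : ℝ → ℂ := (Set.Ioi (0:ℝ)).indicator
    (fun t : ℝ => Complex.exp (-(c:ℂ) * t) * (f t : ℂ)) with hh
  have hhi : Integrable h :=
    (integrable_indicator_iff measurableSet_Ioi).2 (lap_integrable hf hi c (by simpa using hc))
  have hF : 𝓕 h = fun w : ℝ => Lap f (c + 2 * Real.pi * w * Complex.I) := by
    ext w
    rw [Real.fourier_real_eq_integral_exp_smul, Lap, ← integral_indicator measurableSet_Ioi]
    congr 1
    ext v
    by_cases hv : v ∈ Set.Ioi (0:ℝ)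
    · simp only [hh, indicator_of_mem hv, smul_eq_mul]
      rw [← mul_assoc, ← Complex.exp_add]
      congr 2
      push_cast; ring
    · simp only [hh, indicator_of_notMem hv, smul_zero]
  have hcont : Continuous (𝓕 h) := by
    rw [hF, continuous_iff_continuousAt]
    intro w
    have h1 := (lap_hasDerivAt hf hi (c + 2 * Real.pi * w * Complex.I)
      (by simpa using hc)).continuousAt
    exact ContinuousAt.comp (f := fun w : ℝ => (c + 2 * Real.pi * w * Complex.I : ℂ)) h1
      (by fun_prop)
  have hbd : ∀ w, ‖𝓕 h w‖ ≤ B * c ^ (-(3 / 2) : ℝ) * φ (w / c) := by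
    intro w
    rw [hF]
    refine (hb _ (by simp)).trans ?_
    rw [mul_assoc B]
    refine mul_le_mul_of_nonneg_left ?_ hB
    have e1 : φ (w / c) = (Real.sqrt (1 + (w / c) ^ 2)) ^ (-(3 / 2) : ℝ) := by
      rw [hφ, Real.sqrt_eq_rpow, ← Real.rpow_mul (by positivity)]
      simp only [Real.norm_eq_abs, sq_abs]
      congr 1; norm_num
    rw [e1, ← Real.mul_rpow hc.le (by positivity)]
    apply Real.rpow_le_rpow_of_nonpos (by positivity) _ (by norm_num)
    apply le_of_sq_le_sq _ (norm_nonneg _)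
    rw [mul_pow, Real.sq_sqrt (by positivity), ← Complex.normSq_eq_norm_sq, Complex.normSq_apply]
    simp
    have : c ^ 2 * (1 + (w / c) ^ 2) = c ^ 2 + w ^ 2 := by field_simp
    simp only [this]
    have hpi := Real.pi_gt_three
    nlinarith [mul_nonneg (sq_nonneg w) (by nlinarith : 0 ≤ 4 * Real.pi ^ 2 - 1)]
  have hdi : Integrable (fun w => B * c ^ (-(3 / 2) : ℝ) * φ (w / c)) :=
    (hφi.comp_div hc.ne').const_mul _
  have hFi : Integrable (𝓕 h) :=
    hdi.mono' hcont.aestronglyMeasurable (Eventually.of_forall hbd)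
  have hct : ContinuousAt h t := by
    have h1 : ContinuousAt (fun t : ℝ => Complex.exp (-(c:ℂ) * t) * (f t : ℂ)) t := by
      apply ContinuousAt.mul
      · fun_prop
      · exact Complex.continuous_ofReal.continuousAt.comp (hf.continuousAt (Ioi_mem_nhds ht))
    refine h1.congr ?_
    filter_upwards [Ioi_mem_nhds ht] with s hs
    simp [hh, indicator_of_mem hs]
  have hinv := hhi.fourierInv_fourier_eq hFi hct
  have hnorm : ‖h t‖ ≤ ∫ w, B * c ^ (-(3 / 2) : ℝ) * φ (w / c) := by
    rw [← hinv, Real.fourierInv_eq']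
    refine norm_integral_le_of_norm_le hdi (Eventually.of_forall fun w => ?_)
    rw [norm_smul, Complex.norm_exp_ofReal_mul_I, one_mul]
    exact hbd w
  rw [integral_const_mul, Measure.integral_comp_div, abs_of_pos hc, smul_eq_mul] at hnorm
  have hht : ‖h t‖ = Real.exp (-c * t) * |f t| := by
    have : t ∈ Set.Ioi (0:ℝ) := ht
    simp only [hh, indicator_of_mem this]
    rw [lap_norm, norm_mul, Real.norm_of_nonneg (Real.exp_pos _).le]
    simp
  rw [hht] at hnorm
  have hcc : c ^ (-(3 / 2) : ℝ) * c = c ^ (-(1 / 2) : ℝ) := by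
    nth_rewrite 2 [← Real.rpow_one c]
    rw [← Real.rpow_add hc]; norm_num
  have e2 : |f t| = Real.exp (c * t) * (Real.exp (-c * t) * |f t|) := by
    rw [← mul_assoc, ← Real.exp_add]; simp
  rw [e2]
  calc Real.exp (c * t) * (Real.exp (-c * t) * |f t|)
      ≤ Real.exp (c * t) * (B * c ^ (-(3 / 2) : ℝ) * (c * ∫ u, φ u)) := by gcongr
    _ = (∫ u, φ u) * B * (c ^ (-(3 / 2) : ℝ) * c) * Real.exp (c * t) := by ring
    _ ≤ _ := by rw [hcc]; gcongr; linarith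

/-- The symbol `p K(p)`, complex version. -/
noncomputable def gC (μ : ℝ → ℝ) (p : ℂ) : ℂ := ∫ α in (0:ℝ)..1, p ^ (α : ℂ) * (μ α : ℂ)

/-- Derivative of `gC`. -/
noncomputable def gC' (μ : ℝ → ℝ) (p : ℂ) : ℂ :=
  ∫ α in (0:ℝ)..1, (α : ℂ) * p ^ ((α : ℂ) - 1) * (μ α : ℂ)

/-- The symbol `p K(p)`, real version. -/
noncomputable def GR (μ : ℝ → ℝ) (r : ℝ) : ℝ := ∫ α in (0:ℝ)..1, r ^ α * μ α

lemma norm_cpow_real' {p : ℂ} (hp : p ≠ 0) (y : ℂ) (hy : y.im = 0) : ‖p ^ y‖ = ‖p‖ ^ y.re := by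
  rw [Complex.norm_cpow_of_ne_zero hp, hy]; simp

lemma ii_of_cont {E : Type*} [NormedAddCommGroup E] {f : ℝ → E}
    (hf : ContinuousOn f (Set.Icc 0 1)) : IntervalIntegrable f volume 0 1 :=
  ContinuousOn.intervalIntegrable (by rwa [uIcc_of_le zero_le_one])

lemma gC_cont {μ : ℝ → ℝ} (hc : ContinuousOn μ (Set.Icc 0 1)) {p : ℂ} (hp : p ≠ 0) :
    ContinuousOn (fun α : ℝ => p ^ (α : ℂ) * (μ α : ℂ)) (Set.Icc 0 1) := by
  apply ContinuousOn.mul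
  · exact (Complex.continuous_ofReal.const_cpow (Or.inl hp)).continuousOn
  · exact Complex.continuous_ofReal.comp_continuousOn hc

lemma gC'_cont {μ : ℝ → ℝ} (hc : ContinuousOn μ (Set.Icc 0 1)) {p : ℂ} (hp : p ≠ 0) :
    ContinuousOn (fun α : ℝ => (α : ℂ) * p ^ ((α : ℂ) - 1) * (μ α : ℂ)) (Set.Icc 0 1) := by
  apply ContinuousOn.mul
  · apply Continuous.continuousOn
    exact Complex.continuous_ofReal.mul
      ((Complex.continuous_ofReal.sub continuous_const).const_cpow (Or.inl hp))
  · exact Complex.continuous_ofReal.comp_continuousOn hc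

lemma GR_cont {μ : ℝ → ℝ} (hc : ContinuousOn μ (Set.Icc 0 1)) {r : ℝ} (hr : 0 < r) :
    ContinuousOn (fun α : ℝ => r ^ α * μ α) (Set.Icc 0 1) := by
  apply ContinuousOn.mul _ hc
  exact (continuous_const.rpow continuous_id (fun _ => Or.inl hr.ne')).continuousOn

lemma gC_hasDerivAt {μ : ℝ → ℝ} (hc : ContinuousOn μ (Set.Icc 0 1)) {p : ℂ} (hp : 0 < p.re) :
    HasDerivAt (gC μ) (gC' μ p) p := by
  have hp0 : p ≠ 0 := by rintro rfl; simp at hp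
  have hn : 0 < ‖p‖ := norm_pos_iff.2 hp0
  have hs : {q : ℂ | 0 < q.re ∧ ‖p‖ / 2 < ‖q‖} ∈ nhds p := by
    apply ((isOpen_lt continuous_const Complex.continuous_re).inter
      (isOpen_lt continuous_const continuous_norm)).mem_nhds
    exact ⟨hp, by show ‖p‖ / 2 < ‖p‖; linarith⟩
  have h := intervalIntegral.hasDerivAt_integral_of_dominated_loc_of_deriv_le (μ := volume)
    (a := 0) (b := 1)
    (F := fun (q : ℂ) (α : ℝ) => q ^ (α : ℂ) * (μ α : ℂ))
    (F' := fun (q : ℂ) (α : ℝ) => (α : ℂ) * q ^ ((α : ℂ) - 1) * (μ α : ℂ))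
    (bound := fun α => (‖p‖ / 2) ^ (α - 1) * |μ α|) (x₀ := p) hs ?_
    (ii_of_cont (gC_cont hc hp0)) ?_ ?_ ?_ ?_
  · exact h.2
  · filter_upwards [hs] with q hq
    have hq0 : q ≠ 0 := by rintro rfl; simpa using hq.1
    exact IntervalIntegrable.aestronglyMeasurable_restrict_uIoc (ii_of_cont (gC_cont hc hq0))
  · exact IntervalIntegrable.aestronglyMeasurable_restrict_uIoc (ii_of_cont (gC'_cont hc hp0))
  · filter_upwards with α hα q hq
    rw [uIoc_of_le zero_le_one] at hα
    have hq0 : q ≠ 0 := by rintro rfl; simpa using hq.1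
    rw [norm_mul, norm_mul, Complex.norm_real, Complex.norm_real, Real.norm_of_nonneg hα.1.le,
      norm_cpow_real' hq0 _ (by simp)]
    simp only [Complex.sub_re, Complex.ofReal_re, Complex.one_re, Real.norm_eq_abs]
    have h1 : ‖q‖ ^ (α - 1) ≤ (‖p‖ / 2) ^ (α - 1) :=
      Real.rpow_le_rpow_of_nonpos (by positivity) hq.2.le (by linarith [hα.2])
    have h2 : 0 ≤ ‖q‖ ^ (α - 1) := by positivity
    refine mul_le_mul_of_nonneg_right ?_ (abs_nonneg _)
    nlinarith [hα.1, hα.2]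
  · apply ii_of_cont
    apply ContinuousOn.mul _ hc.abs
    exact (continuous_const.rpow (continuous_id.sub continuous_const)
      (fun _ => Or.inl (by positivity))).continuousOn
  · filter_upwards with α hα q hq
    have := ((hasDerivAt_id q).cpow_const (c := (α : ℂ)) (Or.inl hq.1)).mul_const (μ α : ℂ)
    simpa using this

lemma gC'_norm {μ : ℝ → ℝ} (hc : ContinuousOn μ (Set.Icc 0 1))
    (h0 : ∀ α ∈ Set.Icc (0:ℝ) 1, 0 ≤ μ α) {p : ℂ} (hp : 0 < p.re) :
    ‖gC' μ p‖ ≤ GR μ ‖p‖ / ‖p‖ := by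
  have hp0 : p ≠ 0 := by rintro rfl; simp at hp
  have hn : 0 < ‖p‖ := norm_pos_iff.2 hp0
  rw [GR, ← intervalIntegral.integral_div]
  refine intervalIntegral.norm_integral_le_of_norm_le zero_le_one ?_
    ((ii_of_cont (GR_cont hc hn)).div_const _)
  filter_upwards with α hα
  rw [norm_mul, norm_mul, Complex.norm_real, Complex.norm_real, Real.norm_of_nonneg hα.1.le,
      norm_cpow_real' hp0 _ (by simp), Real.norm_of_nonneg (h0 α ⟨hα.1.le, hα.2⟩)]
  simp only [Complex.sub_re, Complex.ofReal_re, Complex.one_re]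
  rw [Real.rpow_sub_one hn.ne', mul_div_right_comm]
  refine mul_le_mul_of_nonneg_right ?_ (h0 α ⟨hα.1.le, hα.2⟩)
  have : 0 ≤ ‖p‖ ^ α / ‖p‖ := by positivity
  nlinarith [hα.1, hα.2]

lemma gC_norm_le {μ : ℝ → ℝ} (hc : ContinuousOn μ (Set.Icc 0 1))
    (h0 : ∀ α ∈ Set.Icc (0:ℝ) 1, 0 ≤ μ α) {p : ℂ} (hp : 0 < p.re) :
    ‖gC μ p‖ ≤ GR μ ‖p‖ := by
  have hp0 : p ≠ 0 := by rintro rfl; simp at hp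
  have hn : 0 < ‖p‖ := norm_pos_iff.2 hp0
  refine intervalIntegral.norm_integral_le_of_norm_le zero_le_one ?_
    (ii_of_cont (GR_cont hc hn))
  filter_upwards with α hα
  rw [norm_mul, Complex.norm_real,
      norm_cpow_real' hp0 _ (by simp), Real.norm_of_nonneg (h0 α ⟨hα.1.le, hα.2⟩)]
  simp

lemma gC_re_ge {μ : ℝ → ℝ} (hc : ContinuousOn μ (Set.Icc 0 1))
    (h0 : ∀ α ∈ Set.Icc (0:ℝ) 1, 0 ≤ μ α) {p : ℂ} (hp : 0 < p.re) (c : ℂ) (k : ℝ)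
    (hk : ∀ α ∈ Set.Icc (0:ℝ) 1, k * ‖p‖ ^ α ≤ (c * p ^ (α : ℂ)).re) :
    k * GR μ ‖p‖ ≤ (c * gC μ p).re := by
  have hp0 : p ≠ 0 := by rintro rfl; simp at hp
  have hn : 0 < ‖p‖ := norm_pos_iff.2 hp0
  have hi := ii_of_cont (gC_cont hc hp0)
  have h1 : (c * gC μ p).re = ∫ α in (0:ℝ)..1, (c * (p ^ (α : ℂ) * (μ α : ℂ))).re := by
    rw [gC, ← intervalIntegral.integral_const_mul]
    exact (Complex.reCLM.intervalIntegral_comp_comm (hi.const_mul c)).symm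
  rw [h1, GR, ← intervalIntegral.integral_const_mul]
  refine intervalIntegral.integral_mono_on zero_le_one
    ((ii_of_cont (GR_cont hc hn)).const_mul _) ?_ ?_
  · apply ii_of_cont
    exact Complex.continuous_re.comp_continuousOn (continuousOn_const.mul (gC_cont hc hp0))
  · intro α hα
    rw [← mul_assoc, ← mul_assoc, Complex.re_mul_ofReal]
    exact mul_le_mul_of_nonneg_right (hk α hα) (h0 α hα)

lemma polar_re {p : ℂ} (hp0 : p ≠ 0) (α β : ℝ) :
    (Complex.exp ((β * p.arg : ℝ) * Complex.I) * p ^ (α : ℂ)).re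
      = ‖p‖ ^ α * Real.cos ((α + β) * p.arg) := by
  have hn : 0 < ‖p‖ := norm_pos_iff.2 hp0
  rw [Complex.cpow_def_of_ne_zero hp0, ← Complex.exp_add, Complex.exp_re]
  simp only [Complex.add_re, Complex.add_im, Complex.mul_re, Complex.mul_im, Complex.ofReal_re,
    Complex.ofReal_im, Complex.I_re, Complex.I_im, Complex.log_re, Complex.log_im]
  rw [Real.rpow_def_of_pos hn]
  congr 2 <;> ring

lemma gC_re_nonneg {μ : ℝ → ℝ} (hc : ContinuousOn μ (Set.Icc 0 1))
    (h0 : ∀ α ∈ Set.Icc (0:ℝ) 1, 0 ≤ μ α) {p : ℂ} (hp : 0 < p.re) :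
    0 ≤ (gC μ p).re := by
  have hp0 : p ≠ 0 := by rintro rfl; simp at hp
  have harg : |p.arg| ≤ Real.pi / 2 := Complex.abs_arg_le_pi_div_two_iff.2 hp.le
  have := gC_re_ge hc h0 hp 1 0 ?_
  · simpa using this
  · intro α hα
    have h := polar_re hp0 α 0
    simp only [zero_mul, Complex.ofReal_zero, Complex.exp_zero, add_zero] at h
    rw [h]
    have h3 : |α * p.arg| ≤ Real.pi / 2 := by
      rw [abs_mul, abs_of_nonneg hα.1]; nlinarith [hα.1, hα.2, abs_nonneg p.arg]
    rw [abs_le] at h3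
    have := Real.cos_nonneg_of_neg_pi_div_two_le_of_le h3.1 h3.2
    rw [zero_mul]; positivity

lemma gC_norm_ge {μ : ℝ → ℝ} (hc : ContinuousOn μ (Set.Icc 0 1))
    (h0 : ∀ α ∈ Set.Icc (0:ℝ) 1, 0 ≤ μ α) {p : ℂ} (hp : 0 < p.re) :
    GR μ ‖p‖ / 2 ≤ ‖gC μ p‖ := by
  have hp0 : p ≠ 0 := by rintro rfl; simp at hp
  have harg : |p.arg| ≤ Real.pi / 2 := Complex.abs_arg_le_pi_div_two_iff.2 hp.le
  have := gC_re_ge hc h0 hp (Complex.exp ((-(1/2) * p.arg : ℝ) * Complex.I)) (1/2) ?_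
  · have h2 := Complex.re_le_norm (Complex.exp ((-(1/2) * p.arg : ℝ) * Complex.I) * gC μ p)
    rw [norm_mul, Complex.norm_exp_ofReal_mul_I, one_mul] at h2
    linarith
  · intro α hα
    rw [polar_re hp0 α (-(1/2))]
    have h3 : |(α + -(1/2)) * p.arg| ≤ Real.pi / 3 := by
      have : |α + -(1/2)| ≤ 1/2 := by rw [abs_le]; constructor <;> linarith [hα.1, hα.2]
      rw [abs_mul]; nlinarith [abs_nonneg p.arg, Real.pi_pos, abs_nonneg (α + -(1/2))]
    have h4 : 1 / 2 ≤ Real.cos ((α + -(1/2)) * p.arg) := by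
      rw [← Real.cos_abs]
      refine Real.cos_pi_div_three.symm.le.trans ?_
      exact Real.cos_le_cos_of_nonneg_of_le_pi (abs_nonneg _) (by linarith [Real.pi_pos]) h3
    have : 0 ≤ ‖p‖ ^ α := by positivity
    nlinarith

lemma GR_pos {μ : ℝ → ℝ} (hc : ContinuousOn μ (Set.Icc 0 1))
    (h1 : ∀ α ∈ Set.Ioc (0:ℝ) 1, 0 < μ α) {r : ℝ} (hr : 0 < r) : 0 < GR μ r := by
  apply intervalIntegral.intervalIntegral_pos_of_pos_on (ii_of_cont (GR_cont hc hr)) _ zero_lt_one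
  intro α hα
  have := h1 α ⟨hα.1, hα.2.le⟩
  positivity

lemma GR_upper {μ : ℝ → ℝ} (hc : ContinuousOn μ (Set.Icc 0 1))
    (h0 : ∀ α ∈ Set.Icc (0:ℝ) 1, 0 ≤ μ α) {r : ℝ} (hr : 0 < r) :
    GR μ r ≤ max 1 r * ∫ α in (0:ℝ)..1, μ α := by
  rw [GR, ← intervalIntegral.integral_const_mul]
  refine intervalIntegral.integral_mono_on zero_le_one (ii_of_cont (GR_cont hc hr))
    ((ii_of_cont hc).const_mul _) ?_
  intro α hα
  refine mul_le_mul_of_nonneg_right ?_ (h0 α hα)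
  rcases le_total r 1 with h | h
  · exact (Real.rpow_le_one hr.le h hα.1).trans (le_max_left _ _)
  · refine le_trans ?_ (le_max_right _ _)
    calc r ^ α ≤ r ^ (1:ℝ) := Real.rpow_le_rpow_of_exponent_le h hα.2
      _ = r := Real.rpow_one r

lemma GR_lower {μ : ℝ → ℝ} (hc : ContinuousOn μ (Set.Icc 0 1))
    (h1 : ∀ α ∈ Set.Ioc (0:ℝ) 1, 0 < μ α) (h0 : ∀ α ∈ Set.Icc (0:ℝ) 1, 0 ≤ μ α) :
    ∃ m > (0:ℝ), ∀ r : ℝ, 1 ≤ r → m * r ^ (1 / 2 : ℝ) ≤ GR μ r := by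
  have hi := ii_of_cont hc
  have hi2 : IntervalIntegrable μ volume (1/2) 1 := hi.mono_set (by
    rw [uIcc_of_le (by norm_num), uIcc_of_le (by norm_num)]
    exact Icc_subset_Icc (by norm_num) le_rfl)
  refine ⟨∫ α in (1/2:ℝ)..1, μ α, ?_, ?_⟩
  · apply intervalIntegral.intervalIntegral_pos_of_pos_on hi2 _ (by norm_num)
    intro α hα
    exact h1 α ⟨by linarith [hα.1], hα.2.le⟩
  · intro r hr
    have hr0 : 0 < r := by linarith
    have hG := ii_of_cont (GR_cont hc hr0)
    have hGa : IntervalIntegrable (fun α : ℝ => r ^ α * μ α) volume 0 (1/2) := hG.mono_set (by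
      rw [uIcc_of_le (by norm_num), uIcc_of_le (by norm_num)]
      exact Icc_subset_Icc le_rfl (by norm_num))
    have hGb : IntervalIntegrable (fun α : ℝ => r ^ α * μ α) volume (1/2) 1 := hG.mono_set (by
      rw [uIcc_of_le (by norm_num), uIcc_of_le (by norm_num)]
      exact Icc_subset_Icc (by norm_num) le_rfl)
    rw [GR, ← intervalIntegral.integral_add_adjacent_intervals hGa hGb]
    have e1 : 0 ≤ ∫ α in (0:ℝ)..(1/2), r ^ α * μ α := by
      apply intervalIntegral.integral_nonneg (by norm_num)
      intro α hα
      have := h0 α ⟨hα.1, by linarith [hα.2]⟩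
      positivity
    have e2 : (∫ α in (1/2:ℝ)..1, μ α) * r ^ (1 / 2 : ℝ) ≤ ∫ α in (1/2:ℝ)..1, r ^ α * μ α := by
      rw [mul_comm, ← intervalIntegral.integral_const_mul]
      refine intervalIntegral.integral_mono_on (by norm_num) (hi2.const_mul _) hGb ?_
      intro α hα
      refine mul_le_mul_of_nonneg_right ?_ (h0 α ⟨by linarith [hα.1], hα.2⟩)
      exact Real.rpow_le_rpow_of_exponent_le hr hα.1
    linarith

lemma gC_slit {μ : ℝ → ℝ} (hc : ContinuousOn μ (Set.Icc 0 1))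
    (h1 : ∀ α ∈ Set.Ioc (0:ℝ) 1, 0 < μ α) (h0 : ∀ α ∈ Set.Icc (0:ℝ) 1, 0 ≤ μ α)
    {p : ℂ} (hp : 0 < p.re) : gC μ p ∈ Complex.slitPlane := by
  have hp0 : p ≠ 0 := by rintro rfl; simp at hp
  have hn : 0 < ‖p‖ := norm_pos_iff.2 hp0
  have a1 := gC_re_nonneg hc h0 hp
  have a2 := gC_norm_ge hc h0 hp
  have a3 := GR_pos hc h1 hn
  have a4 : gC μ p ≠ 0 := norm_pos_iff.1 (by linarith)
  by_contra hcon
  rw [Complex.mem_slitPlane_iff] at hcon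
  push Not at hcon
  exact a4 (Complex.ext (le_antisymm hcon.1 a1) hcon.2)

/-- Square root of the symbol. -/
noncomputable def sC (μ : ℝ → ℝ) (p : ℂ) : ℂ := gC μ p ^ (1 / 2 : ℂ)

lemma sC_sq (μ : ℝ → ℝ) (p : ℂ) : sC μ p ^ 2 = gC μ p := by
  rw [sC, ← Complex.cpow_nat_mul]; norm_num

lemma sC_norm_sq (μ : ℝ → ℝ) (p : ℂ) : ‖sC μ p‖ ^ 2 = ‖gC μ p‖ := by
  rw [← norm_pow, sC_sq]

lemma sC_re {μ : ℝ → ℝ} (hc : ContinuousOn μ (Set.Icc 0 1))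
    (h1 : ∀ α ∈ Set.Ioc (0:ℝ) 1, 0 < μ α) (h0 : ∀ α ∈ Set.Icc (0:ℝ) 1, 0 ≤ μ α)
    {p : ℂ} (hp : 0 < p.re) : ‖sC μ p‖ / 2 ≤ (sC μ p).re := by
  have hg0 : gC μ p ≠ 0 := Complex.slitPlane_ne_zero (gC_slit hc h1 h0 hp)
  have a1 := gC_re_nonneg hc h0 hp
  have hre : 0 ≤ (sC μ p).re := by
    rw [sC, Complex.cpow_def_of_ne_zero hg0, Complex.exp_re]
    have : (Complex.log (gC μ p) * (1 / 2)).im = (gC μ p).arg / 2 := by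
      simp [Complex.mul_im, Complex.log_im]; ring
    rw [this]
    have h2 := Complex.neg_pi_lt_arg (gC μ p)
    have h3 := Complex.arg_le_pi (gC μ p)
    have := Real.cos_nonneg_of_neg_pi_div_two_le_of_le (x := (gC μ p).arg / 2)
      (by linarith) (by linarith)
    positivity
  have h5 : 0 ≤ (sC μ p).re ^ 2 - (sC μ p).im ^ 2 := by
    have : (gC μ p).re = (sC μ p).re ^ 2 - (sC μ p).im ^ 2 := by
      rw [← sC_sq, sq, Complex.mul_re]; ring
    linarith
  have h6 : ‖sC μ p‖ ^ 2 = (sC μ p).re ^ 2 + (sC μ p).im ^ 2 := by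
    rw [← Complex.normSq_eq_norm_sq, Complex.normSq_apply]; ring
  apply le_of_sq_le_sq _ hre
  nlinarith

lemma sC_pos {μ : ℝ → ℝ} (hc : ContinuousOn μ (Set.Icc 0 1))
    (h1 : ∀ α ∈ Set.Ioc (0:ℝ) 1, 0 < μ α) (h0 : ∀ α ∈ Set.Icc (0:ℝ) 1, 0 ≤ μ α)
    {p : ℂ} (hp : 0 < p.re) : 0 < ‖sC μ p‖ := by
  have hg0 : gC μ p ≠ 0 := Complex.slitPlane_ne_zero (gC_slit hc h1 h0 hp)
  rw [norm_pos_iff]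
  intro h
  apply hg0
  rw [← sC_sq, h]; simp

lemma sC_hasDerivAt {μ : ℝ → ℝ} (hc : ContinuousOn μ (Set.Icc 0 1))
    (h1 : ∀ α ∈ Set.Ioc (0:ℝ) 1, 0 < μ α) (h0 : ∀ α ∈ Set.Icc (0:ℝ) 1, 0 ≤ μ α)
    {p : ℂ} (hp : 0 < p.re) : ∃ s' : ℂ, HasDerivAt (sC μ) s' p ∧ ‖s'‖ ≤ ‖sC μ p‖ / ‖p‖ := by
  have hp0 : p ≠ 0 := by rintro rfl; simp at hp
  have hn : 0 < ‖p‖ := norm_pos_iff.2 hp0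
  have hsl := gC_slit hc h1 h0 hp
  have hg0 := Complex.slitPlane_ne_zero hsl
  have hs := sC_pos hc h1 h0 hp
  refine ⟨_, (gC_hasDerivAt hc hp).cpow_const (c := 1/2) hsl, ?_⟩
  rw [Complex.cpow_sub _ _ hg0, Complex.cpow_one]
  change ‖1 / 2 * (sC μ p / gC μ p) * gC' μ p‖ ≤ _
  have a1 := gC'_norm hc h0 hp
  have a2 := gC_norm_ge hc h0 hp
  rw [norm_mul, norm_mul, norm_div (sC μ p), ← sC_norm_sq]
  rw [← sC_norm_sq] at a2
  have e : ‖(1 / 2 : ℂ)‖ = 1 / 2 := by norm_num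
  rw [e]
  calc 1 / 2 * (‖sC μ p‖ / ‖sC μ p‖ ^ 2) * ‖gC' μ p‖
      ≤ 1 / 2 * (‖sC μ p‖ / ‖sC μ p‖ ^ 2) * ((2 * ‖sC μ p‖ ^ 2) / ‖p‖) := by
        gcongr
        refine a1.trans ?_
        gcongr
        linarith
    _ = _ := by field_simp

/-- The Laplace transform of the fundamental solution. -/
noncomputable def FC (μ : ℝ → ℝ) (x : ℝ) (p : ℂ) : ℂ :=
  (1 / 2) * (sC μ p / p) * Complex.exp (-(|x| : ℝ) * sC μ p)

lemma exp_aux (μ : ℝ → ℝ) (x : ℝ) (p : ℂ) :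
    ‖Complex.exp (-(|x| : ℝ) * sC μ p)‖ = Real.exp (-|x| * (sC μ p).re) := by
  rw [Complex.norm_exp]; congr 1; simp

lemma FC_hasDerivAt {μ : ℝ → ℝ} (hc : ContinuousOn μ (Set.Icc 0 1))
    (h1 : ∀ α ∈ Set.Ioc (0:ℝ) 1, 0 < μ α) (h0 : ∀ α ∈ Set.Icc (0:ℝ) 1, 0 ≤ μ α)
    (x : ℝ) {p : ℂ} (hp : 0 < p.re) :
    ∃ F' : ℂ, HasDerivAt (FC μ x) F' p ∧ ‖F'‖ ≤ 2 * ‖sC μ p‖ / ‖p‖ ^ 2 := by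
  have hp0 : p ≠ 0 := by rintro rfl; simp at hp
  have hn : 0 < ‖p‖ := norm_pos_iff.2 hp0
  obtain ⟨s', hs', hb⟩ := sC_hasDerivAt hc h1 h0 hp
  have hre := sC_re hc h1 h0 hp
  have hsp := sC_pos hc h1 h0 hp
  have hd := ((hs'.div (hasDerivAt_id p) hp0).const_mul (1/2)).mul
    ((hs'.const_mul (-(|x| : ℝ) : ℂ)).cexp)
  refine ⟨_, hd, ?_⟩
  set s := sC μ p with hsdef
  have e0 : (1 / 2 * ((s' * id p - s * 1) / id p ^ 2) * Complex.exp (-(|x| : ℝ) * s) +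
      1 / 2 * (s / id p) * (Complex.exp (-(|x| : ℝ) * s) * (-(|x| : ℝ) * s')))
      = 1 / 2 * ((s' / p - s / p ^ 2 - (|x| : ℝ) * s * s' / p)
        * Complex.exp (-(|x| : ℝ) * s)) := by
    simp only [id]
    field_simp
    ring
  have e1 : ‖s' / p - s / p ^ 2 - (|x| : ℝ) * s * s' / p‖
      ≤ ‖s‖ / ‖p‖ ^ 2 * (2 + |x| * ‖s‖) := by
    calc ‖s' / p - s / p ^ 2 - (|x| : ℝ) * s * s' / p‖
        ≤ ‖s' / p‖ + ‖s / p ^ 2‖ + ‖(|x| : ℝ) * s * s' / p‖ :=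
          (norm_sub_le _ _).trans (add_le_add_left (norm_sub_le _ _) _)
      _ = ‖s'‖ / ‖p‖ + ‖s‖ / ‖p‖ ^ 2 + |x| * ‖s‖ * ‖s'‖ / ‖p‖ := by
          simp [norm_pow]
      _ ≤ (‖s‖ / ‖p‖) / ‖p‖ + ‖s‖ / ‖p‖ ^ 2 + |x| * ‖s‖ * (‖s‖ / ‖p‖) / ‖p‖ := by gcongr
      _ = _ := by field_simp; ring
  have e2 : Real.exp (-|x| * s.re) ≤ 1 := by
    apply Real.exp_le_one_iff.2
    nlinarith [abs_nonneg x]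
  have e3 : |x| * ‖s‖ * Real.exp (-|x| * s.re) ≤ 2 := by
    have t1 := Real.add_one_le_exp (|x| * s.re)
    have t2 : Real.exp (|x| * s.re) * Real.exp (-|x| * s.re) = 1 := by
      rw [← Real.exp_add]; simp
    have t3 : |x| * ‖s‖ ≤ 2 * Real.exp (|x| * s.re) := by nlinarith [abs_nonneg x]
    nlinarith [Real.exp_pos (-|x| * s.re)]
  change ‖(1 / 2 * ((s' * id p - s * 1) / id p ^ 2) * Complex.exp (-(|x| : ℝ) * s) +
      1 / 2 * (s / id p) * (Complex.exp (-(|x| : ℝ) * s) * (-(|x| : ℝ) * s')))‖ ≤ _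
  rw [e0, norm_mul, norm_mul, exp_aux]
  have e : ‖(1 / 2 : ℂ)‖ = 1 / 2 := by norm_num
  rw [e]
  have hA : 0 ≤ ‖s‖ / ‖p‖ ^ 2 := by positivity
  calc 1 / 2 * (‖s' / p - s / p ^ 2 - (|x| : ℝ) * s * s' / p‖ * Real.exp (-|x| * s.re))
      ≤ 1 / 2 * ((‖s‖ / ‖p‖ ^ 2 * (2 + |x| * ‖s‖)) * Real.exp (-|x| * s.re)) := by gcongr
    _ = 1 / 2 * (‖s‖ / ‖p‖ ^ 2) * (2 * Real.exp (-|x| * s.re)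
          + |x| * ‖s‖ * Real.exp (-|x| * s.re)) := by ring
    _ ≤ 1 / 2 * (‖s‖ / ‖p‖ ^ 2) * (2 * 1 + 2) := by gcongr
    _ = _ := by ring

lemma GR_eq_K (μ : ℝ → ℝ) {p : ℝ} (hp : 0 < p) : GR μ p = p * Kreal μ p := by
  rw [GR, Kreal, ← intervalIntegral.integral_const_mul]
  congr 1; ext α
  rw [Real.rpow_sub_one hp.ne']; field_simp

lemma FC_real {μ : ℝ → ℝ} (hc : ContinuousOn μ (Set.Icc 0 1))
    (h1 : ∀ α ∈ Set.Ioc (0:ℝ) 1, 0 < μ α) (x : ℝ) {p : ℝ} (hp : 0 < p) :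
    FC μ x p = (((1 / 2) * Kreal μ p / Real.sqrt (p * Kreal μ p)
            * Real.exp (-|x| * Real.sqrt (p * Kreal μ p)) : ℝ) : ℂ) := by
  have hG := GR_pos hc h1 hp
  have hg : gC μ p = (GR μ p : ℂ) := by
    rw [gC, GR, ← intervalIntegral.integral_ofReal]
    congr 1; ext α
    rw [← Complex.ofReal_cpow hp.le]; push_cast; rfl
  have hs : sC μ p = (Real.sqrt (GR μ p) : ℂ) := by
    rw [sC, hg, Real.sqrt_eq_rpow, Complex.ofReal_cpow hG.le]; norm_num
  have hK : Kreal μ p = GR μ p / p := by rw [GR_eq_K μ hp]; field_simp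
  rw [← GR_eq_K μ hp, FC, hs, hK]
  have hq : Real.sqrt (GR μ p) ≠ 0 := (Real.sqrt_pos.2 hG).ne'
  have e : (1 / 2 : ℝ) * (GR μ p / p) / Real.sqrt (GR μ p) = 1 / 2 * (Real.sqrt (GR μ p) / p) := by
    field_simp
    rw [Real.sq_sqrt hG.le]
  rw [e]
  push_cast
  rfl

lemma lap_eq_FC {μ : ℝ → ℝ} (hc : ContinuousOn μ (Set.Icc 0 1))
    (h1 : ∀ α ∈ Set.Ioc (0:ℝ) 1, 0 < μ α) (h0 : ∀ α ∈ Set.Icc (0:ℝ) 1, 0 ≤ μ α)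
    (x : ℝ) {f : ℝ → ℝ} (hf : ContinuousOn f (Set.Ioi 0))
    (hi : ∀ p : ℝ, 0 < p → IntegrableOn (fun t : ℝ => Real.exp (-p * t) * f t) (Set.Ioi 0))
    (hl : ∀ p : ℝ, 0 < p → ∫ t in Set.Ioi (0:ℝ), Real.exp (-p * t) * f t
        = (1 / 2) * Kreal μ p / Real.sqrt (p * Kreal μ p)
            * Real.exp (-|x| * Real.sqrt (p * Kreal μ p))) :
    EqOn (Lap f) (FC μ x) {p : ℂ | 0 < p.re} := by
  have hU : IsOpen {p : ℂ | 0 < p.re} := isOpen_lt continuous_const Complex.continuous_re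
  have hreal : ∀ p : ℝ, 0 < p → Lap f p = FC μ x p := by
    intro p hp
    rw [FC_real hc h1 x hp, ← hl p hp, Lap]
    refine Eq.trans ?_ (integral_ofReal (𝕜 := ℂ))
    congr 1; ext t
    simp
  refine AnalyticOnNhd.eqOn_of_preconnected_of_frequently_eq (z₀ := 1)
    (DifferentiableOn.analyticOnNhd (fun p hp => ?_) hU)
    (DifferentiableOn.analyticOnNhd (fun p hp => ?_) hU)
    (convex_halfSpace_re_gt 0).isPreconnected (by show 0 < (1:ℂ).re; simp) ?_
  · exact (lap_hasDerivAt hf hi p hp).differentiableAt.differentiableWithinAt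
  · obtain ⟨F', h, -⟩ := FC_hasDerivAt hc h1 h0 x hp
    exact h.differentiableAt.differentiableWithinAt
  · have ht : Tendsto (fun y : ℝ => (y : ℂ)) (nhdsWithin 1 (Set.Ioi 1)) (nhdsWithin 1 {1}ᶜ) := by
      apply tendsto_nhdsWithin_of_tendsto_nhds_of_eventually_within
      · have : Tendsto (fun y : ℝ => (y : ℂ)) (nhds 1) (nhds ((1:ℝ):ℂ)) :=
          Complex.continuous_ofReal.tendsto 1
        simpa using this.mono_left nhdsWithin_le_nhds
      · filter_upwards [self_mem_nhdsWithin] with y hy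
        have hy' : 1 < y := hy
        simp only [mem_compl_iff, mem_singleton_iff]
        exact_mod_cast hy'.ne'
    apply ht.frequently
    apply Eventually.frequently
    filter_upwards [self_mem_nhdsWithin] with y hy
    have hy' : 1 < y := hy
    exact hreal y (by linarith)

lemma part_one_bound {μ : ℝ → ℝ} (hc : ContinuousOn μ (Set.Icc 0 1))
    (h1 : ∀ α ∈ Set.Ioc (0:ℝ) 1, 0 < μ α) (h0 : ∀ α ∈ Set.Icc (0:ℝ) 1, 0 ≤ μ α)
    (T : ℝ) (hT : 0 < T) : ∃ B ≥ (0:ℝ), ∀ (x : ℝ) (f : ℝ → ℝ), ContinuousOn f (Set.Ioi 0) →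
    (∀ p : ℝ, 0 < p → IntegrableOn (fun t : ℝ => Real.exp (-p * t) * f t) (Set.Ioi 0)) →
    EqOn (Lap f) (FC μ x) {p : ℂ | 0 < p.re} → ∀ p : ℂ, T⁻¹ ≤ p.re →
      ‖Lap (fun t => t * f t) p‖ ≤ B * ‖p‖ ^ (-(3 / 2) : ℝ) := by
  set A := max 1 T * ∫ α in (0:ℝ)..1, μ α with hA
  have hM : 0 ≤ ∫ α in (0:ℝ)..1, μ α := intervalIntegral.integral_nonneg zero_le_one h0
  have hA0 : 0 ≤ A := by positivity
  refine ⟨2 * Real.sqrt A, by positivity, ?_⟩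
  intro x f hf hi hE p hpT
  have hTi : 0 < T⁻¹ := by positivity
  have hp : 0 < p.re := by linarith
  have hp0 : p ≠ 0 := by rintro rfl; simp at hp
  have hn : 0 < ‖p‖ := norm_pos_iff.2 hp0
  have hU : IsOpen {p : ℂ | 0 < p.re} := isOpen_lt continuous_const Complex.continuous_re
  obtain ⟨F', hF', hb⟩ := FC_hasDerivAt hc h1 h0 x hp
  have hL := lap_hasDerivAt hf hi p hp
  have hEv : Lap f =ᶠ[nhds p] FC μ x := by
    filter_upwards [hU.mem_nhds hp] with q hq using hE hq
  have hu := hL.unique (hF'.congr_of_eventuallyEq hEv)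
  rw [← norm_neg, hu]
  refine hb.trans ?_
  have hr : T⁻¹ ≤ ‖p‖ := hpT.trans (Complex.re_le_norm p)
  have hTr : 1 ≤ T * ‖p‖ := by
    have := mul_le_mul_of_nonneg_left hr hT.le
    rwa [mul_inv_cancel₀ hT.ne'] at this
  have hmax : max 1 ‖p‖ ≤ max 1 T * ‖p‖ := by
    apply max_le
    · exact hTr.trans (by gcongr; exact le_max_right _ _)
    · nlinarith [le_max_left 1 T]
  have hG : GR μ ‖p‖ ≤ A * ‖p‖ := by
    refine (GR_upper hc h0 hn).trans ?_
    rw [hA]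
    nlinarith
  have hs : ‖sC μ p‖ ≤ Real.sqrt A * ‖p‖ ^ (1 / 2 : ℝ) := by
    rw [← Real.sqrt_eq_rpow, ← Real.sqrt_mul hA0]
    apply Real.le_sqrt_of_sq_le
    rw [sC_norm_sq]
    exact (gC_norm_le hc h0 hp).trans hG
  have e : ‖p‖ ^ (-(3 / 2) : ℝ) = ‖p‖ ^ (1 / 2 : ℝ) / ‖p‖ ^ 2 := by
    rw [← Real.rpow_natCast, ← Real.rpow_sub hn]; norm_num
  rw [e]
  calc 2 * ‖sC μ p‖ / ‖p‖ ^ 2 ≤ 2 * (Real.sqrt A * ‖p‖ ^ (1 / 2 : ℝ)) / ‖p‖ ^ 2 := by gcongr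
    _ = _ := by ring

lemma part_two_bound {μ : ℝ → ℝ} (hc : ContinuousOn μ (Set.Icc 0 1))
    (h1 : ∀ α ∈ Set.Ioc (0:ℝ) 1, 0 < μ α) (h0 : ∀ α ∈ Set.Icc (0:ℝ) 1, 0 ≤ μ α) :
    ∃ B ≥ (0:ℝ), ∃ a > (0:ℝ), ∀ x : ℝ, 1 ≤ |x| → ∀ p : ℂ, p.re = 1 →
      ‖FC μ x p‖ ≤ B * Real.exp (-a * |x|) * ‖p‖ ^ (-(3 / 2) : ℝ) := by
  obtain ⟨m, hm, hlow⟩ := GR_lower hc h1 h0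
  refine ⟨384 / m, by positivity, Real.sqrt (m / 2) / 4, by positivity, ?_⟩
  intro x hx p hp1
  have hp : 0 < p.re := by linarith
  have hr : 1 ≤ ‖p‖ := hp1 ▸ Complex.re_le_norm p
  have hn : 0 < ‖p‖ := by linarith
  have hre := sC_re hc h1 h0 hp
  have hsp := sC_pos hc h1 h0 hp
  have hg := (hlow _ hr)
  have hg2 := gC_norm_ge hc h0 hp
  rw [← sC_norm_sq] at hg2
  have hr2 : 1 ≤ ‖p‖ ^ (1 / 2 : ℝ) := Real.one_le_rpow hr (by norm_num)
  rw [FC, norm_mul, norm_mul, norm_div (sC μ p), exp_aux]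
  have e : ‖(1 / 2 : ℂ)‖ = 1 / 2 := by norm_num
  rw [e]
  set S := ‖sC μ p‖ with hS
  set R := ‖p‖ ^ (1 / 2 : ℝ) with hR
  have hq : Real.sqrt (m / 2) ≤ S := by
    rw [Real.sqrt_le_left hsp.le]
    nlinarith
  have hexp : Real.exp (-|x| * (sC μ p).re)
      ≤ Real.exp (-(Real.sqrt (m / 2) / 4) * |x|) * Real.exp (-(S / 4)) := by
    rw [← Real.exp_add]
    apply Real.exp_le_exp.2
    nlinarith [mul_le_mul_of_nonneg_left hre (abs_nonneg x),
      mul_le_mul_of_nonneg_left hq (abs_nonneg x), mul_le_mul_of_nonneg_right hx hsp.le]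
  have hpow : S * Real.exp (-(S / 4)) ≤ 768 / (m * R) := by
    have t1 := Real.pow_div_factorial_le_exp (S / 4) (by positivity) 3
    have t2 : Real.exp (S / 4) * Real.exp (-(S / 4)) = 1 := by
      rw [← Real.exp_add]; simp
    have t3 : S ^ 3 ≤ 384 * Real.exp (S / 4) := by
      norm_num [Nat.factorial] at t1
      nlinarith
    have t4 : S ^ 3 * Real.exp (-(S / 4)) ≤ 384 := by
      nlinarith [Real.exp_pos (-(S / 4))]
    rw [le_div_iff₀ (by positivity)]
    have t5 : m * R ≤ 2 * S ^ 2 := by linarith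
    have t6 : 0 ≤ S * Real.exp (-(S / 4)) := by positivity
    nlinarith
  have e3 : ‖p‖ ^ (-(3 / 2) : ℝ) = 1 / (R * ‖p‖) := by
    have : R * ‖p‖ = ‖p‖ ^ (3 / 2 : ℝ) := by
      rw [hR]; nth_rewrite 2 [← Real.rpow_one ‖p‖]
      rw [← Real.rpow_add hn]; norm_num
    rw [this, Real.rpow_neg hn.le]; simp
  rw [e3]
  calc 1 / 2 * (S / ‖p‖) * Real.exp (-|x| * (sC μ p).re)
      ≤ 1 / 2 * (S / ‖p‖)
        * (Real.exp (-(Real.sqrt (m / 2) / 4) * |x|) * Real.exp (-(S / 4))) := by gcongr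
    _ = 1 / 2 * (S * Real.exp (-(S / 4))) / ‖p‖
        * Real.exp (-(Real.sqrt (m / 2) / 4) * |x|) := by ring
    _ ≤ 1 / 2 * (768 / (m * R)) / ‖p‖ * Real.exp (-(Real.sqrt (m / 2) / 4) * |x|) := by gcongr
    _ = _ := by field_simp; norm_num

theorem fundamental_solution_estimates (μ μ₁ : ℝ → ℝ) (ν ρ : ℝ)
    (hC2 : ContDiffOn ℝ 2 μ (Set.Icc 0 1))
    (hν : 0 ≤ ν) (hρ : 0 < ρ)
    (hμ₁c : ContinuousOn μ₁ (Set.Icc 0 1))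
    (hμform : ∀ α ∈ Set.Icc (0:ℝ) 1, μ α = α ^ ν * μ₁ α)
    (hμ₁low : ∀ α ∈ Set.Icc (0:ℝ) 1, ρ ≤ μ₁ α)
    (Z : ℝ → ℝ → ℝ)
    (hZc : ∀ x : ℝ, ContinuousOn (fun t => Z t x) (Set.Ioi 0))
    (hZlap : ∀ p : ℝ, 0 < p → ∀ x : ℝ,
      IntegrableOn (fun t : ℝ => Real.exp (-p * t) * Z t x) (Set.Ioi 0) ∧
      ∫ t in Set.Ioi (0:ℝ), Real.exp (-p * t) * Z t x
        = (1 / 2) * Kreal μ p / Real.sqrt (p * Kreal μ p)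
            * Real.exp (-|x| * Real.sqrt (p * Kreal μ p))) :
    ∀ T > (0:ℝ), ∀ ε ∈ Set.Ioo (0:ℝ) 1, ∃ C > (0:ℝ), ∃ a > (0:ℝ),
      (∀ t x : ℝ, 0 < t → t ≤ T → |x| ≤ ε →
        |Z t x| ≤ C * t ^ (-(1 / 2 : ℝ))) ∧
      (∀ t x : ℝ, 0 < t → t ≤ T → ε⁻¹ ≤ |x| →
        |Z t x| ≤ C * Real.exp (-a * |x|)) := by
  intro T hT ε hε
  have hc : ContinuousOn μ (Set.Icc 0 1) := hC2.continuousOn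
  have h1 : ∀ α ∈ Set.Ioc (0:ℝ) 1, 0 < μ α := by
    intro α hα
    rw [hμform α ⟨hα.1.le, hα.2⟩]
    exact mul_pos (Real.rpow_pos_of_pos hα.1 _) (hρ.trans_le (hμ₁low α ⟨hα.1.le, hα.2⟩))
  have h0 : ∀ α ∈ Set.Icc (0:ℝ) 1, 0 ≤ μ α := by
    intro α hα
    rw [hμform α hα]
    exact mul_nonneg (Real.rpow_nonneg hα.1 _) (hρ.le.trans (hμ₁low α hα))
  have hE : ∀ x, EqOn (Lap fun t => Z t x) (FC μ x) {p : ℂ | 0 < p.re} := fun x =>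
    lap_eq_FC hc h1 h0 x (hZc x) (fun p hp => (hZlap p hp x).1) (fun p hp => (hZlap p hp x).2)
  obtain ⟨I, hI, hinv⟩ := lap_inv_bound
  obtain ⟨B₁, hB₁, hb₁⟩ := part_one_bound hc h1 h0 T hT
  obtain ⟨B₂, hB₂, a, ha, hb₂⟩ := part_two_bound hc h1 h0
  have hC₁ : 0 ≤ I * B₁ * Real.exp 1 := by positivity
  have hC₂ : 0 ≤ I * B₂ * Real.exp T := by positivity
  refine ⟨I * B₁ * Real.exp 1 + I * B₂ * Real.exp T + 1, by positivity, a, ha, ?_, ?_⟩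
  · intro t x ht htT _
    have hti : 0 < t⁻¹ := by positivity
    have hTt : T⁻¹ ≤ t⁻¹ := inv_anti₀ ht htT
    have hcm : ContinuousOn (fun t => t * Z t x) (Set.Ioi 0) := continuousOn_id.mul (hZc x)
    have h := hinv (fun t => t * Z t x) hcm
      (fun p hp => lap_mul_integrable (hZc x) (fun p hp => (hZlap p hp x).1) p hp)
      t⁻¹ hti B₁ hB₁
      (fun p hp => hb₁ x (fun t => Z t x) (hZc x) (fun p hp => (hZlap p hp x).1) (hE x) p
        (by rw [hp]; exact hTt)) t ht
    rw [inv_mul_cancel₀ ht.ne', Real.inv_rpow ht.le, Real.rpow_neg ht.le, inv_inv] at h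
    simp only [abs_mul, abs_of_pos ht] at h
    have hsq : t ^ (1 / 2 : ℝ) * t ^ (1 / 2 : ℝ) = t := by
      rw [← Real.rpow_add ht]; norm_num
    have hs0 : 0 < t ^ (1 / 2 : ℝ) := by positivity
    rw [Real.rpow_neg ht.le]
    have h2 : |Z t x| ≤ I * B₁ * Real.exp 1 * (t ^ (1 / 2 : ℝ))⁻¹ := by
      rw [← div_eq_mul_inv, le_div_iff₀ hs0]
      nth_rewrite 1 [← hsq] at h
      nlinarith
    refine h2.trans ?_
    gcongr
    linarith
  · intro t x ht htT hx
    have hx1 : 1 ≤ |x| := ((one_lt_inv₀ hε.1).2 hε.2).le.trans hx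
    have h := hinv (fun t => Z t x) (hZc x) (fun p hp => (hZlap p hp x).1) 1 one_pos
      (B₂ * Real.exp (-a * |x|)) (by positivity)
      (fun p hp => by
        have hp' : p ∈ {p : ℂ | 0 < p.re} := by show 0 < p.re; rw [hp]; exact one_pos
        rw [hE x hp']; exact hb₂ x hx1 p hp) t ht
    rw [Real.one_rpow, mul_one, one_mul] at h
    refine h.trans ?_
    calc I * (B₂ * Real.exp (-a * |x|)) * Real.exp t
        ≤ I * (B₂ * Real.exp (-a * |x|)) * Real.exp T := by gcongr
      _ = I * B₂ * Real.exp T * Real.exp (-a * |x|) := by ring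
      _ ≤ _ := by gcongr; linarith
end

section
/- Let μ be a continuous non-negative function on [0,1], not identically zero, and let Z be the fundamental solution of the one-dimensional ultraslow diffusion equation, characterized by its Laplace transform in t. Then Z(t,x) ≥ 0 for all t > 0 and all x ∈ ℝ; moreover, if Z is jointly measurable and x ↦ Z(t,x) is integrable on ℝ for each t > 0, then ∫_ℝ Z(t,x) dx = 1 for almost every t > 0. -/
open MeasureTheory Filter Set

/-- Complete monotonicity up to order `n` on the positive half-line. -/
def CMn : ℕ → (ℝ → ℝ) → Prop
  | 0, f => ∀ p > (0:ℝ), 0 ≤ f p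
  | n + 1, f => (∀ p > (0:ℝ), 0 ≤ f p) ∧
      ∃ g : ℝ → ℝ, (∀ p > (0:ℝ), HasDerivAt f (-g p) p) ∧ CMn n g

theorem CMn.nonneg {n : ℕ} {f : ℝ → ℝ} (h : CMn n f) : ∀ p > (0:ℝ), 0 ≤ f p := by
  cases n with
  | zero => exact h
  | succ n => exact h.1

theorem CMn.pred {n : ℕ} : ∀ {f : ℝ → ℝ}, CMn (n + 1) f → CMn n f := by
  induction n with
  | zero => intro f h; exact h.1
  | succ n ih =>
    intro f h
    obtain ⟨h0, g, hg, hn⟩ := h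
    exact ⟨h0, g, hg, ih hn⟩

theorem CMn.congr {n : ℕ} {f g : ℝ → ℝ} (h : CMn n f) (hfg : ∀ p > (0:ℝ), g p = f p) :
    CMn n g := by
  cases n with
  | zero => intro p hp; rw [hfg p hp]; exact h p hp
  | succ n =>
    obtain ⟨h0, k, hk, hn⟩ := h
    refine ⟨fun p hp => by rw [hfg p hp]; exact h0 p hp, k, fun p hp => ?_, hn⟩
    refine (hk p hp).congr_of_eventuallyEq ?_
    filter_upwards [lt_mem_nhds hp] with q hq
    exact hfg q hq

theorem CMn.const {n : ℕ} : ∀ {c : ℝ}, 0 ≤ c → CMn n (fun _ => c) := by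
  induction n with
  | zero => intro c hc p _; exact hc
  | succ n ih =>
    intro c hc
    refine ⟨fun p _ => hc, fun _ => 0, fun p _ => ?_, ih le_rfl⟩
    simpa using hasDerivAt_const p c

theorem CMn.add {n : ℕ} : ∀ {f g : ℝ → ℝ}, CMn n f → CMn n g → CMn n (fun p => f p + g p) := by
  induction n with
  | zero => intro f g hf hg p hp; exact add_nonneg (hf p hp) (hg p hp)
  | succ n ih =>
    intro f g hf hg
    obtain ⟨hf0, f', hf', hfn⟩ := hf
    obtain ⟨hg0, g', hg', hgn⟩ := hg
    refine ⟨fun p hp => add_nonneg (hf0 p hp) (hg0 p hp), _, fun p hp => ?_, ih hfn hgn⟩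
    refine HasDerivAt.congr_deriv ((hf' p hp).add (hg' p hp)) ?_
    ring

theorem CMn.mul {n : ℕ} : ∀ {f g : ℝ → ℝ}, CMn n f → CMn n g → CMn n (fun p => f p * g p) := by
  induction n with
  | zero => intro f g hf hg p hp; exact mul_nonneg (hf p hp) (hg p hp)
  | succ n ih =>
    intro f g hf hg
    have hfp := hf.pred
    have hgp := hg.pred
    obtain ⟨hf0, f', hf', hfn⟩ := hf
    obtain ⟨hg0, g', hg', hgn⟩ := hg
    refine ⟨fun p hp => mul_nonneg (hf0 p hp) (hg0 p hp), _, fun p hp => ?_,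
      (ih hfn hgp).add (ih hfp hgn)⟩
    refine HasDerivAt.congr_deriv ((hf' p hp).mul (hg' p hp)) ?_
    ring

theorem CMn.diff {n : ℕ} : ∀ {f : ℝ → ℝ}, CMn (n + 1) f → CMn n (fun p => f p - f (p + 1)) := by
  have key : ∀ {m : ℕ} {f : ℝ → ℝ}, CMn (m + 1) f → ∀ p > (0:ℝ), 0 ≤ f p - f (p + 1) := by
    intro m f h p hp
    obtain ⟨h0, g, hg, hn⟩ := h
    have hanti : AntitoneOn f (Set.Ioi 0) := by
      refine antitoneOn_of_deriv_nonpos (convex_Ioi 0)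
        (fun q hq => (hg q hq).continuousAt.continuousWithinAt) ?_ ?_
      · rw [interior_Ioi]; exact fun q hq => (hg q hq).differentiableAt.differentiableWithinAt
      · rw [interior_Ioi]; intro q hq
        rw [(hg q hq).deriv]
        have := hn.nonneg q hq
        linarith
    have := hanti (show p ∈ Set.Ioi (0:ℝ) from hp)
      (show p + 1 ∈ Set.Ioi (0:ℝ) by simp only [Set.mem_Ioi]; linarith) (by linarith)
    linarith
  induction n with
  | zero => intro f h; exact key h
  | succ n ih =>
    intro f h
    have h1 := key h
    obtain ⟨h0, g, hg, hn⟩ := h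
    refine ⟨h1, _, fun p hp => ?_, ih hn⟩
    have h2 : HasDerivAt (fun p => f (p + 1)) (-g (p + 1)) p :=
      (hg (p + 1) (by linarith)).comp_add_const p 1
    refine HasDerivAt.congr_deriv ((hg p hp).sub h2) ?_
    ring

theorem cm_rpow {U V : ℝ → ℝ} (hU : ∀ p > (0:ℝ), 0 < U p)
    (hd : ∀ p > (0:ℝ), HasDerivAt U (V p) p) (hV : ∀ n, CMn n V) :
    ∀ (n : ℕ) (s : ℝ), 0 < s → CMn n (fun p => U p ^ (-s)) := by
  intro n
  induction n with
  | zero => intro s _ p hp; exact Real.rpow_nonneg (hU p hp).le _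
  | succ n ih =>
    intro s hs
    refine ⟨fun p hp => Real.rpow_nonneg (hU p hp).le _, _, fun p hp => ?_,
      ((CMn.const hs.le).mul (hV n)).mul (ih (s + 1) (by linarith))⟩
    refine HasDerivAt.congr_deriv ((hd p hp).rpow_const (p := -s) (Or.inl (hU p hp).ne')) ?_
    rw [show -(s + 1) = -s - 1 by ring]
    ring

theorem cm_exp {φ V : ℝ → ℝ} (hd : ∀ p > (0:ℝ), HasDerivAt φ (V p) p) (hV : ∀ n, CMn n V) :
    ∀ n : ℕ, CMn n (fun p => Real.exp (-φ p)) := by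
  intro n
  induction n with
  | zero => intro p hp; exact (Real.exp_pos _).le
  | succ n ih =>
    refine ⟨fun p _ => (Real.exp_pos _).le, _, fun p hp => ?_, (hV n).mul ih⟩
    refine HasDerivAt.congr_deriv ((hd p hp).neg.exp) ?_
    simp only [Pi.neg_apply]
    ring

theorem contOn_rpow {w : ℝ → ℝ} (hw : ContinuousOn w (Set.Icc 0 1)) {p : ℝ} (hp : 0 < p) (a : ℝ) :
    ContinuousOn (fun α => p ^ (α - a) * w α) (Set.uIcc 0 1) := by
  rw [Set.uIcc_of_le zero_le_one]
  refine ContinuousOn.mul ?_ hw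
  refine Continuous.continuousOn ?_
  exact Continuous.rpow continuous_const (by fun_prop) (fun x => Or.inl hp.ne')

theorem hasDeriv_int {w : ℝ → ℝ} (hw : ContinuousOn w (Set.Icc 0 1)) (a : ℝ) {p : ℝ} (hp : 0 < p) :
    HasDerivAt (fun p : ℝ => ∫ α in (0:ℝ)..1, p ^ (α - a) * w α)
      (∫ α in (0:ℝ)..1, p ^ (α - (a + 1)) * ((α - a) * w α)) p := by
  have hw2 : ContinuousOn (fun α => (α - a) * w α) (Set.Icc 0 1) := by fun_prop
  have hs : Set.Ioo (p / 2) (2 * p) ∈ nhds p := Ioo_mem_nhds (by linarith) (by linarith)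
  have hmeas : ∀ {f : ℝ → ℝ}, ContinuousOn f (Set.uIcc 0 1) →
      AEStronglyMeasurable f (volume.restrict (Set.uIoc 0 1)) := fun h =>
    (h.mono Set.uIoc_subset_uIcc).aestronglyMeasurable measurableSet_uIoc
  refine (intervalIntegral.hasDerivAt_integral_of_dominated_loc_of_deriv_le (μ := volume)
    (F := fun p α => p ^ (α - a) * w α)
    (F' := fun p α => p ^ (α - (a + 1)) * ((α - a) * w α))
    (bound := fun α => ((p / 2) ^ (α - (a + 1)) * |(α - a) * w α|
      + (2 * p) ^ (α - (a + 1)) * |(α - a) * w α|)) hs ?_ ?_ ?_ ?_ ?_ ?_).2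
  · filter_upwards [lt_mem_nhds hp] with q hq
    exact hmeas (contOn_rpow hw hq a)
  · exact (contOn_rpow hw hp a).intervalIntegrable
  · exact hmeas (contOn_rpow hw2 hp (a + 1))
  · refine Filter.Eventually.of_forall fun α _ q hq => ?_
    have hq0 : 0 < q := by linarith [hq.1]
    rw [norm_mul, Real.norm_eq_abs, Real.norm_eq_abs, abs_of_pos (Real.rpow_pos_of_pos hq0 _),
      ← add_mul]
    refine mul_le_mul_of_nonneg_right ?_ (abs_nonneg _)
    have h1 : 0 < (p / 2) ^ (α - (a + 1)) := Real.rpow_pos_of_pos (by linarith) _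
    have h2 : 0 < (2 * p) ^ (α - (a + 1)) := Real.rpow_pos_of_pos (by linarith) _
    rcases le_total 0 (α - (a + 1)) with h | h
    · have := Real.rpow_le_rpow hq0.le hq.2.le h
      linarith
    · have := Real.rpow_le_rpow_of_nonpos (by linarith : 0 < p / 2) hq.1.le h
      linarith
  · exact ((contOn_rpow hw2.abs (by linarith : 0 < p / 2) (a + 1)).add
      (contOn_rpow hw2.abs (by linarith : 0 < 2 * p) (a + 1))).intervalIntegrable
  · refine Filter.Eventually.of_forall fun α _ q hq => ?_
    have hq0 : 0 < q := by linarith [hq.1]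
    refine HasDerivAt.congr_deriv ((Real.hasDerivAt_rpow_const (p := α - a) (Or.inl hq0.ne')).mul_const (w α)) ?_
    rw [show α - (a + 1) = α - a - 1 by ring]
    ring

theorem cm_int : ∀ (n : ℕ) {w : ℝ → ℝ} (_ : ContinuousOn w (Set.Icc 0 1))
    (_ : ∀ α ∈ Set.Icc (0:ℝ) 1, 0 ≤ w α) (a : ℝ) (_ : 1 ≤ a),
    CMn n (fun p : ℝ => ∫ α in (0:ℝ)..1, p ^ (α - a) * w α) := by
  have h0 : ∀ {w : ℝ → ℝ} (_ : ∀ α ∈ Set.Icc (0:ℝ) 1, 0 ≤ w α) (a : ℝ),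
      ∀ p > (0:ℝ), 0 ≤ ∫ α in (0:ℝ)..1, p ^ (α - a) * w α := by
    intro w hw a p hp
    exact intervalIntegral.integral_nonneg zero_le_one
      fun α hα => mul_nonneg (Real.rpow_nonneg hp.le _) (hw α hα)
  intro n
  induction n with
  | zero => intro w _ hn a _; exact h0 hn a
  | succ n ih =>
    intro w hw hn a ha
    refine ⟨h0 hn a, _, fun p hp => ?_, ih (w := fun α => (a - α) * w α) (by fun_prop)
      (fun α hα => mul_nonneg (by linarith [hα.2]) (hn α hα)) (a + 1) (by linarith)⟩
    refine HasDerivAt.congr_deriv (hasDeriv_int hw a hp) ?_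
    rw [← intervalIntegral.integral_neg]
    congr 1
    ext α
    ring

section

variable {μ : ℝ → ℝ}

theorem Kreal_pos (hc : ContinuousOn μ (Set.Icc 0 1))
    (hnn : ∀ α ∈ Set.Icc (0:ℝ) 1, 0 ≤ μ α)
    (hne : ∃ α ∈ Set.Icc (0:ℝ) 1, μ α ≠ 0) {p : ℝ} (hp : 0 < p) : 0 < Kreal μ p := by
  obtain ⟨α, hα, h⟩ := hne
  have hcont := contOn_rpow hc hp 1
  rw [Set.uIcc_of_le zero_le_one] at hcont
  refine intervalIntegral.integral_pos zero_lt_one hcont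
    (fun β hβ => mul_nonneg (Real.rpow_nonneg hp.le _) (hnn β ⟨hβ.1.le, hβ.2⟩)) ⟨α, hα, ?_⟩
  exact mul_pos (Real.rpow_pos_of_pos hp _) ((hnn α hα).lt_of_ne' h)

theorem mul_Kreal {p : ℝ} (hp : 0 < p) :
    p * Kreal μ p = ∫ α in (0:ℝ)..1, p ^ (α - 0) * μ α := by
  unfold Kreal
  rw [← intervalIntegral.integral_const_mul]
  congr 1
  ext α
  rw [Real.rpow_sub_one hp.ne', sub_zero]
  field_simp

theorem cm_F (hc : ContinuousOn μ (Set.Icc 0 1))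
    (hnn : ∀ α ∈ Set.Icc (0:ℝ) 1, 0 ≤ μ α)
    (hne : ∃ α ∈ Set.Icc (0:ℝ) 1, μ α ≠ 0) (x : ℝ) (n : ℕ) :
    CMn n (fun p => (1 / 2) * Kreal μ p / Real.sqrt (p * Kreal μ p)
            * Real.exp (-|x| * Real.sqrt (p * Kreal μ p))) := by
  have hU : ∀ p > (0:ℝ), 0 < p * Kreal μ p := fun p hp => mul_pos hp (Kreal_pos hc hnn hne hp)
  have hV : ∀ n, CMn n (fun p : ℝ => ∫ α in (0:ℝ)..1, p ^ (α - (0 + 1)) * ((α - 0) * μ α)) :=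
    fun n => cm_int n (w := fun α => (α - 0) * μ α) (by fun_prop)
      (fun α hα => mul_nonneg (by linarith [hα.1]) (hnn α hα)) (0 + 1) (by norm_num)
  have hd : ∀ p > (0:ℝ), HasDerivAt (fun p => p * Kreal μ p)
      (∫ α in (0:ℝ)..1, p ^ (α - (0 + 1)) * ((α - 0) * μ α)) p := by
    intro p hp
    refine (hasDeriv_int hc 0 hp).congr_of_eventuallyEq ?_
    filter_upwards [lt_mem_nhds hp] with q hq
    exact mul_Kreal hq
  have hR := cm_rpow hU hd hV
  have hK : CMn n (Kreal μ) := cm_int n hc hnn 1 le_rfl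
  have hE := cm_exp (φ := fun p => |x| * Real.sqrt (p * Kreal μ p))
    (V := fun p => (|x| * (1 / 2)) * ((∫ α in (0:ℝ)..1, p ^ (α - (0 + 1)) * ((α - 0) * μ α)) *
      (p * Kreal μ p) ^ (-(1 / 2 : ℝ)))) (fun p hp => by
        refine HasDerivAt.congr_deriv (((hd p hp).sqrt (hU p hp).ne').const_mul |x|) ?_
        rw [Real.rpow_neg (hU p hp).le, ← Real.sqrt_eq_rpow]
        ring) (fun n => (CMn.const (by positivity)).mul ((hV n).mul (hR n _ (by norm_num))))
  refine ((((CMn.const (by norm_num : (0:ℝ) ≤ 1 / 2)).mul hK).mul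
    (hR n (1 / 2) (by norm_num))).mul (hE n)).congr ?_
  intro p hp
  rw [Real.rpow_neg (hU p hp).le, ← Real.sqrt_eq_rpow, neg_mul]
  rfl

end

theorem lap_step {f : ℝ → ℝ}
    (hf : ∀ p > (0:ℝ), IntegrableOn (fun t => Real.exp (-p * t) * f t) (Ioi 0)) :
    (∀ p > (0:ℝ), IntegrableOn (fun t => Real.exp (-p * t) * ((1 - Real.exp (-t)) * f t)) (Ioi 0)) ∧
    (∀ p > (0:ℝ), ∫ t in Ioi (0:ℝ), Real.exp (-p * t) * ((1 - Real.exp (-t)) * f t)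
      = (∫ t in Ioi (0:ℝ), Real.exp (-p * t) * f t)
        - ∫ t in Ioi (0:ℝ), Real.exp (-(p + 1) * t) * f t) := by
  have e : ∀ p : ℝ, (fun t => Real.exp (-p * t) * ((1 - Real.exp (-t)) * f t))
      = fun t => Real.exp (-p * t) * f t - Real.exp (-(p + 1) * t) * f t := by
    intro p
    ext t
    rw [show -(p + 1) * t = -p * t + -t by ring, Real.exp_add]
    ring
  refine ⟨fun p hp => ?_, fun p hp => ?_⟩
  · rw [e p]
    exact (hf p hp).sub (hf (p + 1) (by linarith))
  · rw [e p]
    exact integral_sub (hf p hp) (hf (p + 1) (by linarith))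

theorem lap_nonneg_n : ∀ (n : ℕ) {f : ℝ → ℝ}
    (_ : ∀ p > (0:ℝ), IntegrableOn (fun t => Real.exp (-p * t) * f t) (Ioi 0))
    (_ : CMn n (fun p => ∫ t in Ioi (0:ℝ), Real.exp (-p * t) * f t)),
    ∀ p > (0:ℝ), IntegrableOn (fun t => Real.exp (-p * t) * ((1 - Real.exp (-t)) ^ n * f t)) (Ioi 0) ∧
      0 ≤ ∫ t in Ioi (0:ℝ), Real.exp (-p * t) * ((1 - Real.exp (-t)) ^ n * f t) := by
  intro n
  induction n with
  | zero =>
    intro f hf h p hp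
    simp only [pow_zero, one_mul]
    exact ⟨hf p hp, h p hp⟩
  | succ n ih =>
    intro f hf h p hp
    obtain ⟨h1, h2⟩ := lap_step hf
    have := ih (f := fun t => (1 - Real.exp (-t)) * f t) h1 (h.diff.congr h2) p hp
    simpa only [pow_succ, mul_assoc] using this

/-- the point `exp (-|t|)` of the unit interval -/
noncomputable def expPt (t : ℝ) : unitInterval :=
  ⟨Real.exp (-|t|), (Real.exp_pos _).le, Real.exp_le_one_iff.2 (by simp)⟩

theorem continuous_expPt : Continuous expPt := by
  unfold expPt
  fun_prop

theorem bern_nonneg {f : ℝ → ℝ}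
    (hf : ∀ p > (0:ℝ), IntegrableOn (fun t => Real.exp (-p * t) * f t) (Ioi 0))
    (h : ∀ n, CMn n (fun p => ∫ t in Ioi (0:ℝ), Real.exp (-p * t) * f t))
    (g : C(unitInterval, ℝ)) (hg : ∀ s, 0 ≤ g s) :
    0 ≤ ∫ t in Ioi (0:ℝ), g (expPt t) * (Real.exp (-1 * t) * f t) := by
  have hf1 := hf 1 one_pos
  have key : ∀ (n k : ℕ), IntegrableOn (fun t => bernstein n k (expPt t) *
        (Real.exp (-1 * t) * f t)) (Ioi 0) ∧ 0 ≤ ∫ t in Ioi (0:ℝ), bernstein n k (expPt t) *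
        (Real.exp (-1 * t) * f t) := by
    intro n k
    have h1 := lap_nonneg_n (n - k) hf (h (n - k)) (k + 1) (by positivity)
    have e : EqOn (fun t => (n.choose k : ℝ) *
        (Real.exp (-((k:ℝ) + 1) * t) * ((1 - Real.exp (-t)) ^ (n - k) * f t)))
      (fun t => bernstein n k (expPt t) * (Real.exp (-1 * t) * f t)) (Ioi 0) := by
      intro t ht
      have ht : 0 < t := ht
      simp only [bernstein_apply, expPt, abs_of_pos ht]
      rw [← Real.exp_nat_mul, show -((k:ℝ) + 1) * t = k * -t + -1 * t by ring, Real.exp_add]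
      ring
    refine ⟨IntegrableOn.congr_fun (h1.1.const_mul _) e measurableSet_Ioi, ?_⟩
    rw [← setIntegral_congr_fun measurableSet_Ioi e, integral_const_mul]
    exact mul_nonneg (by positivity) h1.2
  have hB : ∀ n : ℕ, 0 ≤ ∫ t in Ioi (0:ℝ), bernsteinApproximation n g (expPt t) *
      (Real.exp (-1 * t) * f t) := by
    intro n
    simp only [bernsteinApproximation.apply, Finset.sum_mul, smul_eq_mul]
    have e : ∀ (i : Fin (n + 1)) (t : ℝ), bernstein n i (expPt t) * g (bernstein.z i) *
        (Real.exp (-1 * t) * f t) = g (bernstein.z i) * (bernstein n i (expPt t) *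
        (Real.exp (-1 * t) * f t)) := fun i t => by ring
    simp only [e]
    rw [integral_finsetSum _ (fun (i : Fin (n + 1)) _ => (key n (i : ℕ)).1.const_mul _)]
    refine Finset.sum_nonneg fun i _ => ?_
    rw [integral_const_mul]
    exact mul_nonneg (hg _) (key n i).2
  have hlim := bernsteinApproximation_uniform g
  refine ge_of_tendsto' (f := fun n : ℕ => ∫ t in Ioi (0:ℝ), bernsteinApproximation n g (expPt t) *
      (Real.exp (-1 * t) * f t)) (x := atTop) ?_ hB
  refine tendsto_integral_filter_of_dominated_convergence
    (fun t => (‖g‖ + 1) * ‖Real.exp (-1 * t) * f t‖) ?_ ?_ (hf1.norm.const_mul _) ?_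
  · refine Eventually.of_forall fun n => ?_
    exact ((map_continuous (bernsteinApproximation n g)).comp
      continuous_expPt).aestronglyMeasurable.mul hf1.aestronglyMeasurable
  · have := hlim.norm.eventually (eventually_le_nhds (lt_add_one ‖g‖))
    filter_upwards [this] with n hn
    refine Eventually.of_forall fun t => ?_
    rw [norm_mul]
    exact mul_le_mul_of_nonneg_right ((ContinuousMap.norm_coe_le_norm _ _).trans hn) (norm_nonneg _)
  · refine Eventually.of_forall fun t => ?_
    refine Tendsto.mul_const _ ?_
    exact ((continuous_eval_const (expPt t)).tendsto g).comp hlim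

theorem nonneg_of_cm {f : ℝ → ℝ} (hc : ContinuousOn f (Ioi 0))
    (hf : ∀ p > (0:ℝ), IntegrableOn (fun t => Real.exp (-p * t) * f t) (Ioi 0))
    (h : ∀ n, CMn n (fun p => ∫ t in Ioi (0:ℝ), Real.exp (-p * t) * f t)) :
    ∀ t > (0:ℝ), 0 ≤ f t := by
  intro t₀ ht₀
  by_contra! hneg
  have hev : ∀ᶠ t in nhds t₀, f t < 0 :=
    ((hc t₀ ht₀).continuousAt (Ioi_mem_nhds ht₀)).eventually (gt_mem_nhds hneg)
  have hev2 : ∀ᶠ s in nhds (Real.exp (-t₀)), f (-Real.log s) < 0 := by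
    have : Tendsto (fun s => -Real.log s) (nhds (Real.exp (-t₀))) (nhds t₀) := by
      have := (Real.continuousAt_log (Real.exp_pos (-t₀)).ne').neg.tendsto
      rw [Pi.neg_apply, Real.log_exp, neg_neg] at this
      exact this
    exact this.eventually hev
  obtain ⟨δ, hδ, hball⟩ := Metric.eventually_nhds_iff.1 hev2
  let g : C(unitInterval, ℝ) := ⟨fun s => max 0 (δ - |(s:ℝ) - Real.exp (-t₀)|), by fun_prop⟩
  have hg := bern_nonneg hf h g (fun s => le_max_left _ _)
  have hle : ∀ t ∈ Ioi (0:ℝ), 0 ≤ -(g (expPt t) * (Real.exp (-1 * t) * f t)) := by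
    intro t ht
    have ht : 0 < t := ht
    by_cases hd : |Real.exp (-t) - Real.exp (-t₀)| < δ
    · have := hball (y := Real.exp (-t)) hd
      rw [Real.log_exp, neg_neg] at this
      have h1 : 0 ≤ g (expPt t) := le_max_left _ _
      have h2 : Real.exp (-1 * t) * f t ≤ 0 :=
        mul_nonpos_of_nonneg_of_nonpos (Real.exp_pos _).le this.le
      have := mul_nonpos_of_nonneg_of_nonpos h1 h2
      linarith
    · have : g (expPt t) = 0 := by
        simp only [g, expPt, ContinuousMap.coe_mk, abs_of_pos ht]
        exact max_eq_left (by linarith)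
      rw [this]; simp
  have hcont : ContinuousOn (fun t => -(g (expPt t) * (Real.exp (-1 * t) * f t))) (Ioi 0) := by
    have : Continuous fun t => g (expPt t) := (map_continuous g).comp continuous_expPt
    exact (this.continuousOn.mul ((by fun_prop : Continuous fun t : ℝ =>
      Real.exp (-1 * t)).continuousOn.mul hc)).neg
  have hint : IntegrableOn (fun t => -(g (expPt t) * (Real.exp (-1 * t) * f t))) (Ioi 0) := by
    refine Integrable.neg ?_
    refine (hf 1 one_pos).bdd_mul (c := ‖g‖)
      ((map_continuous g).comp continuous_expPt).aestronglyMeasurable ?_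
    exact Eventually.of_forall fun t => ContinuousMap.norm_coe_le_norm _ _
  have hae : 0 ≤ᵐ[volume.restrict (Ioi 0)]
      (fun t => -(g (expPt t) * (Real.exp (-1 * t) * f t))) :=
    ae_restrict_of_forall_mem measurableSet_Ioi hle
  have hzero : ∫ t in Ioi (0:ℝ), -(g (expPt t) * (Real.exp (-1 * t) * f t)) = 0 := by
    refine le_antisymm ?_ (integral_nonneg_of_ae hae)
    rw [integral_neg]
    linarith
  have h0 := (integral_eq_zero_iff_of_nonneg_ae hae hint).1 hzero
  have := Measure.eqOn_open_of_ae_eq h0 isOpen_Ioi hcont continuousOn_const ht₀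
  have hgt : g (expPt t₀) = δ := by
    simp only [g, expPt, ContinuousMap.coe_mk, abs_of_pos ht₀]
    simpa using hδ.le
  simp [hgt, hδ.ne', hneg.ne] at this

theorem ae_zero_of_lap_zero {f : ℝ → ℝ}
    (hf : ∀ p > (0:ℝ), IntegrableOn (fun t => Real.exp (-p * t) * f t) (Ioi 0))
    (h : ∀ p > (0:ℝ), ∫ t in Ioi (0:ℝ), Real.exp (-p * t) * f t = 0) :
    ∀ᵐ t : ℝ, 0 < t → f t = 0 := by
  have hf' : ∀ p > (0:ℝ), IntegrableOn (fun t => Real.exp (-p * t) * (-f t)) (Ioi 0) := by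
    intro p hp
    simpa only [mul_neg] using! (hf p hp).neg
  have hnn : ∀ g : C(unitInterval, ℝ), (∀ s, 0 ≤ g s) →
      ∫ t in Ioi (0:ℝ), g (expPt t) * (Real.exp (-1 * t) * f t) = 0 := by
    intro g hg
    have h1 := bern_nonneg hf (fun n => (CMn.const (le_refl (0:ℝ))).congr h) g hg
    have h2 := bern_nonneg hf' (fun n => (CMn.const (le_refl (0:ℝ))).congr (fun p hp => by
      simp only [mul_neg, integral_neg, h p hp, neg_zero])) g hg
    simp only [mul_neg, integral_neg] at h2
    simp only [neg_mul, one_mul] at *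
    linarith
  have hint : ∀ g : C(unitInterval, ℝ),
      IntegrableOn (fun t => g (expPt t) * (Real.exp (-1 * t) * f t)) (Ioi 0) := by
    intro g
    refine (hf 1 one_pos).bdd_mul (c := ‖g‖)
      ((map_continuous g).comp continuous_expPt).aestronglyMeasurable ?_
    exact Eventually.of_forall fun t => ContinuousMap.norm_coe_le_norm _ _
  have hall : ∀ g : C(unitInterval, ℝ),
      ∫ t in Ioi (0:ℝ), g (expPt t) * (Real.exp (-1 * t) * f t) = 0 := by
    intro g
    have e1 := hnn ⟨fun s => |g s|, by fun_prop⟩ (fun s => abs_nonneg _)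
    have e2 := hnn ⟨fun s => |g s| + g s, by fun_prop⟩
      (fun s => by have := neg_abs_le (g s); simp only [ContinuousMap.coe_mk]; linarith)
    have i1 := hint ⟨fun s => |g s|, by fun_prop⟩
    simp only [ContinuousMap.coe_mk, add_mul] at e1 e2 i1
    rw [integral_add i1 (hint g), e1, zero_add] at e2
    exact e2
  have hzero : ∀ᵐ t : ℝ, t ∈ Ioi (0:ℝ) → Real.exp (-1 * t) * f t = 0 := by
    refine isOpen_Ioi.ae_eq_zero_of_integral_contDiff_smul_eq_zero
      ((hf 1 one_pos).locallyIntegrableOn) ?_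
    intro φ hφ hφc hφs
    have hlog : Continuous fun s : unitInterval => φ (-Real.log s) := by
      have : Continuous fun s : ℝ => φ (-Real.log s) := by
        rw [continuous_iff_continuousAt]
        intro s
        by_cases hs : s = 0
        · subst hs
          have hev : ∀ᶠ y in nhdsWithin (0:ℝ) {0}ᶜ, φ (-Real.log y) = 0 := by
            have h1 : Tendsto (fun y => -Real.log y) (nhdsWithin (0:ℝ) {0}ᶜ) atTop :=
              tendsto_neg_atBot_atTop.comp Real.tendsto_log_nhdsNE_zero
            have h2 : ∀ᶠ y in (atTop : Filter ℝ), φ y = 0 := by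
              obtain ⟨M, hM⟩ := hφc.isCompact.bddAbove
              filter_upwards [eventually_gt_atTop M] with y hy
              by_contra hne
              exact absurd (hM (subset_tsupport _ hne)) (not_le.2 hy)
            exact h1.eventually h2
          have h00 : φ (-Real.log 0) = 0 := by
            by_contra hne
            have := hφs (subset_tsupport _ hne)
            simp at this
          rw [continuousAt_iff_punctured_nhds, h00]
          exact tendsto_const_nhds.congr' (hev.mono fun y hy => hy.symm)
        · exact hφ.continuous.continuousAt.comp (Real.continuousAt_log hs).neg
      exact this.comp continuous_subtype_val
    have := hall ⟨_, hlog⟩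
    have e : ∀ t ∈ Ioi (0:ℝ), (⟨_, hlog⟩ : C(unitInterval, ℝ)) (expPt t) *
        (Real.exp (-1 * t) * f t) = φ t • (Real.exp (-1 * t) * f t) := by
      intro t ht
      have ht : 0 < t := ht
      simp [expPt, abs_of_pos ht]
    rw [setIntegral_congr_fun measurableSet_Ioi e] at this
    rw [← this]
    refine (setIntegral_eq_integral_of_forall_compl_eq_zero fun t ht => ?_).symm
    have : φ t = 0 := by
      by_contra hne
      exact ht (hφs (subset_tsupport _ hne))
    rw [this, zero_smul]
  filter_upwards [hzero] with t ht h0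
  simpa using ht h0

theorem fundamental_solution_nonneg_and_mass_one (μ : ℝ → ℝ)
    (hc : ContinuousOn μ (Set.Icc 0 1))
    (hnn : ∀ α ∈ Set.Icc (0:ℝ) 1, 0 ≤ μ α)
    (hne : ∃ α ∈ Set.Icc (0:ℝ) 1, μ α ≠ 0)
    (Z : ℝ → ℝ → ℝ)
    (hZc : ∀ x : ℝ, ContinuousOn (fun t => Z t x) (Set.Ioi 0))
    (hZlap : ∀ p : ℝ, 0 < p → ∀ x : ℝ,
      IntegrableOn (fun t : ℝ => Real.exp (-p * t) * Z t x) (Set.Ioi 0) ∧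
      ∫ t in Set.Ioi (0:ℝ), Real.exp (-p * t) * Z t x
        = (1 / 2) * Kreal μ p / Real.sqrt (p * Kreal μ p)
            * Real.exp (-|x| * Real.sqrt (p * Kreal μ p))) :
    (∀ t > (0:ℝ), ∀ x : ℝ, 0 ≤ Z t x) ∧
    (Measurable (Function.uncurry Z) →
      (∀ t > (0:ℝ), Integrable (fun x : ℝ => Z t x)) →
      ∀ᵐ t : ℝ, 0 < t → ∫ x : ℝ, Z t x = 1) := by
  have hpos : ∀ t > (0:ℝ), ∀ x : ℝ, 0 ≤ Z t x := by
    intro t ht x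
    refine nonneg_of_cm (hZc x) (fun p hp => (hZlap p hp x).1) (fun n => ?_) t ht
    exact (cm_F hc hnn hne x n).congr fun p hp => (hZlap p hp x).2
  refine ⟨hpos, fun hm _ => ?_⟩
  -- Laplace transform of the mass
  have hmass : ∀ p > (0:ℝ),
      IntegrableOn (fun t => Real.exp (-p * t) * ∫ x, Z t x) (Ioi 0) ∧
      ∫ t in Ioi (0:ℝ), Real.exp (-p * t) * ∫ x, Z t x = 1 / p := by
    intro p hp
    have hK := Kreal_pos hc hnn hne hp
    have hU : 0 < p * Kreal μ p := mul_pos hp hK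
    set c := Real.sqrt (p * Kreal μ p) with hcdef
    have hc0 : 0 < c := Real.sqrt_pos.2 hU
    have hexp : ∫ x : ℝ, Real.exp (-|x| * c) = 2 / c := by
      have := integral_comp_abs (f := fun x => Real.exp (-c * x))
      rw [integral_exp_mul_Ioi (by linarith : -c < 0) 0] at this
      calc _ = ∫ x : ℝ, Real.exp (-c * |x|) := by
            congr 1; ext x; ring_nf
        _ = _ := by rw [this]; simp; field_simp
    have hexpi : Integrable (fun x : ℝ => Real.exp (-|x| * c)) := by
      refine Integrable.of_integral_ne_zero ?_
      rw [hexp]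
      positivity
    let F : ℝ → ℝ → ℝ := fun t x => Real.exp (-p * t) * Z t x
    have hFm : Measurable (Function.uncurry F) := by
      have : Measurable fun q : ℝ × ℝ => Real.exp (-p * q.1) := by fun_prop
      exact this.mul hm
    have hFi : Integrable (Function.uncurry F) ((volume.restrict (Ioi 0)).prod volume) := by
      rw [integrable_prod_iff' hFm.aestronglyMeasurable]
      refine ⟨Eventually.of_forall fun x => (hZlap p hp x).1, ?_⟩
      have e : ∀ x, ∫ t in Ioi (0:ℝ), ‖Function.uncurry F (t, x)‖ =
          (1 / 2) * Kreal μ p / c * Real.exp (-|x| * c) := by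
        intro x
        rw [← (hZlap p hp x).2]
        refine setIntegral_congr_fun measurableSet_Ioi fun t ht => ?_
        exact Real.norm_of_nonneg (mul_nonneg (Real.exp_pos _).le (hpos t ht x))
      simp only [e]
      exact hexpi.const_mul _
    have hin := hFi.integral_prod_left
    have hsw := integral_integral_swap hFi
    simp only [Function.uncurry_apply_pair, F, integral_const_mul] at hin hsw
    refine ⟨hin, hsw.trans ?_⟩
    simp only [(hZlap p hp _).2]
    rw [integral_const_mul, hexp]
    have : c * c = p * Kreal μ p := Real.mul_self_sqrt hU.le
    rw [← hcdef, show 1 / 2 * Kreal μ p / c * (2 / c) = Kreal μ p / (c * c) by field_simp, this]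
    field_simp
  have hone : ∀ p > (0:ℝ), IntegrableOn (fun t => Real.exp (-p * t)) (Ioi 0) :=
    fun p hp => integrableOn_exp_mul_Ioi (by linarith) 0
  have hfin := ae_zero_of_lap_zero (f := fun t => (∫ x, Z t x) - 1)
    (fun p hp => by
      simp only [mul_sub, mul_one]
      exact (hmass p hp).1.sub (hone p hp))
    (fun p hp => by
      simp only [mul_sub, mul_one]
      rw [integral_sub (hmass p hp).1 (hone p hp), (hmass p hp).2,
        integral_exp_mul_Ioi (by linarith : -p < 0) 0]
      simp)
  filter_upwards [hfin] with t ht h0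
  linarith [ht h0]
end
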